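/- arXiv:2103.00253 — 3 statements merged into one kernel-verified Lean document; each statement's English description precedes it below -/
import Mathlib

section
/- Let R be a commutative Noetherian local ring and let M be a nonzero finitely generated R-module with finite injective dimension. If the reducing Gorenstein dimension of M is at most 1, then R is Gorenstein. -/
open CategoryTheory Pointwise

universe u

variable (R : Type u) [CommRing R]

/-- `Ext^n_R(X, Y) = 0`. -/
def ExtVanish (X Y : Type u) [AddCommGroup X] [Module R X]
    [AddCommGroup Y] [Module R Y] (n : ℕ) : Prop :=
  Subsingleton (((Ext R (ModuleCat.{u} R) n).obj
    (Opposite.op (ModuleCat.of R X))).obj (ModuleCat.of R Y))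

/-- A finitely generated module `X` is totally reflexive if the evaluation map to the
double dual is bijective and `Ext^i(X, R) = 0 = Ext^i(X^*, R)` for all `i ≥ 1`. -/
def IsTotallyReflexive (X : Type u) [AddCommGroup X] [Module R X] : Prop :=
  Module.Finite R X ∧
  Function.Bijective (Module.Dual.eval R X) ∧
  (∀ i : ℕ, 1 ≤ i → ExtVanish R X R i) ∧
  (∀ i : ℕ, 1 ≤ i → ExtVanish R (Module.Dual R X) R i)

/-- `0 → A → B → C → 0` is a short exact sequence. -/
def IsShortExact {A B C : Type u} [AddCommGroup A] [Module R A] [AddCommGroup B] [Module R B]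
    [AddCommGroup C] [Module R C] (f : A →ₗ[R] B) (g : B →ₗ[R] C) : Prop :=
  Function.Injective f ∧ Function.Surjective g ∧ Function.Exact f g

/-- Gorenstein dimension at most `n`: there is a resolution of length `≤ n`
by totally reflexive modules. -/
def GdimLE : ℕ → ModuleCat.{u} R → Prop
  | 0, M => IsTotallyReflexive R M
  | n + 1, M => ∃ (X K : ModuleCat.{u} R) (f : K →ₗ[R] X) (g : X →ₗ[R] M),
      IsTotallyReflexive R X ∧ IsShortExact R f g ∧ GdimLE n K

/-- Projective dimension at most `n`. -/
def PdimLE : ℕ → ModuleCat.{u} R → Prop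
  | 0, M => Module.Finite R M ∧ Module.Projective R M
  | n + 1, M => ∃ (X K : ModuleCat.{u} R) (f : K →ₗ[R] X) (g : X →ₗ[R] M),
      Module.Finite R X ∧ Module.Projective R X ∧ IsShortExact R f g ∧ PdimLE n K

/-- Injective dimension at most `n`. -/
def InjdimLE : ℕ → ModuleCat.{u} R → Prop
  | 0, M => Module.Injective R M
  | n + 1, M => ∃ (I C : ModuleCat.{u} R) (f : M →ₗ[R] I) (g : I →ₗ[R] C),
      Module.Injective R I ∧ IsShortExact R f g ∧ InjdimLE n C

/-- The Gorenstein dimension, as an element of `ℕ∞`. -/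
noncomputable def Gdim (M : ModuleCat.{u} R) : ℕ∞ :=
  sInf {n : ℕ∞ | ∃ m : ℕ, n = (m : ℕ∞) ∧ GdimLE R m M}

/-- The projective dimension, as an element of `ℕ∞`. -/
noncomputable def Pdim (M : ModuleCat.{u} R) : ℕ∞ :=
  sInf {n : ℕ∞ | ∃ m : ℕ, n = (m : ℕ∞) ∧ PdimLE R m M}

/-- A local ring is Gorenstein if it has finite injective dimension over itself. -/
def IsGorensteinRing : Prop :=
  ∃ n : ℕ, InjdimLE R n (ModuleCat.of R R)

/-- `IsSyzygy R n S K` : `S` is an `n`-th syzygy of `K`, i.e. there is an exact sequence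
`0 → S → F_{n-1} → ⋯ → F_0 → K → 0` with each `F_j` finitely generated free. -/
def IsSyzygy : ℕ → ModuleCat.{u} R → ModuleCat.{u} R → Prop
  | 0, S, K => Nonempty (S ≃ₗ[R] K)
  | n + 1, S, K => ∃ (W F : ModuleCat.{u} R) (f : W →ₗ[R] F) (g : F →ₗ[R] K),
      Module.Free R F ∧ Module.Finite R F ∧ IsShortExact R f g ∧ IsSyzygy n S W

/-- One step in a reducing sequence: a short exact sequence
`0 → K^{⊕a} → L → (Ω^n K)^{⊕b} → 0`. -/
def ReducingStep (K L : ModuleCat.{u} R) (a b n : ℕ) : Prop :=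
  ∃ (W : ModuleCat.{u} R) (f : (Fin a → K) →ₗ[R] L) (g : L →ₗ[R] (Fin b → W)),
    IsSyzygy R n W K ∧ IsShortExact R f g

/-- `M` admits a reducing sequence `K_0 = M, K_1, …, K_r` relative to the property `P`,
that is, short exact sequences `0 → K_{i-1}^{⊕a_i} → K_i → (Ω^{n_i}K_{i-1})^{⊕b_i} → 0`
with `a_i, b_i, n_i ≥ 1` and `P (K_r)`. -/
def HasReducingSeq (P : ModuleCat.{u} R → Prop) (M : ModuleCat.{u} R) (r : ℕ) : Prop :=
  ∃ (K : Fin (r + 1) → ModuleCat.{u} R) (a b n : Fin r → ℕ),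
    K 0 = M ∧ (∀ i, Module.Finite R (K i)) ∧
    (∀ i : Fin r, 1 ≤ a i ∧ 1 ≤ b i ∧ 1 ≤ n i ∧
      ReducingStep R (K i.castSucc) (K i.succ) (a i) (b i) (n i)) ∧
    P (K (Fin.last r))

/-- The reducing invariant attached to the finiteness property `P`. -/
noncomputable def ReducingDim (P : ModuleCat.{u} R → Prop) (M : ModuleCat.{u} R) : ℕ∞ :=
  sInf {n : ℕ∞ | ∃ r : ℕ, n = (r : ℕ∞) ∧ HasReducingSeq R P M r}

/-- The reducing Gorenstein dimension. -/
noncomputable def rGdim (M : ModuleCat.{u} R) : ℕ∞ :=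
  ReducingDim R (fun N => ∃ m : ℕ, GdimLE R m N) M

/-- The reducing projective dimension. -/
noncomputable def rPdim (M : ModuleCat.{u} R) : ℕ∞ :=
  ReducingDim R (fun N => ∃ m : ℕ, PdimLE R m N) M

/-- depth of a module over a local ring: `inf { i | Ext^i(k, M) ≠ 0 }`. -/
noncomputable def depth [IsLocalRing R] (M : ModuleCat.{u} R) : ℕ∞ :=
  sInf {n : ℕ∞ | ∃ i : ℕ, n = (i : ℕ∞) ∧
    ¬ ExtVanish R (R ⧸ IsLocalRing.maximalIdeal R) M i}

/-- maximal Cohen-Macaulay: depth equals the Krull dimension of the ring. -/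
def IsMCM [IsLocalRing R] (M : ModuleCat.{u} R) : Prop :=
  (depth R M : WithBot ℕ∞) = ringKrullDim R

/-- torsion-free: every non zero-divisor of `R` is a non zero-divisor on `M`. -/
def IsTorsionFreeModule (M : Type u) [AddCommGroup M] [Module R M] : Prop :=
  ∀ r ∈ nonZeroDivisors R, ∀ m : M, r • m = 0 → m = 0


section Helpers

variable {R : Type u} [CommRing R]

namespace RG

abbrev EXT (X Y : ModuleCat.{u} R) (n : ℕ) : Type u := Abelian.Ext.{u} X Y n

/-- The short complex attached to a short exact sequence of modules. -/
abbrev sc {A B C : ModuleCat.{u} R} {f : A →ₗ[R] B} {g : B →ₗ[R] C}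
    (h : IsShortExact R f g) : ShortComplex (ModuleCat.{u} R) :=
  ShortComplex.mk (ModuleCat.ofHom f) (ModuleCat.ofHom g)
    (by ext x; exact h.2.2.apply_apply_eq_zero x)

lemma sc_exact {A B C : ModuleCat.{u} R} {f : A →ₗ[R] B} {g : B →ₗ[R] C}
    (h : IsShortExact R f g) : (sc h).ShortExact :=
  { exact := (ShortComplex.ShortExact.moduleCat_exact_iff_function_exact _).2 h.2.2
    mono_f := (ModuleCat.mono_iff_injective _).2 h.1
    epi_g := (ModuleCat.epi_iff_surjective _).2 h.2.1 }

lemma ses_ker {A B : ModuleCat.{u} R} (g : A →ₗ[R] B) (hg : Function.Surjective g) :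
    IsShortExact R (A := ModuleCat.of R (LinearMap.ker g)) (LinearMap.ker g).subtype g :=
  ⟨Subtype.val_injective, hg, LinearMap.exact_subtype_ker_map g⟩

lemma ses_quot {A B : ModuleCat.{u} R} (f : A →ₗ[R] B) (hf : Function.Injective f) :
    IsShortExact R (C := ModuleCat.of R (B ⧸ LinearMap.range f)) f (LinearMap.range f).mkQ :=
  ⟨hf, Submodule.mkQ_surjective _, LinearMap.exact_map_mkQ_range f⟩

lemma projective_of {X : ModuleCat.{u} R} [Module.Projective R X] : Projective X :=
  (IsProjective.iff_projective (R := R) X).1 inferInstance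

lemma module_projective_of {X : ModuleCat.{u} R} [Projective X] : Module.Projective R X :=
  (IsProjective.iff_projective (R := R) X).2 ‹_›

lemma inj_obj {X : ModuleCat.{u} R} (h : Module.Injective R X) : Injective X :=
  Module.injective_object_of_injective_module R X (inj := h)

lemma inj_mod {X : ModuleCat.{u} R} (h : Injective X) : Module.Injective R X :=
  Module.injective_module_of_injective_object R X (inj := h)

lemma ext_of_vanish {X Y : Type u} [AddCommGroup X] [Module R X] [AddCommGroup Y] [Module R Y]
    {n : ℕ} (hn : 1 ≤ n) (h : ExtVanish R X Y n) :
    ∀ x : EXT (ModuleCat.of R X) (ModuleCat.of R Y) n, x = 0 := by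
  obtain ⟨p, rfl⟩ : ∃ p, n = p + 1 := ⟨n - 1, by omega⟩
  intro x
  let P := projectiveResolution (ModuleCat.of R X)
  obtain ⟨f, hf, rfl⟩ := P.extMk_surjective x (p + 2) rfl
  rw [P.extMk_eq_zero_iff f (p + 2) rfl hf p rfl]
  have hz : Limits.IsZero ((P.complex.linearYonedaObj R (ModuleCat.of R Y)).homology (p + 1)) := by
    refine Limits.IsZero.of_iso ?_ (P.isoExt (R := R) (p + 1) (ModuleCat.of R Y)).symm
    unfold ExtVanish at h
    exact ModuleCat.isZero_of_subsingleton _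
  rw [← HomologicalComplex.exactAt_iff_isZero_homology,
    HomologicalComplex.exactAt_iff' _ p (p + 1) (p + 2) (by simp) (by simp)] at hz
  rw [ShortComplex.ShortExact.moduleCat_exact_iff_function_exact] at hz
  obtain ⟨g, hg⟩ := (hz f).1 hf
  exact ⟨g, hg⟩

lemma injdimLT_of_injdimLE : ∀ (n : ℕ) (M : ModuleCat.{u} R), InjdimLE R n M →
    HasInjectiveDimensionLT M (n + 1)
  | 0, M, h => by
      have := inj_obj (X := M) h
      infer_instance
  | n + 1, M, ⟨I, C, f, g, hI, hs, hC⟩ => by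
      have := inj_obj (X := I) hI
      have h1 := injdimLT_of_injdimLE n C hC
      exact (sc_exact hs).hasInjectiveDimensionLT_X₁ (n + 1) h1 inferInstance

end RG
end Helpers

section HelpersB

variable {R : Type u} [CommRing R]

open Abelian

namespace RG

/-- Vanishing of `Ext` (abelian category version). -/
def EV (X Y : ModuleCat.{u} R) (n : ℕ) : Prop := ∀ x : EXT X Y n, x = 0

section LES

variable {A B C : ModuleCat.{u} R} {f : A →ₗ[R] B} {g : B →ₗ[R] C}

lemma con1 (h : IsShortExact R f g) {Y : ModuleCat.{u} R} {n : ℕ} (h2 : EV B Y n) (h3 : EV C Y (n + 1)) : EV A Y n := by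
  intro x
  obtain ⟨y, hy⟩ := Ext.contravariant_sequence_exact₁ (sc_exact h) Y x (Nat.add_comm 1 n) (h3 _)
  rw [← hy, h2 y]; simp

lemma con2 (h : IsShortExact R f g) {Y : ModuleCat.{u} R} {n : ℕ} (h1 : EV A Y n) (h3 : EV C Y n) : EV B Y n := by
  intro x
  obtain ⟨y, hy⟩ := Ext.contravariant_sequence_exact₂ (sc_exact h) Y x (h1 _)
  rw [← hy, h3 y]; simp

lemma con3 (h : IsShortExact R f g) {Y : ModuleCat.{u} R} {n : ℕ} (h1 : EV A Y n) (h2 : EV B Y (n + 1)) :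
    EV C Y (n + 1) := by
  intro x
  obtain ⟨y, hy⟩ := Ext.contravariant_sequence_exact₃ (sc_exact h) Y x (h2 _) (Nat.add_comm 1 n)
  rw [← hy, h1 y]; simp

lemma cov1 (h : IsShortExact R f g) {Y : ModuleCat.{u} R} {n : ℕ} (h2 : EV Y B (n + 1)) (h3 : EV Y C n) :
    EV Y A (n + 1) := by
  intro x
  obtain ⟨y, hy⟩ := Ext.covariant_sequence_exact₁ Y (sc_exact h) x (h2 _) rfl
  rw [← hy, h3 y]; simp

lemma cov2 (h : IsShortExact R f g) {Y : ModuleCat.{u} R} {n : ℕ} (h1 : EV Y A n) (h3 : EV Y C n) : EV Y B n := by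
  intro x
  obtain ⟨y, hy⟩ := Ext.covariant_sequence_exact₂ Y (sc_exact h) x (h3 _)
  rw [← hy, h1 y]; simp

lemma cov3 (h : IsShortExact R f g) {Y : ModuleCat.{u} R} {n : ℕ} (h2 : EV Y B n) (h1 : EV Y A (n + 1)) :
    EV Y C n := by
  intro x
  obtain ⟨y, hy⟩ := Ext.covariant_sequence_exact₃ Y (sc_exact h) x rfl (h1 _)
  rw [← hy, h2 y]; simp

lemma hom_extend (h : IsShortExact R f g) {Y : ModuleCat.{u} R} (h3 : EV C Y 1) (φ : A →ₗ[R] Y) :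
    ∃ ψ : B →ₗ[R] Y, ψ.comp f = φ := by
  obtain ⟨y, hy⟩ := Ext.contravariant_sequence_exact₁ (sc_exact h) Y (Ext.mk₀ (ModuleCat.ofHom φ))
    (n₁ := 1) rfl (h3 _)
  obtain ⟨ψ, rfl⟩ := (Ext.mk₀_bijective _ _).2 y
  rw [Ext.mk₀_comp_mk₀] at hy
  have := (Ext.mk₀_bijective _ _).1 hy
  refine ⟨ψ.hom, ?_⟩
  ext x
  exact congrArg (fun q => q.hom x) this

lemma ev_of_extend (h : IsShortExact R f g) {Y : ModuleCat.{u} R} (h2 : EV B Y 1)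
    (hx : ∀ φ : A →ₗ[R] Y, ∃ ψ : B →ₗ[R] Y, ψ.comp f = φ) : EV C Y 1 := by
  intro x
  obtain ⟨y, hy⟩ := Ext.contravariant_sequence_exact₃ (sc_exact h) Y x (h2 _) (n₀ := 0) rfl
  obtain ⟨φ, rfl⟩ := (Ext.mk₀_bijective _ _).2 y
  obtain ⟨ψ, hψ⟩ := hx φ.hom
  have e : φ = (sc h).f ≫ ModuleCat.ofHom ψ := by
    ext x
    exact (LinearMap.congr_fun hψ x).symm
  rw [← hy, e, ← Ext.mk₀_comp_mk₀, ShortComplex.ShortExact.extClass_comp_assoc]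

end LES

lemma ev_iso {A B Y : ModuleCat.{u} R} (e : A ≃ₗ[R] B) {n : ℕ} (h : EV A Y n) : EV B Y n := by
  intro x
  have := h ((Ext.mk₀ (ModuleCat.ofHom e.toLinearMap)).comp x (zero_add _))
  have h2 : (Ext.mk₀ (ModuleCat.ofHom e.symm.toLinearMap)).comp
    ((Ext.mk₀ (ModuleCat.ofHom e.toLinearMap)).comp x (zero_add _)) (zero_add _) = x := by
    rw [Ext.mk₀_comp_mk₀_assoc]
    have : ModuleCat.ofHom e.symm.toLinearMap ≫ ModuleCat.ofHom e.toLinearMap = 𝟙 B := by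
      ext x; simp
    rw [this, Ext.mk₀_id_comp]
  rw [← h2, this]; simp

lemma ev_iso' {A B Y : ModuleCat.{u} R} (e : A ≃ₗ[R] B) {n : ℕ} (h : EV Y A n) : EV Y B n := by
  intro x
  have := h (x.comp (Ext.mk₀ (ModuleCat.ofHom e.symm.toLinearMap)) (add_zero _))
  have h2 : (x.comp (Ext.mk₀ (ModuleCat.ofHom e.symm.toLinearMap)) (add_zero _)).comp
      (Ext.mk₀ (ModuleCat.ofHom e.toLinearMap)) (add_zero _) = x := by
    rw [Ext.comp_assoc_of_third_deg_zero, Ext.mk₀_comp_mk₀]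
    have : ModuleCat.ofHom e.symm.toLinearMap ≫ ModuleCat.ofHom e.toLinearMap = 𝟙 B := by
      ext x; simp
    rw [this, Ext.comp_mk₀_id]
  rw [← h2, this]; simp

lemma ev_proj {A Y : ModuleCat.{u} R} [Module.Projective R A] {n : ℕ} (hn : 1 ≤ n) : EV A Y n := by
  obtain ⟨p, rfl⟩ : ∃ p, n = p + 1 := ⟨n - 1, by omega⟩
  intro x
  have := projective_of (X := A)
  exact Ext.eq_zero_of_projective x

lemma ev_inj {A Y : ModuleCat.{u} R} (h : Module.Injective R Y) {n : ℕ} (hn : 1 ≤ n) :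
    EV A Y n := by
  obtain ⟨p, rfl⟩ : ∃ p, n = p + 1 := ⟨n - 1, by omega⟩
  intro x
  have := inj_obj h
  exact Ext.eq_zero_of_injective x

/-- Totally reflexive modules. -/
def TR (X : ModuleCat.{u} R) : Prop :=
  Module.Finite R X ∧ Function.Bijective (Module.Dual.eval R X) ∧
  (∀ i : ℕ, 1 ≤ i → EV X (ModuleCat.of R R) i) ∧
  (∀ i : ℕ, 1 ≤ i → EV (ModuleCat.of R (Module.Dual R X)) (ModuleCat.of R R) i)

lemma TR_of {X : ModuleCat.{u} R} (h : IsTotallyReflexive R X) : TR X :=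
  ⟨h.1, h.2.1, fun i hi => ext_of_vanish hi (h.2.2.1 i hi),
    fun i hi => ext_of_vanish hi (h.2.2.2 i hi)⟩

lemma cosyzygy [IsNoetherianRing R] {X : ModuleCat.{u} R} (hX : TR X) :
    ∃ (F X' : ModuleCat.{u} R) (f : X →ₗ[R] F) (g : F →ₗ[R] X'),
      Module.Free R F ∧ Module.Finite R F ∧ IsShortExact R f g ∧ TR X' := by
  obtain ⟨hfin, hev, h1, h2⟩ := hX
  have : Module.Finite R (Module.Dual R X) := Module.IsNoetherian.finite R _
  obtain ⟨n, p, hp⟩ := Module.Finite.exists_fin' R (Module.Dual R X)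
  let F₀ := ModuleCat.of R (Fin n → R)
  let XD := ModuleCat.of R (Module.Dual R X)
  have hses := ses_ker (A := F₀) (B := XD) p hp
  let L := ModuleCat.of R (LinearMap.ker p)
  let j : L →ₗ[R] F₀ := (LinearMap.ker p).subtype
  change IsShortExact R j p at hses
  have hjs : Function.Surjective j.dualMap := fun φ =>
    hom_extend hses (Y := ModuleCat.of R R) (h2 1 le_rfl) φ
  let f : X →ₗ[R] Module.Dual R F₀ := p.dualMap.comp (Module.Dual.eval R X)
  have hf : ∀ x v, f x v = p v x := fun x v => rfl
  have hs : IsShortExact R (B := ModuleCat.of R (Module.Dual R F₀))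
      (C := ModuleCat.of R (Module.Dual R L)) f j.dualMap := by
    refine ⟨?_, hjs, ?_⟩
    · exact (LinearMap.dualMap_injective_of_surjective hp).comp hev.1
    · intro φ
      constructor
      · intro hφ
        have hk : LinearMap.ker p ≤ LinearMap.ker φ := by
          intro v hv
          exact LinearMap.congr_fun hφ ⟨v, hv⟩
        let e := p.quotKerEquivOfSurjective hp
        let ψ : Module.Dual R (Module.Dual R X) :=
          ((LinearMap.ker p).liftQ φ hk).comp e.symm.toLinearMap
        obtain ⟨x, hx⟩ := hev.2 ψ
        refine ⟨x, ?_⟩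
        apply LinearMap.ext
        intro v
        have : f x v = ψ (p v) := by rw [← hx]; rfl
        rw [this]
        have : e.symm (p v) = Submodule.Quotient.mk v := by
          rw [LinearEquiv.symm_apply_eq]; rfl
        change (LinearMap.ker p).liftQ φ hk (e.symm (p v)) = φ v
        rw [this]; rfl
      · rintro ⟨x, rfl⟩
        apply LinearMap.ext
        rintro ⟨v, hv⟩
        change p v x = 0
        rw [LinearMap.mem_ker.1 hv]; rfl
  have hXi : Function.Injective (Module.Dual.eval R XD) := by
    intro a b hab
    apply LinearMap.ext
    intro x
    exact LinearMap.congr_fun hab (Module.Dual.eval R X x)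
  have hL : Function.Bijective (Module.Dual.eval R L) := by
    have hF : Function.Bijective (Module.Dual.eval R F₀) := Module.bijective_dual_eval R F₀
    constructor
    · intro a b hab
      apply hses.1
      apply hF.1
      apply LinearMap.ext
      intro φ
      exact LinearMap.congr_fun hab (j.dualMap φ)
    · intro ψ
      obtain ⟨v, hv⟩ := hF.2 (j.dualMap.dualMap ψ)
      have hv' : ∀ φ : Module.Dual R F₀, φ v = ψ (j.dualMap φ) := fun φ => LinearMap.congr_fun hv φ
      have hpv : p v = 0 := by
        apply hXi
        apply LinearMap.ext
        intro χ
        change χ (p v) = χ 0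
        rw [map_zero]
        rw [show χ (p v) = (χ.comp p : Module.Dual R F₀) v from rfl, hv']
        have : j.dualMap (χ.comp p) = 0 := by
          apply LinearMap.ext
          rintro ⟨w, hw⟩
          change χ (p w) = 0
          rw [LinearMap.mem_ker.1 hw, map_zero]
        rw [this, map_zero]
      refine ⟨⟨v, hpv⟩, ?_⟩
      apply LinearMap.ext
      intro φ
      obtain ⟨φ, rfl⟩ := hjs φ
      exact hv' φ
  have hLD : Function.Bijective (Module.Dual.eval R (Module.Dual R L)) := by
    constructor
    · intro a b hab
      apply LinearMap.ext
      intro x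
      exact LinearMap.congr_fun hab (Module.Dual.eval R L x)
    · intro ψ
      refine ⟨ψ.comp (Module.Dual.eval R L), ?_⟩
      apply LinearMap.ext
      intro χ
      obtain ⟨l, rfl⟩ := hL.2 χ
      rfl
  have : Module.Free R (ModuleCat.of R (Module.Dual R F₀)) :=
    inferInstanceAs (Module.Free R (Module.Dual R (Fin n → R)))
  have : Module.Projective R (ModuleCat.of R (Module.Dual R F₀)) := inferInstance
  refine ⟨ModuleCat.of R (Module.Dual R F₀), ModuleCat.of R (Module.Dual R L), f, j.dualMap,
    inferInstance,
    inferInstanceAs (Module.Finite R (Module.Dual R (Fin n → R))), hs, ?_, hLD, ?_, ?_⟩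
  · exact inferInstanceAs (Module.Finite R (Module.Dual R (LinearMap.ker p)))
  · intro i hi
    obtain ⟨i, rfl⟩ : ∃ p, i = p + 1 := ⟨i - 1, by omega⟩
    rcases i with _ | i
    · refine ev_of_extend (B := ModuleCat.of R (Module.Dual R F₀)) hs (ev_proj le_rfl) ?_
      intro φ
      obtain ⟨v, hv⟩ := hp φ
      refine ⟨Module.Dual.eval R F₀ v, ?_⟩
      apply LinearMap.ext
      intro x
      change p v x = φ x
      rw [hv]
    · exact con3 (B := ModuleCat.of R (Module.Dual R F₀)) hs (h1 (i + 1) (by omega)) (ev_proj (by omega))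
  · intro i hi
    have : Module.Projective R F₀ := inferInstanceAs (Module.Projective R (Fin n → R))
    have : EV L (ModuleCat.of R R) i := con1 hses (ev_proj hi) (h2 (i + 1) (by omega))
    exact ev_iso (B := ModuleCat.of R (Module.Dual R (Module.Dual R L)))
      (LinearEquiv.ofBijective _ hL) this

end RG
end HelpersB
set_option linter.unusedVariables false

section HelpersC

variable {R : Type u} [CommRing R]

open Abelian

namespace RG

/-- Modules with no higher extensions from totally reflexive modules. -/
def WC (Y : ModuleCat.{u} R) : Prop := ∀ A : ModuleCat.{u} R, TR A → ∀ i : ℕ, 1 ≤ i → EV A Y i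

lemma wc_of_injdim [IsNoetherianRing R] {Y : ModuleCat.{u} R} {d : ℕ}
    (hd : HasInjectiveDimensionLT Y d) : WC Y := by
  have key : ∀ s : ℕ, ∀ A : ModuleCat.{u} R, TR A → ∀ i : ℕ, 1 ≤ i → d ≤ i + s → EV A Y i := by
    intro s
    induction s with
    | zero =>
      intro A _ i _ hi x
      exact x.eq_zero_of_hasInjectiveDimensionLT d hi
    | succ s ih =>
      intro A hA i hi his
      obtain ⟨F, A', f, g, hF, _, hs, hA'⟩ := cosyzygy hA
      exact con1 hs (ev_proj hi) (ih A' hA' (i + 1) (by omega) (by omega))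
  intro A hA i hi
  exact key d A hA i hi (by omega)

lemma pi_sum {Y : ModuleCat.{u} R} (b : ℕ) :
    𝟙 (ModuleCat.of R (Fin b → Y)) = ∑ l : Fin b,
      (ModuleCat.ofHom (LinearMap.proj l) : ModuleCat.of R (Fin b → Y) ⟶ Y) ≫
        ModuleCat.ofHom (LinearMap.single R (fun _ => (Y : Type u)) l) := by
  apply ModuleCat.hom_ext
  apply LinearMap.ext
  intro x
  rw [ModuleCat.hom_sum]
  simp [Finset.univ_sum_single]

lemma pi_cov {X Y : ModuleCat.{u} R} {b n : ℕ} (x : EXT X (ModuleCat.of R (Fin b → Y)) n)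
    (h : ∀ l : Fin b, x.comp (Ext.mk₀ (ModuleCat.ofHom (LinearMap.proj l) :
      ModuleCat.of R (Fin b → Y) ⟶ Y)) (add_zero n) = 0) : x = 0 := by
  rw [← Ext.comp_mk₀_id x, pi_sum, Ext.mk₀_sum, Ext.comp_sum]
  apply Finset.sum_eq_zero
  intro l _
  rw [← Ext.mk₀_comp_mk₀, ← Ext.comp_assoc_of_third_deg_zero, h l]
  simp

lemma pi_con {X Y : ModuleCat.{u} R} {b n : ℕ} (x : EXT (ModuleCat.of R (Fin b → Y)) X n)
    (h : ∀ l : Fin b, (Ext.mk₀ (ModuleCat.ofHom (LinearMap.single R (fun _ => (Y : Type u)) l) :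
      Y ⟶ ModuleCat.of R (Fin b → Y))).comp x (zero_add n) = 0) : x = 0 := by
  rw [← Ext.mk₀_id_comp x, pi_sum, Ext.mk₀_sum, Ext.sum_comp]
  apply Finset.sum_eq_zero
  intro l _
  rw [← Ext.mk₀_comp_mk₀_assoc, h l]
  simp

lemma wc_pi {Y : ModuleCat.{u} R} (h : WC Y) (b : ℕ) : WC (ModuleCat.of R (Fin b → Y)) :=
  fun A hA i hi x => pi_cov x fun _ => h A hA i hi _

lemma wc_iso {Y Z : ModuleCat.{u} R} (e : Y ≃ₗ[R] Z) (h : WC Y) : WC Z :=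
  fun A hA i hi => ev_iso' e (h A hA i hi)

lemma wc_free (F : ModuleCat.{u} R) [Module.Free R F] [Module.Finite R F] : WC F := by
  let b := (Module.Free.chooseBasis R F)
  let b' := b.reindex (Fintype.equivFin _)
  have h0 : WC (ModuleCat.of R R) := fun A hA i hi => hA.2.2.1 i hi
  exact wc_iso (Y := ModuleCat.of R (Fin _ → R)) b'.equivFun.symm (wc_pi h0 _)

lemma wc_mid {A B C : ModuleCat.{u} R} {f : A →ₗ[R] B} {g : B →ₗ[R] C} (h : IsShortExact R f g)
    (hA : WC A) (hC : WC C) : WC B :=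
  fun X hX i hi => cov2 h (hA X hX i hi) (hC X hX i hi)

lemma wc_ker [IsNoetherianRing R] {A B C : ModuleCat.{u} R} {f : A →ₗ[R] B} {g : B →ₗ[R] C}
    (h : IsShortExact R f g) (hB : WC B) (hC : WC C) : WC A := by
  intro X hX i hi
  obtain ⟨F, X', f', g', hF, _, hs, hX'⟩ := cosyzygy hX
  exact con1 hs (ev_proj hi) (cov1 h (hB X' hX' _ (by omega)) (hC X' hX' _ hi))

lemma ev_of_gdim {V : ModuleCat.{u} R} (hV : WC V) : ∀ (n : ℕ) (K : ModuleCat.{u} R),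
    GdimLE R n K → ∀ s, n < s → EV K V s
  | 0, K, h, s, hs => hV K (TR_of h) s hs
  | n + 1, K, ⟨X, K', f, g, hX, hses, hK'⟩, s, hs => by
      obtain ⟨s, rfl⟩ : ∃ p, s = p + 1 := ⟨s - 1, by omega⟩
      exact con3 hses (ev_of_gdim hV n K' hK' s (by omega)) (hV X (TR_of hX) _ (by omega))

lemma comp_cast {X Y Z : ModuleCat.{u} R} {a b c d : ℕ} (α : EXT X Y a) (β : EXT Y Z b)
    (h : a + b = c) (h' : a + b = d) (hz : α.comp β h = 0) : α.comp β h' = 0 := by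
  subst h; subst h'; exact hz

lemma xi_exists (W : ModuleCat.{u} R) : ∀ (n : ℕ) (M : ModuleCat.{u} R), IsSyzygy R n W M →
    ∃ ξ : EXT M W n, ∀ (Y : ModuleCat.{u} R) (j : ℕ), 1 ≤ j → ∀ z : EXT W Y j,
      ξ.comp z rfl = 0 → z = 0
  | 0, M, ⟨e⟩ => by
      refine ⟨Ext.mk₀ (ModuleCat.ofHom e.symm.toLinearMap), ?_⟩
      intro Y j _ z hz
      have h2 : (Ext.mk₀ (ModuleCat.ofHom e.toLinearMap)).comp
        ((Ext.mk₀ (ModuleCat.ofHom e.symm.toLinearMap)).comp z (zero_add _)) (zero_add _) = z := by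
        rw [Ext.mk₀_comp_mk₀_assoc]
        have : ModuleCat.ofHom e.toLinearMap ≫ ModuleCat.ofHom e.symm.toLinearMap = 𝟙 W := by
          ext x; simp
        rw [this, Ext.mk₀_id_comp]
      have h3 : (Ext.mk₀ (ModuleCat.ofHom e.symm.toLinearMap)).comp z (zero_add _) = 0 := by
        exact comp_cast _ _ _ _ hz
      rw [← h2, h3]; simp
  | n + 1, M, ⟨W₁, F, f, g, hF, _, hs, hW⟩ => by
      obtain ⟨ξ₁, hξ⟩ := xi_exists W n W₁ hW
      refine ⟨(sc_exact hs).extClass.comp ξ₁ (Nat.add_comm 1 n), ?_⟩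
      intro Y j hj z hz
      apply hξ Y j hj z
      rw [Ext.comp_assoc (h₂₃ := rfl) (h := by omega)] at hz
      obtain ⟨y, hy⟩ := Ext.contravariant_sequence_exact₁ (sc_exact hs) Y _ _ hz
      have : y = 0 := ev_proj (A := F) (by omega) y
      rw [← hy, this]; simp

lemma syz_exists [IsNoetherianRing R] : ∀ (n : ℕ) (K : ModuleCat.{u} R), Module.Finite R K →
    ∃ V, IsSyzygy R n V K
  | 0, K, _ => ⟨K, ⟨LinearEquiv.refl R K⟩⟩
  | n + 1, K, hK => by
      obtain ⟨m, p, hp⟩ := Module.Finite.exists_fin' R K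
      have hs := ses_ker (A := ModuleCat.of R (Fin m → R)) p hp
      obtain ⟨V, hV⟩ := syz_exists n (ModuleCat.of R (LinearMap.ker p))
        (Module.IsNoetherian.finite R (LinearMap.ker p))
      exact ⟨V, _, _, _, _, inferInstanceAs (Module.Free R (Fin m → R)),
        inferInstanceAs (Module.Finite R (Fin m → R)), hs, hV⟩

lemma syz_wc [IsNoetherianRing R] {V : ModuleCat.{u} R} : ∀ (n : ℕ) (K : ModuleCat.{u} R),
    WC K → IsSyzygy R n V K → WC V
  | 0, K, hK, ⟨e⟩ => wc_iso e.symm hK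
  | n + 1, K, hK, ⟨W₁, F, f, g, hF, hF', hs, hW⟩ =>
      syz_wc n W₁ (wc_ker hs (wc_free F) hK) hW

lemma syz_pd {V : ModuleCat.{u} R} {c : ℕ} (hc : HasProjectiveDimensionLT V c) :
    ∀ (n : ℕ) (K : ModuleCat.{u} R), IsSyzygy R n V K → HasProjectiveDimensionLT K (c + n + 1)
  | 0, K, ⟨e⟩ => by
      have : HasProjectiveDimensionLT K c :=
        hasProjectiveDimensionLT_of_iso e.toModuleIso c
      exact hasProjectiveDimensionLT_of_ge K c _ (by omega)
  | n + 1, K, ⟨W₁, F, f, g, hF, hF', hs, hW⟩ => by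
      have h1 := syz_pd hc n W₁ hW
      have := projective_of (X := F)
      have h2 : HasProjectiveDimensionLT F (c + n + 1 + 1) :=
        hasProjectiveDimensionLT_of_ge F 1 _ (by omega)
      exact (sc_exact hs).hasProjectiveDimensionLT_X₃ _ h1 h2

lemma pd_of_wc [IsNoetherianRing R] {K : ModuleCat.{u} R} (hfin : Module.Finite R K) (hK : WC K)
    {n : ℕ} (hn : GdimLE R n K) : ∃ c, HasProjectiveDimensionLT K c := by
  obtain ⟨V, hV⟩ := syz_exists (n + 1) K hfin
  have hVW := syz_wc _ _ hK hV
  obtain ⟨ξ, hξ⟩ := xi_exists V _ K hV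
  have h0 : ξ = 0 := ev_of_gdim hVW n K hn (n + 1) (by omega) ξ
  have : HasProjectiveDimensionLT V 1 := by
    rw [hasProjectiveDimensionLT_iff.{u}]
    intro i hi Y z
    exact hξ Y i hi z (by rw [h0]; simp)
  exact ⟨_, syz_pd this _ _ hV⟩

lemma pd_of_reducing [IsNoetherianRing R] {M K : ModuleCat.{u} R} (hK : Module.Finite R K)
    {d : ℕ} (hd : HasInjectiveDimensionLT M d) {a b n m : ℕ} (ha : 1 ≤ a)
    (hr : ReducingStep R M K a b n) (hm : GdimLE R m K) :
    ∃ c, HasProjectiveDimensionLT M c := by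
  obtain ⟨W, f, g, hW, hs⟩ := hr
  have hMW : WC M := wc_of_injdim hd
  have hWW : WC W := syz_wc _ _ hMW hW
  have hs' : IsShortExact R (A := ModuleCat.of R (Fin a → M)) (C := ModuleCat.of R (Fin b → W))
    f g := hs
  obtain ⟨c, hc⟩ := pd_of_wc hK (wc_mid hs' (wc_pi hMW a) (wc_pi hWW b)) hm
  obtain ⟨ξ, hξ⟩ := xi_exists W _ M hW
  refine ⟨c + 1, ?_⟩
  rw [hasProjectiveDimensionLT_iff.{u}]
  intro i hi Y x
  have star : ∀ (i : ℕ), c + 1 ≤ i → ∀ x : EXT M Y i,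
      (∀ θ : EXT M M (n + 1), θ.comp x rfl = 0) → x = 0 := by
    intro i hi x hx
    let l : Fin a := ⟨0, ha⟩
    let pr : ModuleCat.of R (Fin a → M) ⟶ M := ModuleCat.ofHom (LinearMap.proj l)
    let inc : M ⟶ ModuleCat.of R (Fin a → M) :=
      ModuleCat.ofHom (LinearMap.single R (fun _ => (M : Type u)) l)
    have hinc : inc ≫ pr = 𝟙 M := by
      ext v
      simp [inc, pr]
    have hz : (sc_exact hs').extClass.comp ((Ext.mk₀ pr).comp x (zero_add i)) rfl = 0 := by
      apply pi_con
      intro q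
      apply hξ Y (1 + i) (by omega)
      set ι : W ⟶ ModuleCat.of R (Fin b → W) :=
        ModuleCat.ofHom (LinearMap.single R (fun _ => (W : Type u)) q)
      have e1 := hx (((ξ.comp (Ext.mk₀ ι) (add_zero n)).comp (sc_exact hs').extClass rfl).comp
        (Ext.mk₀ pr) (add_zero _))
      rw [Ext.comp_assoc_of_second_deg_zero,
        Ext.comp_assoc (h₂₃ := rfl) (h := by omega), Ext.comp_assoc_of_second_deg_zero] at e1
      exact comp_cast _ _ _ _ e1
    obtain ⟨y, hy⟩ := Ext.contravariant_sequence_exact₁ (sc_exact hs') Y _ _ hz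
    have hy0 : y = 0 := y.eq_zero_of_hasProjectiveDimensionLT c (by omega)
    rw [hy0, Ext.comp_zero] at hy
    rw [← Ext.mk₀_id_comp x, ← hinc, ← Ext.mk₀_comp_mk₀_assoc, ← hy, Ext.comp_zero]
  have key : ∀ t e : ℕ, d ≤ e + t → ∀ θ : EXT M M e, ∀ k (hk : e + i = k), θ.comp x hk = 0 := by
    intro t
    induction t with
    | zero =>
      intro e he θ k hk
      rw [θ.eq_zero_of_hasInjectiveDimensionLT d he]; simp
    | succ t ih =>
      intro e he θ k hk
      apply star k (by omega)
      intro θ'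
      rw [← Ext.comp_assoc (h₁₂ := rfl) (h := by omega)]
      exact ih _ (by omega) _ _ _
  have := key d 0 (by omega) (Ext.mk₀ (𝟙 M)) i (zero_add i)
  rwa [Ext.mk₀_id_comp] at this

end RG
end HelpersC

section HelpersD

variable {R : Type u} [CommRing R]

open Abelian TensorProduct

namespace RG

lemma inj_quot {A B C : ModuleCat.{u} R} {f : A →ₗ[R] B} {g : B →ₗ[R] C} (h : IsShortExact R f g)
    (hA : Module.Injective R A) (hB : Module.Injective R B) : Module.Injective R C := by
  have := inj_obj hA
  have := inj_obj hB
  have h2 : HasInjectiveDimensionLT A 2 := hasInjectiveDimensionLT_of_ge A 1 2 (by omega)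
  have h3 : HasInjectiveDimensionLT C 1 :=
    (sc_exact h).hasInjectiveDimensionLT_X₃ 1 inferInstance h2
  exact inj_mod (injective_iff_hasInjectiveDimensionLT_one.2 h3)

variable (R) in
/-- An injective resolution of the ring. -/
structure InjRes where
  I : ℕ → ModuleCat.{u} R
  d : ∀ n, I n →ₗ[R] I (n + 1)
  inj : ∀ n, Module.Injective R (I n)
  ex : ∀ n, Function.Exact (d n) (d (n + 1))
  η : R →ₗ[R] I 0
  η_inj : Function.Injective η
  ex0 : Function.Exact η (d 0)

/-- Injective model of a module of finite projective dimension. -/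
structure JData [IsLocalRing R] (S : InjRes R) (K : Type u) [AddCommGroup K] [Module R K] where
  J : ℕ → ModuleCat.{u} R
  D : ∀ n, J n →ₗ[R] J (n + 1)
  inj : ∀ n, Module.Injective R (J n)
  ex : ∀ n, Function.Exact (D n) (D (n + 1))
  θ : ∀ n, J n →ₗ[R] (S.I n ⊗[R] K)
  chain : ∀ n x, θ (n + 1) (D n x) = (S.d n).rTensor K (θ n x)
  ε : LinearMap.ker (D 0) →ₗ[R] K
  ε_surj : Function.Surjective ε
  ε_ker : Module.Injective R (LinearMap.ker ε)
  θε : ∀ z : LinearMap.ker (D 0), θ 0 z.1 = S.η 1 ⊗ₜ[R] ε z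
  soc : ∀ φ : K →ₗ[R] R, (∀ k, φ k ∈ IsLocalRing.maximalIdeal R) → ∀ n (x : J n),
    (∀ r ∈ IsLocalRing.maximalIdeal R, r • x = 0) → φ.lTensor (S.I n) (θ n x) = 0

/-- zero case -/
noncomputable def JData.zero [IsLocalRing R] (S : InjRes R) (K : Type u) [AddCommGroup K]
    [Module R K] [Subsingleton K] : JData S K where
  J n := ModuleCat.of R PUnit.{u + 1}
  D n := 0
  inj n := ⟨fun _ _ _ _ _ _ _ _ _ => ⟨0, fun _ => rfl⟩⟩
  ex n := fun x => ⟨fun _ => ⟨0, rfl⟩, fun _ => rfl⟩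
  θ n := 0
  chain n x := by simp
  ε := 0
  ε_surj := fun k => ⟨0, Subsingleton.elim _ _⟩
  ε_ker := ⟨fun _ _ _ _ _ _ _ _ _ => ⟨0, fun _ => Subsingleton.elim _ _⟩⟩
  θε z := by
    rw [Subsingleton.elim ((0 : LinearMap.ker _ →ₗ[R] K) z) 0]; simp
  soc φ _ n x _ := by simp

lemma soc_free [IsLocalRing R] {N : Type u} [AddCommGroup N] [Module R N] {m : ℕ}
    (ψ : (Fin m → R) →ₗ[R] R) (hψ : ∀ k, ψ k ∈ IsLocalRing.maximalIdeal R)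
    (y : N ⊗[R] (Fin m → R)) (hy : ∀ r ∈ IsLocalRing.maximalIdeal R, r • y = 0) :
    ψ.lTensor N y = 0 := by
  let E := TensorProduct.piScalarRight R R N (Fin m)
  obtain ⟨v, rfl⟩ := E.symm.surjective y
  have hv : ∀ r ∈ IsLocalRing.maximalIdeal R, ∀ l, r • v l = 0 := by
    intro r hr l
    have h1 := hy r hr
    rw [← map_smul] at h1
    have h2 := E.symm.injective (h1.trans (map_zero E.symm).symm)
    exact congrFun h2 l
  have hs : E.symm v = ∑ l, v l ⊗ₜ[R] (Pi.single l 1 : Fin m → R) := by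
    rw [LinearEquiv.symm_apply_eq, map_sum]
    ext l
    simp [E, TensorProduct.piScalarRight_apply, TensorProduct.piScalarRightHom_tmul, Finset.sum_apply, Pi.single_apply]
  rw [hs, map_sum]
  apply Finset.sum_eq_zero
  intro l _
  rw [LinearMap.lTensor_tmul]
  have : v l ⊗ₜ[R] ψ (Pi.single l 1) = (ψ (Pi.single l 1) • v l) ⊗ₜ[R] (1 : R) := by
    rw [TensorProduct.smul_tmul, smul_eq_mul, mul_one]
  rw [this, hv _ (hψ _), TensorProduct.zero_tmul]

lemma inj_tensor {N : Type u} [AddCommGroup N] [Module R N] (h : Module.Injective R N) (m : ℕ) :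
    Module.Injective R (N ⊗[R] (Fin m → R)) := by
  have h1 : Module.Injective R (Fin m → N) := Module.Injective.pi R (fun _ : Fin m => N)
  let E := TensorProduct.piScalarRight R R N (Fin m)
  have := Module.Baer.of_equiv E.symm (Module.Baer.of_injective h1)
  exact this.injective

end RG
end HelpersD
set_option linter.unusedSectionVars false

section HelpersD2

variable {R : Type u} [CommRing R]

open Abelian TensorProduct

namespace RG

section Step

variable [IsLocalRing R] {S : InjRes R} {K M : Type u} [AddCommGroup K] [Module R K]
  [AddCommGroup M] [Module R M] (JD : JData S K) {m : ℕ} (i : K →ₗ[R] (Fin m → R))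
  (π : (Fin m → R) →ₗ[R] M)

/-- differential of the mapping cone -/
noncomputable def stepD (n : ℕ) : (JD.J (n + 1) × (S.I n ⊗[R] (Fin m → R))) →ₗ[R]
    (JD.J (n + 1 + 1) × (S.I (n + 1) ⊗[R] (Fin m → R))) :=
  LinearMap.prod (-((JD.D (n + 1)).comp (LinearMap.fst R _ _)))
    (((i.lTensor (S.I (n + 1))).comp (JD.θ (n + 1))).comp (LinearMap.fst R _ _) +
      ((S.d n).rTensor (Fin m → R)).comp (LinearMap.snd R _ _))

lemma stepD_apply (n : ℕ) (x : JD.J (n + 1)) (y : S.I n ⊗[R] (Fin m → R)) :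
    stepD JD i n (x, y) = (-(JD.D (n + 1) x),
      i.lTensor (S.I (n + 1)) (JD.θ (n + 1) x) + (S.d n).rTensor (Fin m → R) y) := rfl

lemma lr {A B : Type u} [AddCommGroup A] [AddCommGroup B] [Module R A] [Module R B]
    {K P : Type u} [AddCommGroup K] [AddCommGroup P] [Module R K] [Module R P]
    (g : A →ₗ[R] B) (i : K →ₗ[R] P) (x : A ⊗[R] K) :
    i.lTensor B (g.rTensor K x) = g.rTensor P (i.lTensor A x) := by
  have h := LinearMap.lTensor_comp_rTensor (M := A) (P := B) (g := i) (f := g)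
  have h' := LinearMap.rTensor_comp_lTensor (M := A) (P := B) (g := i) (f := g)
  have e := h.trans h'.symm
  exact LinearMap.congr_fun e x

lemma dP_exact (n : ℕ) : Function.Exact ((S.d n).rTensor (Fin m → R))
    ((S.d (n + 1)).rTensor (Fin m → R)) := Module.Flat.rTensor_exact _ (S.ex n)

lemma step_ex (n : ℕ) : Function.Exact (stepD JD i n) (stepD JD i (n + 1)) := by
  rintro ⟨x, y⟩
  constructor
  · intro h
    rw [stepD_apply, Prod.mk_eq_zero, neg_eq_zero] at h
    obtain ⟨x₀, rfl⟩ := (JD.ex (n + 1) x).1 h.1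
    have h2 := h.2
    rw [JD.chain, lr, ← map_add] at h2
    obtain ⟨y₀, hy₀⟩ := (dP_exact n _).1 h2
    refine ⟨(-x₀, y₀), ?_⟩
    rw [stepD_apply, hy₀]
    simp
  · rintro ⟨⟨x₀, y₀⟩, h⟩
    rw [← h, stepD_apply, stepD_apply, map_neg, (JD.ex (n + 1)).apply_apply_eq_zero, map_neg,
      map_neg, JD.chain, lr, map_add, (dP_exact n).apply_apply_eq_zero]
    simp

/-- the tensor with the augmentation -/
noncomputable def eP (S : InjRes R) (m : ℕ) : (Fin m → R) →ₗ[R] S.I 0 ⊗[R] (Fin m → R) :=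
  TensorProduct.mk R _ _ (S.η 1)

lemma eP_apply (p : Fin m → R) : eP S m p = S.η 1 ⊗ₜ[R] p := rfl

lemma eP_eq : eP S m = ((S.η).rTensor (Fin m → R)).comp
    (TensorProduct.lid R (Fin m → R)).symm.toLinearMap := by
  apply LinearMap.ext
  intro p
  simp [eP]

lemma eP_inj : Function.Injective (eP S m) := by
  rw [eP_eq]
  exact (Module.Flat.rTensor_preserves_injective_linearMap (M := Fin m → R) S.η S.η_inj).comp
    (TensorProduct.lid R (Fin m → R)).symm.injective

lemma eP_exact : Function.Exact (eP S m) ((S.d 0).rTensor (Fin m → R)) := by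
  have h := Module.Flat.rTensor_exact (Fin m → R) S.ex0
  intro y
  rw [h y, eP_eq]
  constructor
  · rintro ⟨z, rfl⟩
    exact ⟨TensorProduct.lid R _ z, by simp⟩
  · rintro ⟨z, rfl⟩
    exact ⟨(TensorProduct.lid R (Fin m → R)).symm z, rfl⟩

/-- parametrization of the cocycles in degree zero -/
noncomputable def stepU : (JD.J 0 × (Fin m → R)) →ₗ[R] LinearMap.ker (stepD JD i 0) :=
  LinearMap.codRestrict _
    (LinearMap.prod ((JD.D 0).comp (LinearMap.fst R _ _))
      ((eP S m).comp (LinearMap.snd R _ _) -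
        ((i.lTensor (S.I 0)).comp (JD.θ 0)).comp (LinearMap.fst R _ _)))
    (by
      rintro ⟨x, p⟩
      rw [LinearMap.mem_ker]
      change stepD JD i 0 (JD.D 0 x, eP S m p - i.lTensor (S.I 0) (JD.θ 0 x)) = 0
      rw [stepD_apply, (JD.ex 0).apply_apply_eq_zero, JD.chain, lr, map_sub,
        eP_exact.apply_apply_eq_zero]
      simp)

lemma stepU_apply (x : JD.J 0) (p : Fin m → R) :
    (stepU JD i (x, p)).1 = (JD.D 0 x, eP S m p - i.lTensor (S.I 0) (JD.θ 0 x)) := rfl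

lemma stepU_surj : Function.Surjective (stepU JD i) := by
  rintro ⟨⟨x, y⟩, h⟩
  rw [LinearMap.mem_ker, stepD_apply, Prod.mk_eq_zero, neg_eq_zero] at h
  obtain ⟨x₀, rfl⟩ := (JD.ex 0 x).1 h.1
  have h2 := h.2
  rw [JD.chain, lr, ← map_add] at h2
  obtain ⟨p, hp⟩ := (eP_exact _).1 h2
  refine ⟨(x₀, p), Subtype.ext ?_⟩
  rw [stepU_apply, hp]
  simp

lemma lT_ker (z : LinearMap.ker (JD.D 0)) :
    i.lTensor (S.I 0) (JD.θ 0 z.1) = eP S m (i (JD.ε z)) := by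
  rw [JD.θε, LinearMap.lTensor_tmul, eP_apply]

lemma stepU_ker (x : JD.J 0) (p : Fin m → R) :
    stepU JD i (x, p) = 0 ↔ ∃ h : JD.D 0 x = 0, p = i (JD.ε ⟨x, h⟩) := by
  rw [← Subtype.val_inj, stepU_apply]
  change _ = ((0 : _ × _)) ↔ _
  rw [Prod.mk_eq_zero, sub_eq_zero]
  constructor
  · rintro ⟨h, h2⟩
    refine ⟨h, eP_inj (S := S) ?_⟩
    rw [h2, ← lT_ker]
  · rintro ⟨h, h2⟩
    refine ⟨h, ?_⟩
    rw [h2, ← lT_ker]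

variable (hex : Function.Exact i π)

/-- the augmentation of the cone -/
noncomputable def stepE : LinearMap.ker (stepD JD i 0) →ₗ[R] M :=
  ((LinearMap.ker (stepU JD i)).liftQ (π.comp (LinearMap.snd R (JD.J 0) (Fin m → R))) (by
    rintro ⟨x, p⟩ h
    obtain ⟨_, rfl⟩ := (stepU_ker JD i x p).1 h
    exact hex.apply_apply_eq_zero _)).comp
  ((stepU JD i).quotKerEquivOfSurjective (stepU_surj JD i)).symm.toLinearMap

lemma stepE_apply (x : JD.J 0) (p : Fin m → R) :
    stepE JD i π hex (stepU JD i (x, p)) = π p := by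
  have : ((stepU JD i).quotKerEquivOfSurjective (stepU_surj JD i)).symm (stepU JD i (x, p)) =
      Submodule.Quotient.mk (x, p) := by
    rw [LinearEquiv.symm_apply_eq]; rfl
  unfold stepE
  rw [LinearMap.comp_apply, LinearEquiv.coe_coe, this]
  rfl

lemma stepE_ker (hi : Function.Injective i) :
    Module.Injective R (LinearMap.ker (stepE JD i π hex)) := by
  let f : LinearMap.ker JD.ε →ₗ[R] JD.J 0 :=
    (LinearMap.ker (JD.D 0)).subtype.comp (LinearMap.ker JD.ε).subtype
  let g : JD.J 0 →ₗ[R] LinearMap.ker (stepE JD i π hex) :=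
    LinearMap.codRestrict _ ((stepU JD i).comp (LinearMap.inl R _ _)) (by
      intro x
      rw [LinearMap.mem_ker]
      exact (stepE_apply JD i π hex x 0).trans (map_zero π))
  have hg : ∀ x, (g x).1 = stepU JD i (x, 0) := fun x => rfl
  have : IsShortExact R (A := ModuleCat.of R (LinearMap.ker JD.ε))
      (C := ModuleCat.of R (LinearMap.ker (stepE JD i π hex))) f g := by
    refine ⟨?_, ?_, ?_⟩
    · exact Subtype.val_injective.comp Subtype.val_injective
    · rintro ⟨w, hw⟩
      obtain ⟨⟨x, p⟩, rfl⟩ := stepU_surj JD i w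
      rw [LinearMap.mem_ker, stepE_apply] at hw
      obtain ⟨k, rfl⟩ := (hex p).1 hw
      obtain ⟨z, rfl⟩ := JD.ε_surj k
      refine ⟨x - z.1, Subtype.ext ?_⟩
      rw [hg]
      have h0 : stepU JD i (z.1, i (JD.ε z)) = 0 := (stepU_ker JD i _ _).2 ⟨z.2, rfl⟩
      change _ = stepU JD i (x, i (JD.ε z))
      rw [← sub_zero (stepU JD i (x, i (JD.ε z))), ← h0, ← map_sub]
      simp
    · intro x
      rw [← Subtype.val_inj, hg]
      change _ = 0 ↔ _
      rw [stepU_ker]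
      constructor
      · rintro ⟨h, h2⟩
        refine ⟨⟨⟨x, h⟩, ?_⟩, rfl⟩
        rw [LinearMap.mem_ker]
        exact hi (h2.symm.trans (map_zero i).symm)
      · rintro ⟨⟨z, hz⟩, rfl⟩
        refine ⟨z.2, ?_⟩
        rw [LinearMap.mem_ker] at hz
        change 0 = i (JD.ε z)
        rw [hz, map_zero]
  exact inj_quot this JD.ε_ker (JD.inj 0)

/-- The inductive step. -/
noncomputable def JData.step (hi : Function.Injective i) (hπ : Function.Surjective π) : JData S M where
  J n := ModuleCat.of R (JD.J (n + 1) × (S.I n ⊗[R] (Fin m → R)))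
  D n := stepD JD i n
  inj n := by
    have h1 := JD.inj (n + 1)
    have h2 := inj_tensor (S.inj n) m
    refine ⟨fun X Y _ _ _ _ f hf g => ?_⟩
    obtain ⟨a, ha⟩ := h1.out f hf ((LinearMap.fst R _ _).comp g)
    obtain ⟨b, hb⟩ := h2.out f hf ((LinearMap.snd R _ _).comp g)
    exact ⟨a.prod b, fun x => Prod.ext (ha x) (hb x)⟩
  ex n := step_ex JD i n
  θ n := (π.lTensor (S.I n)).comp (LinearMap.snd R (JD.J (n + 1)) (S.I n ⊗[R] (Fin m → R)))
  chain n := by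
    rintro ⟨x, y⟩
    change π.lTensor _ (i.lTensor (S.I (n + 1)) (JD.θ (n + 1) x) +
      (S.d n).rTensor (Fin m → R) y) = (S.d n).rTensor M (π.lTensor (S.I n) y)
    rw [map_add, lr, ← LinearMap.lTensor_comp_apply, hex.linearMap_comp_eq_zero]
    simp
  ε := stepE JD i π hex
  ε_surj := by
    intro k
    obtain ⟨p, rfl⟩ := hπ k
    exact ⟨_, stepE_apply JD i π hex 0 p⟩
  ε_ker := stepE_ker JD i π hex hi
  θε z := by
    obtain ⟨⟨x, p⟩, rfl⟩ := stepU_surj JD i z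
    rw [stepE_apply]
    change π.lTensor _ (eP S m p - i.lTensor (S.I 0) (JD.θ 0 x)) = _
    rw [map_sub, ← LinearMap.lTensor_comp_apply, hex.linearMap_comp_eq_zero, eP_apply]
    simp
  soc φ hφ n := by
    rintro ⟨x, y⟩ h
    change φ.lTensor _ (π.lTensor _ y) = 0
    rw [← LinearMap.lTensor_comp_apply]
    apply soc_free
    · intro k; exact hφ _
    · intro r hr
      exact (Prod.ext_iff.1 (h r hr)).2

end Step
end RG
end HelpersD2

section HelpersD3

variable {R : Type u} [CommRing R]

open Abelian TensorProduct

namespace RG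

lemma exists_JData [IsNoetherianRing R] [IsLocalRing R] (S : InjRes R) :
    ∀ (c : ℕ) (K : ModuleCat.{u} R), Module.Finite R K → HasProjectiveDimensionLT K c →
      Nonempty (JData S K) := by
  intro c
  induction c with
  | zero =>
    intro K _ h
    have : Subsingleton K :=
      ModuleCat.subsingleton_of_isZero ((hasProjectiveDimensionLT_zero_iff_isZero K).1 h)
    exact ⟨JData.zero S K⟩
  | succ c ih =>
    intro K hK h
    rcases c with _ | c
    · have : Projective K := projective_iff_hasProjectiveDimensionLT_one.2 h
      have : Module.Projective R K := module_projective_of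
      have : Module.Free R K := Module.free_of_flat_of_isLocalRing
      let b := (Module.Free.chooseBasis R K)
      let b' := b.reindex (Fintype.equivFin _)
      have hex : Function.Exact (0 : PUnit.{u + 1} →ₗ[R] _) b'.equivFun.symm.toLinearMap := by
        intro x
        constructor
        · intro hx
          refine ⟨0, ?_⟩
          exact (b'.equivFun.symm.injective (hx.trans (map_zero _).symm)).symm
        · rintro ⟨_, rfl⟩
          simp
      exact ⟨(JData.zero S PUnit.{u + 1}).step 0 b'.equivFun.symm.toLinearMap hex
        (fun _ _ _ => rfl) b'.equivFun.symm.surjective⟩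
    · obtain ⟨m, p, hp⟩ := Module.Finite.exists_fin' R K
      have hs := ses_ker (A := ModuleCat.of R (Fin m → R)) p hp
      have : Module.Projective R (ModuleCat.of R (Fin m → R)) :=
        inferInstanceAs (Module.Projective R (Fin m → R))
      have := projective_of (X := ModuleCat.of R (Fin m → R))
      have h2 : HasProjectiveDimensionLT (ModuleCat.of R (Fin m → R)) (c + 1) :=
        hasProjectiveDimensionLT_of_ge _ 1 _ (by omega)
      have h1 := (sc_exact hs).hasProjectiveDimensionLT_X₁ (c + 1) h2 h
      obtain ⟨JD⟩ := ih (ModuleCat.of R (LinearMap.ker p))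
        (Module.IsNoetherian.finite R (LinearMap.ker p)) h1
      exact ⟨JData.step (K := LinearMap.ker p) JD (LinearMap.ker p).subtype p hs.2.2 hs.1 hp⟩

lemma minimal_cover [IsLocalRing R] (M : Type u) [AddCommGroup M] [Module R M]
    [Module.Finite R M] : ∃ (m : ℕ) (p : (Fin m → R) →ₗ[R] M), Function.Surjective p ∧
      ∀ v, p v = 0 → ∀ l, v l ∈ IsLocalRing.maximalIdeal R := by
  classical
  have hex : ∃ m : ℕ, ∃ w : Fin m → M, Submodule.span R (Set.range w) = ⊤ :=
    Module.Finite.exists_fin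
  obtain ⟨w, hw⟩ := Nat.find_spec hex
  have hmin := fun k (hk : k < Nat.find hex) => Nat.find_min hex hk
  generalize Nat.find hex = m at *
  refine ⟨m, Fintype.linearCombination R w, ?_, ?_⟩
  · rw [← LinearMap.range_eq_top, Fintype.range_linearCombination, hw]
  · intro v hv l
    by_contra hl
    rw [IsLocalRing.mem_maximalIdeal, mem_nonunits_iff, not_not] at hl
    rcases m with _ | m
    · exact l.elim0
    apply hmin m (by omega)
    refine ⟨w ∘ l.succAbove, ?_⟩
    rw [eq_top_iff, ← hw, Submodule.span_le]
    have hmem : ∀ q, w (l.succAbove q) ∈ Submodule.span R (Set.range (w ∘ l.succAbove)) :=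
      fun q => Submodule.subset_span ⟨q, rfl⟩
    rintro _ ⟨q, rfl⟩
    rcases Fin.eq_self_or_eq_succAbove l q with rfl | ⟨q, rfl⟩
    · rw [Fintype.linearCombination_apply, Fin.sum_univ_succAbove _ q] at hv
      obtain ⟨r, hr⟩ := hl.exists_left_inv
      have : w q = r • (-(∑ i, v (q.succAbove i) • w (q.succAbove i))) := by
        rw [← eq_neg_of_add_eq_zero_left hv, smul_smul, hr, one_smul]
      rw [this]
      exact Submodule.smul_mem _ _ (Submodule.neg_mem _ (Submodule.sum_mem _ fun i _ =>
        Submodule.smul_mem _ _ (hmem i)))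
    · exact hmem q

lemma tail_inj (J : ℕ → ModuleCat.{u} R) (D : ∀ n, J n →ₗ[R] J (n + 1))
    (inj : ∀ n, Module.Injective R (J n)) (ex : ∀ n, Function.Exact (D n) (D (n + 1))) (e : ℕ)
    (he : HasInjectiveDimensionLT (ModuleCat.of R (LinearMap.ker (D 0))) e) :
    ∃ N, ∀ n, N ≤ n → Module.Injective R (LinearMap.ker (D n)) := by
  have ses : ∀ n, ∃ g : J n →ₗ[R] (ModuleCat.of R (LinearMap.ker (D (n + 1)))), IsShortExact R
      (A := ModuleCat.of R (LinearMap.ker (D n))) (LinearMap.ker (D n)).subtype g := by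
    intro n
    refine ⟨LinearMap.codRestrict _ (D n) (fun x => (ex n).apply_apply_eq_zero x),
      Subtype.val_injective, ?_, ?_⟩
    · rintro ⟨y, hy⟩
      obtain ⟨x, rfl⟩ := (ex n y).1 hy
      exact ⟨x, rfl⟩
    · intro x
      constructor
      · intro hx
        exact ⟨⟨x, congrArg Subtype.val hx⟩, rfl⟩
      · rintro ⟨y, rfl⟩
        exact Subtype.ext y.2
  have step : ∀ t n, HasInjectiveDimensionLT (ModuleCat.of R (LinearMap.ker (D n))) (t + 1) →
      Module.Injective R (LinearMap.ker (D (n + t))) := by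
    intro t
    induction t with
    | zero =>
      intro n h
      exact inj_mod (injective_iff_hasInjectiveDimensionLT_one.2 h)
    | succ t ih =>
      intro n h
      obtain ⟨g, hg⟩ := ses n
      have := inj_obj (inj n)
      have h2 : HasInjectiveDimensionLT (J n) (t + 1) :=
        hasInjectiveDimensionLT_of_ge _ 1 _ (by omega)
      have h3 := ih (n + 1) ((sc_exact hg).hasInjectiveDimensionLT_X₃ _ h2 h)
      have e : n + 1 + t = n + (t + 1) := by omega
      rwa [e] at h3
  have he' : HasInjectiveDimensionLT (ModuleCat.of R (LinearMap.ker (D 0))) (e + 1) :=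
    hasInjectiveDimensionLT_of_ge _ e _ (by omega)
  refine ⟨e, fun n hn => ?_⟩
  induction n, hn using Nat.le_induction with
  | base =>
    have h3 := step e 0 he'
    rwa [Nat.zero_add] at h3
  | succ n hn ih =>
    obtain ⟨g, hg⟩ := ses n
    exact inj_quot hg ih (inj n)

lemma soc_lift [IsLocalRing R] {A B : Type u} [AddCommGroup A] [AddCommGroup B] [Module R A]
    [Module R B] (D : A →ₗ[R] B) (h : Module.Injective R (LinearMap.ker D)) (y : A)
    (hy : ∀ r ∈ IsLocalRing.maximalIdeal R, r • D y = 0) :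
    ∃ w, D w = D y ∧ ∀ r ∈ IsLocalRing.maximalIdeal R, r • w = 0 := by
  obtain ⟨ρ, hρ⟩ := h.out (LinearMap.ker D).subtype Subtype.val_injective LinearMap.id
  refine ⟨y - (ρ y).1, ?_, ?_⟩
  · rw [map_sub, (ρ y).2, sub_zero]
  · intro r hr
    have h1 : D (r • y) = 0 := by rw [map_smul, hy r hr]
    have h2 := congrArg Subtype.val (hρ ⟨r • y, h1⟩)
    change (ρ (r • y)).1 = r • y at h2
    rw [smul_sub, ← h2, map_smul]
    simp

lemma bass_tail [IsNoetherianRing R] [IsLocalRing R] (S : InjRes R) (M : ModuleCat.{u} R)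
    (hfin : Module.Finite R M) (hM : Nontrivial M) {c d : ℕ} (hc : HasProjectiveDimensionLT M c)
    (hd : HasInjectiveDimensionLT M d) :
    ∃ N, ∀ n, N ≤ n → ∀ z : S.I (n + 1), (∀ r ∈ IsLocalRing.maximalIdeal R, r • z = 0) →
      S.d (n + 1) z = 0 →
      ∃ w : S.I n, (∀ r ∈ IsLocalRing.maximalIdeal R, r • w = 0) ∧ S.d n w = z := by
  obtain ⟨m, p, hp, hmin⟩ := minimal_cover (R := R) M
  have hs := ses_ker (A := ModuleCat.of R (Fin m → R)) p hp
  have hm : 0 < m := by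
    rcases m with _ | m
    · have : Subsingleton M := hp.subsingleton
      exact (not_subsingleton M this).elim
    · omega
  have : Module.Projective R (ModuleCat.of R (Fin m → R)) :=
    inferInstanceAs (Module.Projective R (Fin m → R))
  have := projective_of (X := ModuleCat.of R (Fin m → R))
  have h2 : HasProjectiveDimensionLT (ModuleCat.of R (Fin m → R)) (c + 1) :=
    hasProjectiveDimensionLT_of_ge _ 1 _ (by omega)
  have h3 : HasProjectiveDimensionLT M (c + 1 + 1) :=
    hasProjectiveDimensionLT_of_ge _ c _ (by omega)
  have h1 := (sc_exact hs).hasProjectiveDimensionLT_X₁ (c + 1) h2 h3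
  obtain ⟨JD⟩ := exists_JData S _ (ModuleCat.of R (LinearMap.ker p))
    (Module.IsNoetherian.finite R (LinearMap.ker p)) h1
  let i : LinearMap.ker p →ₗ[R] (Fin m → R) := (LinearMap.ker p).subtype
  let J' : JData S M := JData.step (K := LinearMap.ker p) JD i p hs.2.2 hs.1 hp
  have hker := ses_ker (A := ModuleCat.of R (LinearMap.ker (J'.D 0))) J'.ε J'.ε_surj
  have := inj_obj (X := ModuleCat.of R (LinearMap.ker J'.ε)) J'.ε_ker
  have k1 : HasInjectiveDimensionLT (ModuleCat.of R (LinearMap.ker J'.ε)) (d + 1) :=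
    hasInjectiveDimensionLT_of_ge _ 1 _ (by omega)
  have k3 : HasInjectiveDimensionLT M (d + 1) := hasInjectiveDimensionLT_of_ge _ d _ (by omega)
  have k2 := (sc_exact hker).hasInjectiveDimensionLT_X₂ (d + 1) k1 k3
  obtain ⟨N, hN⟩ := tail_inj J'.J J'.D J'.inj J'.ex (d + 1) k2
  refine ⟨N, fun n hn z hz hdz => ?_⟩
  let l : Fin m := ⟨0, hm⟩
  let b : Fin m → R := Pi.single l 1
  let Y : J'.J (n + 1) := ((0 : JD.J (n + 1 + 1)), z ⊗ₜ[R] b)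
  have hY : J'.D (n + 1) Y = 0 := by
    change stepD (K := LinearMap.ker p) JD i (n + 1) (0, z ⊗ₜ[R] b) = 0
    rw [stepD_apply, LinearMap.rTensor_tmul, hdz]
    simp
  obtain ⟨y, hy⟩ := (J'.ex n Y).1 hY
  obtain ⟨⟨a, q⟩, hw, hsoc⟩ := soc_lift (J'.D n) (hN n hn) y (by
    intro r hr
    rw [hy]
    refine Prod.ext (smul_zero r) ?_
    change r • (z ⊗ₜ[R] b) = 0
    rw [TensorProduct.smul_tmul', hz r hr, TensorProduct.zero_tmul])
  rw [hy] at hw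
  change stepD (K := LinearMap.ker p) JD i n (a, q) = (0, z ⊗ₜ[R] b) at hw
  rw [stepD_apply] at hw
  have hw2 := (Prod.ext_iff.1 hw).2
  have ha : ∀ r ∈ IsLocalRing.maximalIdeal R, r • a = 0 := fun r hr =>
    (Prod.ext_iff.1 (hsoc r hr)).1
  have hq : ∀ r ∈ IsLocalRing.maximalIdeal R, r • q = 0 := fun r hr =>
    (Prod.ext_iff.1 (hsoc r hr)).2
  let pr : (Fin m → R) →ₗ[R] R := LinearMap.proj l
  have hφ := JD.soc (pr.comp i) (fun k => hmin k.1 k.2 l) (n + 1) a ha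
  have e1 := congrArg (fun t => TensorProduct.rid R _ (pr.lTensor (S.I (n + 1)) t)) hw2
  refine ⟨TensorProduct.rid R _ (pr.lTensor (S.I n) q), ?_, ?_⟩
  · intro r hr
    rw [← map_smul, ← map_smul, hq r hr, map_zero, map_zero]
  · have e2 : pr.lTensor (S.I (n + 1)) (i.lTensor (S.I (n + 1)) (JD.θ (n + 1) a)) = 0 := by
      rw [← LinearMap.lTensor_comp_apply]; exact hφ
    simp only [map_add] at e1
    rw [e2, lr] at e1
    have e3 : ∀ t : S.I n ⊗[R] R, TensorProduct.rid R _ ((S.d n).rTensor R t) =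
        S.d n (TensorProduct.rid R _ t) := by
      intro t
      induction t with
      | zero => simp
      | tmul x y => simp
      | add x y hx hy => simp only [map_add, hx, hy]
    rw [e3] at e1
    simpa [pr, b] using e1

end RG
end HelpersD3

section HelpersE

variable {R : Type u} [CommRing R]

open Abelian

namespace RG

/-- Build the elementary data from an injective resolution. -/
noncomputable def toInjRes (Q : InjectiveResolution (ModuleCat.of R R)) : InjRes R where
  I n := Q.cocomplex.X n
  d n := (Q.cocomplex.d n (n + 1)).hom
  inj n := inj_mod (Q.injective n)
  ex n := (ShortComplex.ShortExact.moduleCat_exact_iff_function_exact _).1 (Q.exact_succ n)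
  η := (Q.ι.f 0).hom
  η_inj := (ModuleCat.mono_iff_injective (Q.ι.f 0)).1 inferInstance
  ex0 := (ShortComplex.ShortExact.moduleCat_exact_iff_function_exact _).1 Q.exact₀

lemma ext_k [IsNoetherianRing R] [IsLocalRing R] (M : ModuleCat.{u} R)
    (hfin : Module.Finite R M) (hM : Nontrivial M) {c d : ℕ} (hc : HasProjectiveDimensionLT M c)
    (hd : HasInjectiveDimensionLT M d) :
    ∃ N, ∀ n, N ≤ n →
      EV (ModuleCat.of R (R ⧸ IsLocalRing.maximalIdeal R)) (ModuleCat.of R R) n := by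
  let Q := injectiveResolution (ModuleCat.of R R)
  obtain ⟨N, hN⟩ := bass_tail (toInjRes Q) M hfin hM hc hd
  refine ⟨N + 1, fun n hn x => ?_⟩
  obtain ⟨n, rfl⟩ : ∃ p, n = p + 1 := ⟨n - 1, by omega⟩
  obtain ⟨f, hf, rfl⟩ := Q.extMk_surjective x (n + 2) rfl
  rw [Q.extMk_eq_zero_iff f (n + 2) rfl hf n rfl]
  let one : R ⧸ IsLocalRing.maximalIdeal R := Submodule.Quotient.mk 1
  have hone : ∀ r : R, (Submodule.Quotient.mk r : R ⧸ IsLocalRing.maximalIdeal R) = r • one := by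
    intro r
    rw [← Submodule.Quotient.mk_smul, smul_eq_mul, mul_one]
  obtain ⟨w, hw, hdw⟩ := hN n (by omega) (f.hom one) (by
      intro r hr
      refine (map_smul f.hom r one).symm.trans ?_
      rw [← hone, (Submodule.Quotient.mk_eq_zero _).2 hr, map_zero]
      rfl)
    (congrArg (fun q => q.hom one) hf)
  let g : (R ⧸ IsLocalRing.maximalIdeal R) →ₗ[R] Q.cocomplex.X n :=
    (IsLocalRing.maximalIdeal R).liftQ (LinearMap.toSpanSingleton R _ w) (by
      intro r hr
      exact hw r hr)
  refine ⟨ModuleCat.ofHom g, ?_⟩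
  apply ModuleCat.hom_ext
  apply LinearMap.ext
  intro v
  obtain ⟨r, rfl⟩ := Submodule.Quotient.mk_surjective _ v
  have hg : g (Submodule.Quotient.mk r) = r • w := rfl
  change (Q.cocomplex.d n (n + 1)).hom (g (Submodule.Quotient.mk r)) = _
  rw [hg, hone, map_smul]
  erw [map_smul]
  exact congrArg (fun t => r • t) hdw

lemma ses_colon (I J : Ideal R) (a : R) (hJ : ∀ r, r ∈ J ↔ a * r ∈ I) :
    IsShortExact R (A := ModuleCat.of R (R ⧸ J)) (B := ModuleCat.of R (R ⧸ I))
      (C := ModuleCat.of R (R ⧸ (I ⊔ Ideal.span {a})))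
      (Submodule.mapQ J I (LinearMap.lsmul R R a) (fun r hr => (hJ r).1 hr))
      (Submodule.mapQ I (I ⊔ Ideal.span {a}) LinearMap.id le_sup_left) := by
  refine ⟨?_, ?_, ?_⟩
  · rw [injective_iff_map_eq_zero]
    intro x hx
    obtain ⟨r, rfl⟩ := Submodule.Quotient.mk_surjective _ x
    change (Submodule.Quotient.mk (a * r) : R ⧸ I) = 0 at hx
    exact (Submodule.Quotient.mk_eq_zero J).2 ((hJ r).2 ((Submodule.Quotient.mk_eq_zero I).1 hx))
  · intro x
    obtain ⟨r, rfl⟩ := Submodule.Quotient.mk_surjective _ x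
    exact ⟨Submodule.Quotient.mk r, rfl⟩
  · intro x
    obtain ⟨r, rfl⟩ := Submodule.Quotient.mk_surjective _ x
    constructor
    · intro h
      have h' : r ∈ I ⊔ Ideal.span {a} := (Submodule.Quotient.mk_eq_zero _).1 h
      obtain ⟨i, hi, s, hs, rfl⟩ := Submodule.mem_sup.1 h'
      obtain ⟨t, rfl⟩ := Ideal.mem_span_singleton.1 hs
      refine ⟨Submodule.Quotient.mk t, ?_⟩
      refine (Submodule.Quotient.eq I).2 ?_
      have : a * t - (i + a * t) = -i := by ring
      change a * t - (i + a * t) ∈ I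
      rw [this]
      exact I.neg_mem hi
    · rintro ⟨y, hy⟩
      obtain ⟨s, rfl⟩ := Submodule.Quotient.mk_surjective _ y
      rw [← hy]
      refine (Submodule.Quotient.mk_eq_zero _).2 ?_
      exact (le_sup_right : Ideal.span {a} ≤ I ⊔ Ideal.span {a})
        (Ideal.mem_span_singleton.2 ⟨s, rfl⟩)

lemma ext_surj {A B C : ModuleCat.{u} R} {f : A →ₗ[R] B} {g : B →ₗ[R] C}
    (h : IsShortExact R f g) {Y : ModuleCat.{u} R} {n : ℕ} (h3 : EV C Y (n + 1))
    (x : EXT A Y n) :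
    ∃ y : EXT B Y n, (Ext.mk₀ (ModuleCat.ofHom f)).comp y (zero_add n) = x := by
  obtain ⟨y, hy⟩ := Ext.contravariant_sequence_exact₁ (sc_exact h) Y x
    (n₁ := n + 1) (Nat.add_comm 1 n) (h3 _)
  exact ⟨y, hy⟩

lemma ext_all [IsNoetherianRing R] [IsLocalRing R] {N : ℕ} (hN : ∀ n, N ≤ n →
      EV (ModuleCat.of R (R ⧸ IsLocalRing.maximalIdeal R)) (ModuleCat.of R R) n) (I : Ideal R) :
    ∀ n, N ≤ n → EV (ModuleCat.of R (R ⧸ I)) (ModuleCat.of R R) n := by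
  revert I
  refine fun I => WellFoundedGT.induction (motive := fun I : Ideal R =>
    ∀ n, N ≤ n → EV (ModuleCat.of R (R ⧸ I)) (ModuleCat.of R R) n) I ?_
  intro I ih n hn
  have hlt : ∀ a ∉ I, I < I ⊔ Ideal.span {a} := by
    intro a ha
    refine lt_of_le_of_ne le_sup_left ?_
    intro h
    apply ha
    rw [h]
    exact (le_sup_right : Ideal.span {a} ≤ I ⊔ Ideal.span {a}) (Ideal.mem_span_singleton_self a)
  by_cases htop : I = ⊤
  · intro x
    have hz : Limits.IsZero (ModuleCat.of R (R ⧸ I)) := by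
      have : Subsingleton (R ⧸ I) := Ideal.Quotient.subsingleton_iff.2 htop
      exact ModuleCat.isZero_of_subsingleton _
    have : 𝟙 (ModuleCat.of R (R ⧸ I)) = 0 := hz.eq_of_src _ _
    rw [← Ext.mk₀_id_comp x, this]
    simp
  by_cases hp : I.IsPrime
  · by_cases hmax : I = IsLocalRing.maximalIdeal R
    · rw [hmax]; exact hN n hn
    obtain ⟨a, ham, haI⟩ : ∃ a ∈ IsLocalRing.maximalIdeal R, a ∉ I := by
      by_contra hcon
      push Not at hcon
      exact hmax (le_antisymm (IsLocalRing.le_maximalIdeal htop) hcon)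
    have hses := ses_colon I I a (fun r => ⟨fun hr => I.mul_mem_left a hr,
      fun hr => (hp.mem_or_mem hr).resolve_left haI⟩)
    have h3 := ih _ (hlt a haI) (n + 1) (by omega)
    have hsurj : ∀ x : EXT (ModuleCat.of R (R ⧸ I)) (ModuleCat.of R R) n, ∃ y, x = a • y := by
      intro x
      obtain ⟨y, hy⟩ := ext_surj (A := ModuleCat.of R (R ⧸ I)) (B := ModuleCat.of R (R ⧸ I))
        hses h3 x
      refine ⟨y, ?_⟩
      have hf : ModuleCat.ofHom (Submodule.mapQ I I (LinearMap.lsmul R R a)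
          (fun r hr => Ideal.mul_mem_left I a hr)) = a • 𝟙 (ModuleCat.of R (R ⧸ I)) := by
        apply ModuleCat.hom_ext
        apply LinearMap.ext
        intro v
        obtain ⟨r, rfl⟩ := Submodule.Quotient.mk_surjective _ v
        rfl
      rw [← hy, hf, Ext.mk₀_smul, Ext.smul_comp, Ext.mk₀_id_comp]
    have : Module.Finite R (ModuleCat.of R (R ⧸ I)) :=
      inferInstanceAs (Module.Finite R (R ⧸ I))
    have : Module.Finite R (ModuleCat.of R R) := inferInstanceAs (Module.Finite R R)
    have hfin : Module.Finite R (EXT (ModuleCat.of R (R ⧸ I)) (ModuleCat.of R R) n) :=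
      ModuleCat.finite_ext R _ _ n
    have hbot := Submodule.eq_bot_of_le_smul_of_le_jacobson_bot (IsLocalRing.maximalIdeal R)
      (⊤ : Submodule R (EXT (ModuleCat.of R (R ⧸ I)) (ModuleCat.of R R) n)) hfin.1 (by
        intro x _
        obtain ⟨y, rfl⟩ := hsurj x
        exact Submodule.smul_mem_smul ham trivial)
      (IsLocalRing.maximalIdeal_le_jacobson ⊥)
    intro x
    have hx : x ∈ (⊤ : Submodule R (EXT (ModuleCat.of R (R ⧸ I)) (ModuleCat.of R R) n)) := trivial
    rw [hbot] at hx
    exact hx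
  · obtain ⟨a, ha, b, hb, hab⟩ : ∃ a, a ∉ I ∧ ∃ b, b ∉ I ∧ a * b ∈ I := by
      by_contra hcon
      push Not at hcon
      refine hp ⟨htop, fun {x y} hxy => ?_⟩
      by_contra hor
      push Not at hor
      exact hcon x hor.1 y hor.2 hxy
    let J : Ideal R := Submodule.comap (LinearMap.lsmul R R a) I
    have hJ : ∀ r, r ∈ J ↔ a * r ∈ I := fun r => Iff.rfl
    have hIJ : I < J := by
      refine lt_of_le_of_ne (fun r hr => (hJ r).2 (I.mul_mem_left a hr)) ?_
      intro h
      exact hb (h ▸ (hJ b).2 hab)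
    exact con2 (ses_colon I J a hJ) (ih J hIJ n hn) (ih _ (hlt a ha) n hn)

lemma injdim_of_ext : ∀ (N : ℕ) (X : ModuleCat.{u} R), (∀ (I : Ideal R), ∀ n, N + 1 ≤ n →
    EV (ModuleCat.of R (R ⧸ I)) X n) → InjdimLE R N X
  | 0, X, h => by
      apply Module.Baer.injective
      intro I g
      have hs := ses_quot (A := ModuleCat.of R I) (B := ModuleCat.of R R) I.subtype
        Subtype.val_injective
      have e : (R ⧸ I) ≃ₗ[R] (R ⧸ LinearMap.range I.subtype) :=
        Submodule.quotEquivOfEq _ _ (Submodule.range_subtype I).symm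
      have hv : EV (ModuleCat.of R (R ⧸ LinearMap.range I.subtype)) X 1 :=
        ev_iso (A := ModuleCat.of R (R ⧸ I)) e (h I 1 le_rfl)
      obtain ⟨ψ, hψ⟩ := hom_extend (A := ModuleCat.of R I) (B := ModuleCat.of R R) hs hv g
      exact ⟨ψ, fun x hx => LinearMap.congr_fun hψ ⟨x, hx⟩⟩
  | N + 1, X, h => by
      obtain ⟨P⟩ := EnoughInjectives.presentation X
      have hPi : Module.Injective R P.J := inj_mod P.injective
      have hPm : Function.Injective P.f.hom := (ModuleCat.mono_iff_injective P.f).1 P.mono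
      have hs := ses_quot P.f.hom hPm
      refine ⟨P.J, _, _, _, hPi, hs, injdim_of_ext N _ ?_⟩
      intro I n hn
      exact cov3 hs (ev_inj hPi (by omega)) (h I (n + 1) (by omega))

lemma gorenstein_of [IsNoetherianRing R] [IsLocalRing R] (M : ModuleCat.{u} R)
    (hfin : Module.Finite R M) (hM : Nontrivial M) {c d : ℕ} (hc : HasProjectiveDimensionLT M c)
    (hd : HasInjectiveDimensionLT M d) : IsGorensteinRing R := by
  obtain ⟨N, hN⟩ := ext_k M hfin hM hc hd
  exact ⟨N, injdim_of_ext N _ fun I n hn => ext_all hN I n (by omega)⟩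

end RG
end HelpersE


theorem stmt3 (R : Type u) [CommRing R] [IsNoetherianRing R] [IsLocalRing R] (M : Type u) [AddCommGroup M] [Module R M] [Module.Finite R M] [Nontrivial M] (hinj : ∃ n : ℕ, InjdimLE R n (ModuleCat.of R M)) (hr : rGdim R (ModuleCat.of R M) ≤ 1) : IsGorensteinRing R := by
  obtain ⟨d, hd⟩ := hinj
  have hd' := RG.injdimLT_of_injdimLE d _ hd
  have hne : {n : ℕ∞ | ∃ r : ℕ, n = (r : ℕ∞) ∧
      HasReducingSeq R (fun N => ∃ m : ℕ, GdimLE R m N) (ModuleCat.of R M) r}.Nonempty := by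
    by_contra h
    rw [Set.not_nonempty_iff_eq_empty] at h
    rw [rGdim, ReducingDim, h, sInf_empty] at hr
    exact absurd hr (by simp)
  obtain ⟨r, hr', K, a, b, n, hK0, hKf, hstep, m, hm⟩ := csInf_mem hne
  have hr1 : (r : ℕ∞) ≤ 1 := hr' ▸ hr
  have hr2 : r ≤ 1 := by exact_mod_cast hr1
  have hpd : ∃ c, HasProjectiveDimensionLT (ModuleCat.of R M) c := by
    obtain rfl | rfl : r = 0 ∨ r = 1 := by omega
    · have h0 : K (Fin.last 0) = ModuleCat.of R M := hK0
      rw [h0] at hm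
      exact RG.pd_of_wc (inferInstanceAs (Module.Finite R M)) (RG.wc_of_injdim hd') hm
    · obtain ⟨ha, -, -, hs⟩ := hstep 0
      have h0 : K (Fin.castSucc 0) = ModuleCat.of R M := hK0
      rw [h0] at hs
      exact RG.pd_of_reducing (hKf _) hd' ha hs hm
  obtain ⟨c, hc⟩ := hpd
  exact RG.gorenstein_of (ModuleCat.of R M) (inferInstanceAs (Module.Finite R M))
    (inferInstanceAs (Nontrivial M)) hc hd'
end

section
/- Let R be a d-dimensional commutative Noetherian local ring and let M be a nonzero finitely generated R-module with finite injective dimension. If M has finite reducing Gorenstein dimension and depth_R(M) ≥ d − 1, then R is Gorenstein. -/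
open CategoryTheory Pointwise

universe u

variable (R : Type u) [CommRing R]

section Aux

variable {R}

/-- Vanishing of the derived-category `Ext` groups. -/
def Van (X Y : ModuleCat.{u} R) (n : ℕ) : Prop := ∀ e : Abelian.Ext X Y n, e = 0

lemma van_of_extVanish {X Y : Type u} [AddCommGroup X] [Module R X]
    [AddCommGroup Y] [Module R Y] {n : ℕ} (h : ExtVanish R X Y n) :
    Van (ModuleCat.of R X) (ModuleCat.of R Y) n := by
  intro e
  let P := projectiveResolution (ModuleCat.of R X)
  have hz : Limits.IsZero ((P.complex.linearYonedaObj R (ModuleCat.of R Y)).homology n) := by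
    refine Limits.IsZero.of_iso ?_ (P.isoExt n (ModuleCat.of R Y)).symm
    exact @ModuleCat.isZero_of_subsingleton _ _ _ h
  obtain ⟨f, hf, rfl⟩ := P.extMk_surjective e (n+1) rfl
  rw [← HomologicalComplex.exactAt_iff_isZero_homology] at hz
  cases n with
  | zero =>
    rw [HomologicalComplex.exactAt_iff' _ 0 0 1 (by simp) (by simp)] at hz
    rw [ShortComplex.moduleCat_exact_iff] at hz
    obtain ⟨g, hg⟩ := hz f hf
    have : f = 0 := by
      rw [← hg]
      have : (P.complex.linearYonedaObj R (ModuleCat.of R Y)).d 0 0 = 0 := 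
        HomologicalComplex.shape _ _ _ (by simp)
      change ((P.complex.linearYonedaObj R (ModuleCat.of R Y)).d 0 0) g = 0
      rw [this]; rfl
    subst this
    simp
  | succ p =>
    rw [HomologicalComplex.exactAt_iff' _ p (p+1) (p+2) (by simp) (by simp)] at hz
    rw [ShortComplex.moduleCat_exact_iff] at hz
    obtain ⟨g, hg⟩ := hz f hf
    rw [P.extMk_eq_zero_iff f (p+1+1) rfl hf p rfl]
    exact ⟨g, hg⟩

section LES

variable {S : ShortComplex (ModuleCat.{u} R)}

lemma van₂ (hS : S.ShortExact) {Y : ModuleCat.{u} R} {n : ℕ} (h₁ : Van S.X₁ Y n) (h₃ : Van S.X₃ Y n) :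
    Van S.X₂ Y n := by
  intro e
  obtain ⟨x, rfl⟩ := Abelian.Ext.contravariant_sequence_exact₂ hS Y e (h₁ _)
  rw [h₃ x, Abelian.Ext.comp_zero]

lemma van₁ (hS : S.ShortExact) {Y : ModuleCat.{u} R} {n : ℕ} (h₂ : Van S.X₂ Y n) (h₃ : Van S.X₃ Y (n+1)) :
    Van S.X₁ Y n := by
  intro e
  obtain ⟨x, rfl⟩ := Abelian.Ext.contravariant_sequence_exact₁ hS Y e (add_comm 1 n) (h₃ _)
  rw [h₂ x, Abelian.Ext.comp_zero]

lemma van₃ (hS : S.ShortExact) {Y : ModuleCat.{u} R} {n : ℕ} (h₁ : Van S.X₁ Y n) (h₂ : Van S.X₂ Y (n+1)) :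
    Van S.X₃ Y (n+1) := by
  intro e
  obtain ⟨x, rfl⟩ := Abelian.Ext.contravariant_sequence_exact₃ hS Y e (h₂ _) (add_comm 1 n)
  rw [h₁ x, Abelian.Ext.comp_zero]

lemma cvan₁ (hS : S.ShortExact) {X : ModuleCat.{u} R} {n : ℕ} (h₃ : Van X S.X₃ n) (h₂ : Van X S.X₂ (n+1)) :
    Van X S.X₁ (n+1) := by
  intro e
  obtain ⟨x, rfl⟩ := Abelian.Ext.covariant_sequence_exact₁ X hS e (h₂ _) rfl
  rw [h₃ x, Abelian.Ext.zero_comp]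

lemma cvan₃ (hS : S.ShortExact) {X : ModuleCat.{u} R} {n : ℕ} (h₂ : Van X S.X₂ n) (h₁ : Van X S.X₁ (n+1)) :
    Van X S.X₃ n := by
  intro e
  obtain ⟨x, rfl⟩ := Abelian.Ext.covariant_sequence_exact₃ X hS e rfl (h₁ _)
  rw [h₂ x, Abelian.Ext.zero_comp]

lemma extend_of_van (hS : S.ShortExact) {Y : ModuleCat.{u} R} (h : Van S.X₃ Y 1) (φ : S.X₁ ⟶ Y) :
    ∃ ψ : S.X₂ ⟶ Y, S.f ≫ ψ = φ := by
  obtain ⟨x, hx⟩ := Abelian.Ext.contravariant_sequence_exact₁ hS Y (Abelian.Ext.mk₀ φ)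
    (add_zero 1) (h _)
  obtain ⟨ψ, rfl⟩ := Abelian.Ext.homEquiv₀.symm.surjective x
  refine ⟨ψ, Abelian.Ext.homEquiv₀.symm.injective ?_⟩
  simpa using hx

end LES

lemma van_proj {X Y : ModuleCat.{u} R} [Module.Projective R X] {n : ℕ} (hn : 1 ≤ n) :
    Van X Y n := by
  obtain ⟨n, rfl⟩ := Nat.exists_eq_add_of_le' hn
  have : Projective X := (IsProjective.iff_projective X).mp ‹_›
  intro e
  exact Abelian.Ext.eq_zero_of_projective e

lemma van_retract {A B Y : ModuleCat.{u} R} (i : A ⟶ B) (r : B ⟶ A) (h : i ≫ r = 𝟙 A) {n : ℕ}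
    (hB : Van B Y n) : Van A Y n := by
  intro e
  have : (Abelian.Ext.mk₀ (i ≫ r)).comp e (zero_add n) = e := by rw [h]; simp
  rw [← this, ← Abelian.Ext.mk₀_comp_mk₀_assoc, hB ((Abelian.Ext.mk₀ r).comp e (zero_add n))]
  simp

lemma van_equiv {A B Y : ModuleCat.{u} R} (i : A ≃ₗ[R] B) {n : ℕ}
    (hB : Van B Y n) : Van A Y n :=
  van_retract i.toModuleIso.hom i.toModuleIso.inv i.toModuleIso.hom_inv_id hB

/-- short complex of a short exact sequence -/
abbrev mkS {A B C : Type u} [AddCommGroup A] [Module R A] [AddCommGroup B] [Module R B]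
    [AddCommGroup C] [Module R C] {f : A →ₗ[R] B} {g : B →ₗ[R] C} (h : IsShortExact R f g) :
    ShortComplex (ModuleCat.{u} R) :=
  ShortComplex.mk (ModuleCat.ofHom f) (ModuleCat.ofHom g) (by
    ext x; exact h.2.2.apply_apply_eq_zero x)

lemma mkS_exact {A B C : Type u} [AddCommGroup A] [Module R A] [AddCommGroup B] [Module R B]
    [AddCommGroup C] [Module R C] {f : A →ₗ[R] B} {g : B →ₗ[R] C} (h : IsShortExact R f g) :
    (mkS h).ShortExact where
  exact := ModuleCat.shortComplex_exact _ h.2.2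
  mono_f := (ModuleCat.mono_iff_injective _).2 h.1
  epi_g := (ModuleCat.epi_iff_surjective _).2 h.2.1

lemma van_pi {K Y : ModuleCat.{u} R} {a n : ℕ} (h : Van K Y n) :
    Van (ModuleCat.of R (Fin a → K)) Y n := by
  intro e
  let p (j : Fin a) : ModuleCat.of R (Fin a → K) ⟶ K := ModuleCat.ofHom (LinearMap.proj j)
  let i (j : Fin a) : K ⟶ ModuleCat.of R (Fin a → K) :=
    ModuleCat.ofHom (LinearMap.single R (fun _ => K) j)
  have hid : 𝟙 (ModuleCat.of R (Fin a → K)) = ∑ j, p j ≫ i j := by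
    ext x
    simp [p, i, ModuleCat.hom_sum]
  have : (Abelian.Ext.mk₀ (𝟙 (ModuleCat.of R (Fin a → K)))).comp e (zero_add n) = e := by simp
  rw [← this, hid, Abelian.Ext.mk₀_sum, Abelian.Ext.sum_comp]
  refine Finset.sum_eq_zero fun j _ => ?_
  rw [← Abelian.Ext.mk₀_comp_mk₀_assoc, h ((Abelian.Ext.mk₀ (i j)).comp e (zero_add n))]
  simp

lemma cvan_pi {X Y : ModuleCat.{u} R} {a n : ℕ} (h : Van X Y n) :
    Van X (ModuleCat.of R (Fin a → Y)) n := by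
  intro e
  let p (j : Fin a) : ModuleCat.of R (Fin a → Y) ⟶ Y := ModuleCat.ofHom (LinearMap.proj j)
  let i (j : Fin a) : Y ⟶ ModuleCat.of R (Fin a → Y) :=
    ModuleCat.ofHom (LinearMap.single R (fun _ => Y) j)
  have hid : 𝟙 (ModuleCat.of R (Fin a → Y)) = ∑ j, p j ≫ i j := by
    ext x
    simp [p, i, ModuleCat.hom_sum]
  have : e.comp (Abelian.Ext.mk₀ (𝟙 (ModuleCat.of R (Fin a → Y)))) (add_zero n) = e := by simp
  rw [← this, hid, Abelian.Ext.mk₀_sum, Abelian.Ext.comp_sum]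
  refine Finset.sum_eq_zero fun j _ => ?_
  rw [← Abelian.Ext.mk₀_comp_mk₀, ← Abelian.Ext.comp_assoc_of_third_deg_zero,
    h (e.comp (Abelian.Ext.mk₀ (p j)) (add_zero n))]
  simp

lemma van_of_injdim : ∀ (n : ℕ) (M : ModuleCat.{u} R), InjdimLE R n M →
    ∀ (X : ModuleCat.{u} R) (i : ℕ), n < i → Van X M i
  | 0, M, h, X, i, hi => by
    obtain ⟨i, rfl⟩ := Nat.exists_eq_add_of_le' hi
    have : Module.Injective R M := h
    have : Injective M := (Module.injective_iff_injective_object R M).mp h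
    intro e
    exact Abelian.Ext.eq_zero_of_injective e
  | n+1, M, h, X, i, hi => by
    obtain ⟨I, C, f, g, hI, hfg, hC⟩ := h
    obtain ⟨i, rfl⟩ := Nat.exists_eq_add_of_le' (show 1 ≤ i by omega)
    have : Injective I := (Module.injective_iff_injective_object R I).mp hI
    refine cvan₁ (mkS_exact hfg) (van_of_injdim n C hC X i (by omega)) ?_
    intro e
    exact @Abelian.Ext.eq_zero_of_injective _ _ _ _ _ _ _ this e

lemma injdim_of_van : ∀ (n : ℕ) (M : ModuleCat.{u} R),
    (∀ I : Ideal R, Van (ModuleCat.of R (R ⧸ I)) M (n+1)) → InjdimLE R n M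
  | 0, M, h => by
    refine Module.Baer.injective (fun I φ => ?_)
    have hs : IsShortExact R I.subtype I.mkQ :=
      ⟨I.injective_subtype, I.mkQ_surjective, LinearMap.exact_subtype_mkQ I⟩
    obtain ⟨ψ, hψ⟩ := extend_of_van (mkS_exact hs) (h I) (ModuleCat.ofHom φ)
    refine ⟨ψ.hom, fun x hx => ?_⟩
    exact congrArg (fun t => t.hom ⟨x, hx⟩) hψ
  | n+1, M, h => by
    let J := Injective.under M
    let ι : M ⟶ J := Injective.ι M
    have hι : Function.Injective ι := (ModuleCat.mono_iff_injective _).1 inferInstance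
    have hs : IsShortExact R ι.hom (LinearMap.range ι.hom).mkQ :=
      ⟨hι, Submodule.mkQ_surjective _, LinearMap.exact_map_mkQ_range _⟩
    refine ⟨J, ModuleCat.of R (J ⧸ LinearMap.range ι.hom), ι.hom, Submodule.mkQ _,
      (Module.injective_iff_injective_object R J).mpr
        (inferInstanceAs (Injective (Injective.under M))), hs, ?_⟩
    refine injdim_of_van n _ fun I => cvan₃ (mkS_exact hs) ?_ (h I)
    intro e
    exact Abelian.Ext.eq_zero_of_injective (I := Injective.under M) e

section Local

variable [IsNoetherianRing R] [IsLocalRing R]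

open IsLocalRing

set_option linter.unusedSectionVars false

lemma van_of_smul {X Y : ModuleCat.{u} R} [Module.Finite R X] [Module.Finite R Y] {i : ℕ}
    (h : ∀ e : Abelian.Ext X Y i, e ∈ (maximalIdeal R) • (⊤ : Submodule R (Abelian.Ext X Y i))) :
    Van X Y i := by
  have : (⊤ : Submodule R (Abelian.Ext X Y i)) = ⊥ := by
    refine Submodule.eq_bot_of_le_smul_of_le_jacobson_bot (maximalIdeal R) _ Module.Finite.fg_top
      (fun e _ => h e) (maximalIdeal_le_jacobson _)
  intro e
  have he : e ∈ (⊤ : Submodule R (Abelian.Ext X Y i)) := trivial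
  rw [this] at he
  exact he

lemma van_of_reg {X Y : ModuleCat.{u} R} [Module.Finite R X] [Module.Finite R Y] {i : ℕ} {x : R}
    (hx : x ∈ maximalIdeal R) (hreg : IsSMulRegular X x)
    (h : Van (ModuleCat.of R (X ⧸ x • (⊤ : Submodule R X))) Y (i+1)) : Van X Y i := by
  refine van_of_smul fun e => ?_
  obtain ⟨e', he'⟩ := Abelian.Ext.contravariant_sequence_exact₁ hreg.smulShortComplex_shortExact Y e
    (add_comm 1 i) (h _)
  have key : ∀ e' : Abelian.Ext X Y i,
      (Abelian.Ext.mk₀ (x • 𝟙 X)).comp e' (zero_add i) = x • e' := by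
    intro e'
    rw [Abelian.Ext.mk₀_smul, Abelian.Ext.smul_comp, Abelian.Ext.mk₀_id_comp]
  have h2 := key e'
  rw [← ModuleCat.smulShortComplex_f_eq_smul_id] at h2
  have h3 : e = x • (show Abelian.Ext X Y i from e') := he'.symm.trans h2
  rw [h3]
  exact Submodule.smul_mem_smul hx trivial

lemma exists_reg {N : Type u} [AddCommGroup N] [Module R N] [Module.Finite R N]
    (h : Subsingleton ((R ⧸ maximalIdeal R) →ₗ[R] N)) : ∃ x ∈ maximalIdeal R, IsSMulRegular N x := by
  obtain ⟨r, hr, hreg⟩ := IsSMulRegular.subsingleton_linearMap_iff.1 h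
  refine ⟨r, ?_, hreg⟩
  rwa [Ideal.annihilator_quotient] at hr

lemma exists_depth_zero (M : ModuleCat.{u} R) : ∀ (s c : ℕ) (N : Type u) [AddCommGroup N]
    [Module R N] [Module.Finite R N] [Nontrivial N], Module.supportDim R N = (s : WithBot ℕ∞) →
    (∀ i, c < i → Van (ModuleCat.of R N) M i) →
    ∃ (N' : ModuleCat.{u} R) (_ : Module.Finite R N') (f : (R ⧸ maximalIdeal R) →ₗ[R] N'),
      f ≠ 0 ∧ ∀ i, c + s < i → Van N' M i := by
  intro s
  induction s with
  | zero =>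
    intro c N _ _ _ _ hs hV
    by_cases hh : Subsingleton ((R ⧸ maximalIdeal R) →ₗ[R] N)
    · obtain ⟨x, hx, hreg⟩ := exists_reg hh
      have := Module.supportDim_quotSMulTop_succ_eq_supportDim hreg hx
      rw [hs] at this
      exfalso
      generalize Module.supportDim R (QuotSMulTop x N) = t at this
      induction t with
      | bot => simp at this
      | coe t =>
        induction t with
        | top => exact absurd this (by decide)
        | coe t => norm_cast at this
    · rw [not_subsingleton_iff_nontrivial] at hh
      obtain ⟨f, hf⟩ := exists_ne (0 : (R ⧸ maximalIdeal R) →ₗ[R] N)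
      exact ⟨ModuleCat.of R N, ‹_›, f, hf, fun i hi => hV i hi⟩
  | succ s ih => 
    intro c N _ _ _ _ hs hV
    by_cases hh : Subsingleton ((R ⧸ maximalIdeal R) →ₗ[R] N)
    · obtain ⟨x, hx, hreg⟩ := exists_reg hh
      have := Module.supportDim_quotSMulTop_succ_eq_supportDim hreg hx
      rw [hs] at this
      have h3 : Module.supportDim R (QuotSMulTop x N) = (s : WithBot ℕ∞) := by
        generalize Module.supportDim R (QuotSMulTop x N) = t at this
        induction t with
        | bot => exact absurd this.symm (WithBot.coe_ne_bot)
        | coe t =>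
          induction t with
          | top => 
            have h4 : (⊤ : ℕ∞) = ((s + 1 : ℕ) : ℕ∞) := WithBot.coe_injective this
            exact absurd h4.symm (ENat.natCast_ne_top _)
          | coe t => 
            norm_cast at this
            have : t = s := by omega
            rw [this]; rfl
      have hnt : Nontrivial (QuotSMulTop x N) := by
        rw [← Module.supportDim_ne_bot_iff_nontrivial R, h3]
        exact WithBot.coe_ne_bot
      obtain ⟨N', hN', f, hf, hV'⟩ := ih (c+1) (QuotSMulTop x N) h3 (fun i hi => by
        obtain ⟨i, rfl⟩ := Nat.exists_eq_add_of_le' (show 1 ≤ i by omega)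
        have hr : IsSMulRegular (ModuleCat.of R N) x := hreg
        exact van₃ hr.smulShortComplex_shortExact (hV i (by omega)) (hV (i+1) (by omega)))
      exact ⟨N', hN', f, hf, fun i hi => hV' i (by omega)⟩
    · rw [not_subsingleton_iff_nontrivial] at hh
      obtain ⟨f, hf⟩ := exists_ne (0 : (R ⧸ maximalIdeal R) →ₗ[R] N)
      exact ⟨ModuleCat.of R N, ‹_›, f, hf, fun i hi => hV i (by omega)⟩

lemma simple_inj {N : Type u} [AddCommGroup N] [Module R N]
    (f : (R ⧸ maximalIdeal R) →ₗ[R] N) (hf : f ≠ 0) : Function.Injective f := by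
  have : IsSimpleModule R (R ⧸ maximalIdeal R) :=
    isSimpleModule_iff_isCoatom.2 (Ideal.isMaximal_def.1 inferInstance)
  exact (LinearMap.injective_or_eq_zero f).resolve_right hf

/-- injective dimension at most the Krull dimension -/
lemma van_gt_dim {d : ℕ} (hd : ringKrullDim R = (d : WithBot (WithTop ℕ)))
    (M : ModuleCat.{u} R) [Module.Finite R M] {n : ℕ} (hn : InjdimLE R n M) :
    ∀ (i : ℕ), d < i → ∀ (X : ModuleCat.{u} R) [Module.Finite R X], Van X M i := by
  obtain ⟨N', hN', f, hf, hV⟩ := exists_depth_zero M d 0 R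
    (by rw [Module.supportDim_self_eq_ringKrullDim, hd]; rfl)
    (fun i hi => van_proj hi)
  have step : ∀ i, d < i → (∀ (X : ModuleCat.{u} R) [Module.Finite R X], Van X M (i+1)) →
      (∀ (X : ModuleCat.{u} R) [Module.Finite R X], Van X M i) := by
    intro i hi h
    have hk : Van (ModuleCat.of R (R ⧸ maximalIdeal R)) M i := by
      have hs : IsShortExact R f (LinearMap.range f).mkQ :=
        ⟨simple_inj f hf, Submodule.mkQ_surjective _, LinearMap.exact_map_mkQ_range _⟩
      exact van₁ (mkS_exact hs) (hV i (by omega)) (h (ModuleCat.of R (N' ⧸ LinearMap.range f)))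
    intro X hX
    change Van (ModuleCat.of R X) M i
    refine IsNoetherianRing.induction_on_isQuotientEquivQuotientPrime R hX
      (motive := fun N _ _ _ => Van (ModuleCat.of R N) M i) ?_ ?_ ?_
    · intro N _ _ _ _ 
      exact van_proj (by omega)
    · intro N _ _ _ p e
      refine van_equiv (B := ModuleCat.of R (R ⧸ p.1)) e ?_
      by_cases hp : maximalIdeal R ≤ p.1
      · have : p.1 = maximalIdeal R := le_antisymm (le_maximalIdeal p.2.ne_top) hp
        rw [this]
        exact hk
      · obtain ⟨x, hx, hxp⟩ := SetLike.not_le_iff_exists.1 hp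
        refine van_of_reg hx ?_ (h _)
        change IsSMulRegular (R ⧸ p.1) x
        refine (isSMulRegular_iff_right_eq_zero_of_smul).2 fun y hy => ?_
        obtain ⟨y, rfl⟩ := Ideal.Quotient.mk_surjective y
        have h2 : x * y ∈ p.1 := Ideal.Quotient.eq_zero_iff_mem.1 hy
        exact Ideal.Quotient.eq_zero_iff_mem.2 ((p.2.mem_or_mem h2).resolve_left hxp)
    · intro N₁ _ _ _ N₂ _ _ _ N₃ _ _ _ f g hf hg hfg h1 h3
      exact van₂ (mkS_exact ⟨hf, hg, hfg⟩) h1 h3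
  have main : ∀ t i, d < i → n < i + t → ∀ (X : ModuleCat.{u} R) [Module.Finite R X], Van X M i := by
    intro t
    induction t with
    | zero => intro i _ hi X _; exact van_of_injdim n M hn X i (by omega)
    | succ t ih => intro i hi hi'; exact step i hi (ih (i+1) (by omega) (by omega))
  intro i hi
  exact main n i hi (by omega)

lemma van_of_depth {d : ℕ} (M : ModuleCat.{u} R) [Module.Finite R M]
    (hM : ∀ (i : ℕ), d < i → ∀ (X : ModuleCat.{u} R) [Module.Finite R X], Van X M i) :
    ∀ (n : ℕ) (N : ModuleCat.{u} R) [Module.Finite R N],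
      (∀ i, i < n → Van (ModuleCat.of R (R ⧸ maximalIdeal R)) N i) →
      ∀ i, d < i + n → Van N M i := by
  intro n
  induction n with
  | zero => intro N _ _ i hi; exact hM i hi N
  | succ n ih =>
    intro N _ hN i hi
    have hsub : Subsingleton ((R ⧸ maximalIdeal R) →ₗ[R] N) := by
      refine subsingleton_of_forall_eq 0 fun f => ?_
      have := hN 0 (by omega) (Abelian.Ext.mk₀ (ModuleCat.ofHom f))
      rw [Abelian.Ext.mk₀_eq_zero_iff] at this
      exact congrArg ModuleCat.Hom.hom this
    obtain ⟨x, hx, hreg⟩ := exists_reg hsub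
    refine van_of_reg hx hreg ?_
    refine ih _ (fun j hj => ?_) (i+1) (by omega)
    exact cvan₃ hreg.smulShortComplex_shortExact (hN j (by omega)) (hN (j+1) (by omega))

/-- totally reflexive modules, in terms of `Van` -/
structure TR (X : ModuleCat.{u} R) : Prop where
  fin : Module.Finite R X
  bij : Function.Bijective (Module.Dual.eval R X)
  van : ∀ i, 1 ≤ i → Van X (ModuleCat.of R R) i
  dvan : ∀ i, 1 ≤ i → Van (ModuleCat.of R (Module.Dual R X)) (ModuleCat.of R R) i

lemma TR.of {X : ModuleCat.{u} R} (h : IsTotallyReflexive R X) : TR X :=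
  ⟨h.1, h.2.1, fun i hi => van_of_extVanish (h.2.2.1 i hi),
    fun i hi => van_of_extVanish (h.2.2.2 i hi)⟩

lemma TR.dual {X : ModuleCat.{u} R} (h : TR X) : TR (ModuleCat.of R (Module.Dual R X)) := by
  have := h.fin
  have : Module.IsReflexive R X := ⟨h.bij⟩
  refine ⟨?_, (inferInstance : Module.IsReflexive R (Module.Dual R X)).bijective_dual_eval',
    h.dvan, fun i hi => ?_⟩
  · obtain ⟨n, g, hg⟩ := Module.Finite.exists_fin' R X
    exact Module.Finite.of_injective (M := Module.Dual R X) (N := Module.Dual R (Fin n → R))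
      g.dualMap (LinearMap.dualMap_injective_of_surjective hg)
  · exact van_equiv (A := ModuleCat.of R (Module.Dual R (Module.Dual R X))) (B := X)
      (Module.evalEquiv R X).symm (h.van i hi)

lemma TR.dual_exact {X : ModuleCat.{u} R} (h : TR X) {n : ℕ} (g : (Fin n → R) →ₗ[R] X)
    (hg : Function.Surjective g) :
    IsShortExact R g.dualMap (LinearMap.ker g).subtype.dualMap := by
  have hs : IsShortExact R (LinearMap.ker g).subtype g :=
    ⟨Submodule.injective_subtype _, hg, LinearMap.exact_subtype_ker_map g⟩
  refine ⟨LinearMap.dualMap_injective_of_surjective hg, ?_, ?_⟩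
  · intro φ
    obtain ⟨ψ, hψ⟩ := extend_of_van (mkS_exact hs) (h.van 1 le_rfl)
      (ModuleCat.ofHom (Y := R) φ)
    exact ⟨ψ.hom, congrArg ModuleCat.Hom.hom hψ⟩
  · rw [LinearMap.exact_iff, LinearMap.range_dualMap_eq_dualAnnihilator_ker_of_surjective g hg]
    ext ψ
    rw [LinearMap.mem_ker, Submodule.mem_dualAnnihilator, LinearMap.ext_iff]
    constructor
    · intro hh w hw; exact hh ⟨w, hw⟩
    · intro hh w; exact hh w w.2

lemma TR.syz {X : ModuleCat.{u} R} (h : TR X) {n : ℕ} (g : (Fin n → R) →ₗ[R] X)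
    (hg : Function.Surjective g) : TR (ModuleCat.of R (LinearMap.ker g)) := by
  have hs : IsShortExact R (LinearMap.ker g).subtype g :=
    ⟨Submodule.injective_subtype _, hg, LinearMap.exact_subtype_ker_map g⟩
  have hd := h.dual_exact g hg
  refine ⟨?_, ⟨?_, ?_⟩, fun i hi => ?_, fun i hi => ?_⟩
  · change Module.Finite R (LinearMap.ker g)
    infer_instance
  · rw [injective_iff_map_eq_zero]
    intro l hl
    ext j
    exact congrArg (fun t : Module.Dual R (Module.Dual R (LinearMap.ker g)) =>
      t ((LinearMap.proj j : (Fin n → R) →ₗ[R] R) ∘ₗ (LinearMap.ker g).subtype)) hl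
  · intro θ
    change Module.Dual R (Module.Dual R (LinearMap.ker g)) at θ
    let y : Fin n → R := fun j =>
      θ ((LinearMap.proj j : (Fin n → R) →ₗ[R] R) ∘ₗ (LinearMap.ker g).subtype)
    have hy : ∀ ψ : Module.Dual R (Fin n → R),
        ψ y = θ ((LinearMap.ker g).subtype.dualMap ψ) := by
      intro ψ
      have h1 : ψ = ∑ j, ψ (Pi.single j 1) • (LinearMap.proj j : (Fin n → R) →ₗ[R] R) := by
        refine LinearMap.pi_ext' fun j => LinearMap.ext_ring ?_
        simp [Pi.single_apply]
      rw [h1]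
      simp only [map_sum, map_smul, LinearMap.sum_apply, LinearMap.smul_apply]
      rfl
    have hgy : g y = 0 := by
      apply h.bij.1
      rw [map_zero]
      ext χ
      change χ (g y) = 0
      have h2 := hy (g.dualMap χ)
      rw [hd.2.2.apply_apply_eq_zero, map_zero] at h2
      exact h2
    refine ⟨⟨y, hgy⟩, ?_⟩
    refine LinearMap.ext fun φ => ?_
    obtain ⟨ψ, rfl⟩ := hd.2.1 φ
    exact hy ψ
  · exact van₁ (mkS_exact hs) (van_proj (X := ModuleCat.of R (Fin n → R)) hi) (h.van (i+1) (by omega))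
  · obtain ⟨i, rfl⟩ := Nat.exists_eq_add_of_le' hi
    have hproj : Module.Projective R (ModuleCat.of R (Module.Dual R (Fin n → R))) :=
      inferInstanceAs (Module.Projective R (Module.Dual R (Fin n → R)))
    cases i with
    | succ i =>
      exact van₃ (mkS_exact hd) (h.dvan (i+1) (by omega)) (van_proj
        (X := ModuleCat.of R (Module.Dual R (Fin n → R))) (by omega))
    | zero =>
      intro e
      obtain ⟨x, rfl⟩ := Abelian.Ext.contravariant_sequence_exact₃ (mkS_exact hd) _ e
        (van_proj (X := ModuleCat.of R (Module.Dual R (Fin n → R))) (by omega) _) (add_comm 1 0)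
      obtain ⟨ξ, rfl⟩ := Abelian.Ext.homEquiv₀.symm.surjective x
      obtain ⟨x, hx⟩ := h.bij.2 ξ.hom
      obtain ⟨y, rfl⟩ := hg x
      have h3 : ξ = (mkS hd).f ≫ ModuleCat.ofHom (Module.Dual.eval R (Fin n → R) y) := by
        apply ModuleCat.hom_ext
        rw [← hx]
        rfl
      change (mkS_exact hd).extClass.comp (Abelian.Ext.mk₀ ξ) _ = 0
      rw [h3, ← Abelian.Ext.mk₀_comp_mk₀]
      exact (mkS_exact hd).extClass_comp_assoc _

lemma TR.co {X : ModuleCat.{u} R} (h : TR X) :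
    ∃ (P X' : ModuleCat.{u} R) (f : X →ₗ[R] P) (g : P →ₗ[R] X'),
      Module.Projective R P ∧ IsShortExact R f g ∧ TR X' := by
  have := h.dual.fin
  obtain ⟨n, g, hg⟩ := Module.Finite.exists_fin' R (ModuleCat.of R (Module.Dual R X))
  have hd := h.dual.dual_exact g hg
  have : Module.IsReflexive R X := ⟨h.bij⟩
  refine ⟨ModuleCat.of R (Module.Dual R (Fin n → R)),
    ModuleCat.of R (Module.Dual R (LinearMap.ker g)),
    g.dualMap ∘ₗ (Module.evalEquiv R X).toLinearMap, (LinearMap.ker g).subtype.dualMap,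
    inferInstanceAs (Module.Projective R (Module.Dual R (Fin n → R))), ?_, (h.dual.syz g hg).dual⟩
  refine ⟨hd.1.comp (Module.evalEquiv R X).injective, hd.2.1, ?_⟩
  intro y
  rw [hd.2.2 y]
  constructor
  · rintro ⟨x, rfl⟩
    exact ⟨(Module.evalEquiv R X).symm x,
      congrArg g.dualMap ((Module.evalEquiv R X).apply_symm_apply x)⟩
  · rintro ⟨x, rfl⟩
    exact ⟨_, rfl⟩

lemma TR.van_injdim (M : ModuleCat.{u} R) {n : ℕ} (hn : InjdimLE R n M) :
    ∀ (k : ℕ) (X : ModuleCat.{u} R), TR X → ∀ j, 1 ≤ j → n < j + k → Van X M j := by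
  intro k
  induction k with
  | zero => intro X _ j _ hj; exact van_of_injdim n M hn X j hj
  | succ k ih =>
    intro X hX j hj hk
    obtain ⟨P, X', f, g, hP, hs, hX'⟩ := hX.co
    exact van₁ (mkS_exact hs) (van_proj hj) (ih X' hX' (j+1) (by omega) (by omega))

/-- modules right orthogonal to the totally reflexive ones -/
def Orth (N : ModuleCat.{u} R) : Prop := ∀ X : ModuleCat.{u} R, TR X → Van X N 1

lemma Orth.factor {N X : ModuleCat.{u} R} (hN : Orth N) (hX : TR X) (φ : X ⟶ N) :
    ∃ (P : ModuleCat.{u} R) (_ : Module.Projective R P) (f : X ⟶ P) (ψ : P ⟶ N), f ≫ ψ = φ := by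
  obtain ⟨P, X', f, g, hP, hs, hX'⟩ := hX.co
  obtain ⟨ψ, hψ⟩ := extend_of_van (mkS_exact hs) (hN X' hX') φ
  exact ⟨P, hP, _, ψ, hψ⟩

lemma Orth.lift {N X F : ModuleCat.{u} R} (hN : Orth N) (hX : TR X) (φ : X ⟶ N)
    (g : F →ₗ[R] N) (hg : Function.Surjective g) :
    ∃ ψ : X ⟶ F, ψ ≫ ModuleCat.ofHom g = φ := by
  obtain ⟨P, hP, f, ψ, rfl⟩ := hN.factor hX φ
  obtain ⟨χ, hχ⟩ := Module.projective_lifting_property g ψ.hom hg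
  refine ⟨f ≫ ModuleCat.ofHom χ, ?_⟩
  apply ModuleCat.hom_ext
  ext x
  exact LinearMap.congr_fun hχ (f.hom x)

lemma Orth.syz {N : ModuleCat.{u} R} (hN : Orth N) {n : ℕ} (g : (Fin n → R) →ₗ[R] N)
    (hg : Function.Surjective g) : Orth (ModuleCat.of R (LinearMap.ker g)) := by
  have hs : IsShortExact R (LinearMap.ker g).subtype g :=
    ⟨Submodule.injective_subtype _, hg, LinearMap.exact_subtype_ker_map g⟩
  intro X hX e
  obtain ⟨x, rfl⟩ := Abelian.Ext.covariant_sequence_exact₁ X (mkS_exact hs) e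
    (cvan_pi (Y := ModuleCat.of R R) (hX.van 1 le_rfl) _) (zero_add 1)
  obtain ⟨ξ, rfl⟩ := Abelian.Ext.homEquiv₀.symm.surjective x
  obtain ⟨ψ, hψ⟩ := hN.lift (F := ModuleCat.of R (Fin n → R)) hX ξ g hg
  change (Abelian.Ext.mk₀ ξ).comp _ _ = 0
  rw [← hψ, ← Abelian.Ext.mk₀_comp_mk₀, Abelian.Ext.comp_assoc]
  swap
  · rfl
  · rw [(mkS_exact hs).comp_extClass]
    simp
  · rfl

lemma gdim_comp_zero : ∀ (m : ℕ) (G : ModuleCat.{u} R), GdimLE R m G →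
    ∀ (N : ModuleCat.{u} R) [Module.Finite R N], Orth N → ∀ (π : G ⟶ N) (Y : ModuleCat.{u} R)
      (i : ℕ), m < i → ∀ e : Abelian.Ext N Y i,
      (Abelian.Ext.mk₀ π).comp e (zero_add i) = 0 := by
  intro m
  induction m with
  | zero =>
    intro G hG N _ hN π Y i hi e
    obtain ⟨P, hP, f, ψ, rfl⟩ := hN.factor (TR.of hG) π
    rw [← Abelian.Ext.mk₀_comp_mk₀_assoc, van_proj (X := P) hi
      ((Abelian.Ext.mk₀ ψ).comp e (zero_add i))]
    simp
  | succ m ih =>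
    intro G hG N hfin hN π Y i hi e
    obtain ⟨X, K, f, g, hX, hs, hK⟩ := hG
    obtain ⟨n, p, hp⟩ := Module.Finite.exists_fin' R N
    have hs' : IsShortExact R (LinearMap.ker p).subtype p :=
      ⟨Submodule.injective_subtype _, hp, LinearMap.exact_subtype_ker_map p⟩
    obtain ⟨α, hα⟩ := hN.lift (F := ModuleCat.of R (Fin n → R)) (TR.of hX)
      (ModuleCat.ofHom g ≫ π) p hp
    have hα' : ∀ x, p (α.hom x) = π.hom (g x) := fun x =>
      congrArg (fun t => t.hom x) hα
    let β : K →ₗ[R] LinearMap.ker p := LinearMap.codRestrict _ (α.hom ∘ₗ f) (fun x => by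
      rw [LinearMap.mem_ker]
      change p (α.hom (f x)) = 0
      rw [hα', hs.2.2.apply_apply_eq_zero, map_zero])
    let τ : mkS hs ⟶ mkS hs' :=
      { τ₁ := ModuleCat.ofHom β
        τ₂ := α
        τ₃ := π
        comm₁₂ := by ext x; rfl
        comm₂₃ := hα }
    obtain ⟨i, rfl⟩ := Nat.exists_eq_add_of_le' (show 1 ≤ i by omega)
    obtain ⟨x, rfl⟩ := Abelian.Ext.contravariant_sequence_exact₃ (mkS_exact hs') Y e
      (van_proj (X := ModuleCat.of R (Fin n → R)) (by omega) _) (add_comm 1 i)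
    have hnat := ShortComplex.ShortExact.extClass_naturality (mkS_exact hs) (mkS_exact hs') τ
    change _ = (Abelian.Ext.mk₀ π).comp _ _ at hnat
    have h0 := ih K hK (ModuleCat.of R (LinearMap.ker p)) (hN.syz p hp) (ModuleCat.ofHom β) Y i
      (by omega) x
    have h1 := Abelian.Ext.comp_assoc (Abelian.Ext.mk₀ π) (mkS_exact hs').extClass x
      (zero_add 1) (add_comm 1 i) (a := i + 1) (by omega)
    refine h1.symm.trans ?_
    rw [← hnat, Abelian.Ext.comp_assoc_of_second_deg_zero]
    refine (congrArg (fun t => (mkS_exact hs).extClass.comp t (add_comm 1 i)) h0).trans ?_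
    exact Abelian.Ext.comp_zero _ _ _ _ _

lemma exists_surj_residue (M : Type u) [AddCommGroup M] [Module R M] [Module.Finite R M]
    [Nontrivial M] : ∃ q : M →ₗ[R] (R ⧸ maximalIdeal R), Function.Surjective q := by
  obtain ⟨N, hN, _⟩ := (eq_top_or_exists_le_coatom (⊥ : Submodule R M)).resolve_left bot_ne_top
  have : IsSimpleModule R (M ⧸ N) := isSimpleModule_iff_isCoatom.2 hN
  obtain ⟨I, hI, ⟨e⟩⟩ := isSimpleModule_iff_quot_maximal.1 this
  rw [IsLocalRing.eq_maximalIdeal hI] at e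
  exact ⟨e.toLinearMap ∘ₗ N.mkQ, e.surjective.comp N.mkQ_surjective⟩

lemma comp_mem_smul {X : ModuleCat.{u} R} {n i : ℕ} (φ : (Fin n → R) →ₗ[R] R)
    (hφ : ∀ v, φ v ∈ maximalIdeal R) (e : Abelian.Ext X (ModuleCat.of R (Fin n → R)) i) :
    e.comp (Abelian.Ext.mk₀ (ModuleCat.ofHom φ)) (add_zero i) ∈
      maximalIdeal R • (⊤ : Submodule R (Abelian.Ext X (ModuleCat.of R R) i)) := by
  have h1 : ModuleCat.ofHom φ = ∑ j, φ (Pi.single j 1) •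
      ModuleCat.ofHom (LinearMap.proj j : (Fin n → R) →ₗ[R] R) := by
    apply ModuleCat.hom_ext
    refine LinearMap.pi_ext' fun j => LinearMap.ext_ring ?_
    simp [Pi.single_apply, ModuleCat.hom_sum]
  rw [h1, Abelian.Ext.mk₀_sum, Abelian.Ext.comp_sum]
  refine Submodule.sum_mem _ fun j _ => ?_
  rw [Abelian.Ext.mk₀_smul, Abelian.Ext.comp_smul]
  exact Submodule.smul_mem_smul (hφ _) trivial

lemma ker_exact {A B : Type u} [AddCommGroup A] [Module R A] [AddCommGroup B] [Module R B]
    (g : A →ₗ[R] B) (hg : Function.Surjective g) : IsShortExact R (LinearMap.ker g).subtype g :=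
  ⟨Submodule.injective_subtype _, hg, LinearMap.exact_subtype_ker_map g⟩

lemma descend (M : ModuleCat.{u} R) [Module.Finite R M] [Nontrivial M] {i : ℕ} (hMM : Van M M i)
    (h : ∀ (Y : ModuleCat.{u} R) [Module.Finite R Y], Van M Y (i+1)) :
    ∀ (Y : ModuleCat.{u} R) [Module.Finite R Y], Van M Y i := by
  obtain ⟨q, hq⟩ := exists_surj_residue (R := R) M
  have hk : Van M (ModuleCat.of R (R ⧸ maximalIdeal R)) i :=
    cvan₃ (mkS_exact (ker_exact q hq)) hMM (h (ModuleCat.of R (LinearMap.ker q)))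
  have hR : Van M (ModuleCat.of R R) i := by
    refine van_of_smul fun e => ?_
    have hs : IsShortExact R (maximalIdeal R).subtype (maximalIdeal R).mkQ :=
      ⟨Submodule.injective_subtype _, Submodule.mkQ_surjective _, LinearMap.exact_subtype_mkQ _⟩
    obtain ⟨x₁, hx₁⟩ := Abelian.Ext.covariant_sequence_exact₂ M (mkS_exact hs) e (hk _)
    obtain ⟨n, p, hp⟩ := Module.Finite.exists_fin' R (maximalIdeal R)
    obtain ⟨x, hx⟩ := Abelian.Ext.covariant_sequence_exact₃ M (mkS_exact (ker_exact p hp)) x₁ rfl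
      (h (ModuleCat.of R (LinearMap.ker p)) _)
    have : e = Abelian.Ext.comp x (Abelian.Ext.mk₀ (ModuleCat.ofHom
        ((maximalIdeal R).subtype ∘ₗ p))) (add_zero i) := by
      rw [ModuleCat.ofHom_comp, ← Abelian.Ext.mk₀_comp_mk₀]
      refine Eq.trans ?_ (Abelian.Ext.comp_assoc_of_third_deg_zero _ _ _ _)
      exact hx₁.symm.trans (congrArg (fun t => Abelian.Ext.comp t _ _) hx.symm)
    rw [this]
    exact comp_mem_smul _ (fun v => (p v).2) _
  intro Y _
  obtain ⟨n, p, hp⟩ := Module.Finite.exists_fin' R Y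
  exact cvan₃ (mkS_exact (ker_exact p hp)) (cvan_pi (Y := ModuleCat.of R R) hR)
    (h (ModuleCat.of R (LinearMap.ker p)))

lemma gor_of_pd (M : ModuleCat.{u} R) [Module.Finite R M] [Nontrivial M]
    (hpd : ∀ (Y : ModuleCat.{u} R) [Module.Finite R Y], Van M Y 2)
    (X : ModuleCat.{u} R) [Module.Finite R X] {i : ℕ} (hX : Van X M i) :
    Van X (ModuleCat.of R R) i := by
  obtain ⟨q, hq⟩ := exists_surj_residue (R := R) M
  obtain ⟨n, p, hp⟩ := Module.Finite.exists_fin' R M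
  have hN1 : ∀ (Y : ModuleCat.{u} R) [Module.Finite R Y],
      Van (ModuleCat.of R (LinearMap.ker p)) Y 1 := fun Y _ =>
    van₁ (mkS_exact (ker_exact p hp)) (van_proj (X := ModuleCat.of R (Fin n → R)) le_rfl) (hpd Y)
  obtain ⟨b, q', hq'⟩ := Module.Finite.exists_fin' R (LinearMap.ker p)
  obtain ⟨s, hs⟩ := Abelian.Ext.covariant_sequence_exact₃ (ModuleCat.of R (LinearMap.ker p))
    (mkS_exact (ker_exact q' hq')) (Abelian.Ext.mk₀ (𝟙 _)) (zero_add 1)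
    (hN1 (ModuleCat.of R (LinearMap.ker q')) _)
  obtain ⟨l, hl⟩ := Module.projective_lifting_property (maximalIdeal R).mkQ (q ∘ₗ p)
    (Submodule.mkQ_surjective _)
  have hl' : ∀ v, (maximalIdeal R).mkQ (l v) = q (p v) := fun v => LinearMap.congr_fun hl v
  obtain ⟨v, hv⟩ := (hq.comp hp) ((maximalIdeal R).mkQ 1)
  have hvu : IsUnit (l v) := by
    by_contra hcon
    have h1 : l v ∈ maximalIdeal R := hcon
    have h2 : (maximalIdeal R).mkQ (l v) = (maximalIdeal R).mkQ 1 := (hl' v).trans hv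
    have h3 : (maximalIdeal R).mkQ (l v) = 0 := by
      rw [← LinearMap.mem_ker, Submodule.ker_mkQ]; exact h1
    rw [h3, eq_comm, ← LinearMap.mem_ker, Submodule.ker_mkQ] at h2
    exact (Ideal.ne_top_iff_one _).1 (maximalIdeal.isMaximal R).ne_top h2
  obtain ⟨c, hc⟩ := hvu.exists_left_inv
  let ι : R →ₗ[R] (Fin n → R) := LinearMap.toSpanSingleton R _ (c • v)
  have hι : l ∘ₗ ι = LinearMap.id := by
    refine LinearMap.ext_ring ?_
    simp [ι, hc]
  have hmem : ∀ w, (l ∘ₗ (LinearMap.ker p).subtype ∘ₗ q') w ∈ maximalIdeal R := by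
    intro w
    rw [← Submodule.ker_mkQ (maximalIdeal R), LinearMap.mem_ker]
    change (maximalIdeal R).mkQ (l (q' w).1) = 0
    rw [hl', (q' w).2, map_zero]
  refine van_of_smul fun e => ?_
  obtain ⟨y, hy⟩ := Abelian.Ext.covariant_sequence_exact₂ X (mkS_exact (ker_exact p hp))
    (e.comp (Abelian.Ext.mk₀ (ModuleCat.ofHom ι)) (add_zero i)) (hX _)
  have h1 : e = Abelian.Ext.comp (e.comp (Abelian.Ext.mk₀ (ModuleCat.ofHom ι)) (add_zero i))
      (Abelian.Ext.mk₀ (ModuleCat.ofHom l)) (add_zero i) := by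
    rw [Abelian.Ext.comp_assoc_of_third_deg_zero, Abelian.Ext.mk₀_comp_mk₀,
      ← ModuleCat.ofHom_comp, hι]
    exact (Abelian.Ext.comp_mk₀_id e).symm
  have h2 : y = Abelian.Ext.comp (Abelian.Ext.comp y s (add_zero i))
      (Abelian.Ext.mk₀ (ModuleCat.ofHom q')) (add_zero i) := by
    rw [Abelian.Ext.comp_assoc_of_third_deg_zero]
    refine Eq.trans (Abelian.Ext.comp_mk₀_id y).symm ?_
    exact (congrArg (fun t => Abelian.Ext.comp y t _) hs).symm
  have h3 : e = Abelian.Ext.comp (Abelian.Ext.comp y s (add_zero i))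
      (Abelian.Ext.mk₀ (ModuleCat.ofHom (l ∘ₗ (LinearMap.ker p).subtype ∘ₗ q'))) (add_zero i) := by
    rw [ModuleCat.ofHom_comp, ModuleCat.ofHom_comp, ← Abelian.Ext.mk₀_comp_mk₀,
      ← Abelian.Ext.mk₀_comp_mk₀, ← Abelian.Ext.comp_assoc_of_third_deg_zero,
      ← Abelian.Ext.comp_assoc_of_third_deg_zero]
    refine h1.trans ?_
    refine congrArg (fun t => Abelian.Ext.comp t _ _) (hy.symm.trans ?_)
    exact congrArg (fun t => Abelian.Ext.comp t _ _) h2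
  rw [h3]
  exact comp_mem_smul _ hmem _

lemma van_syz {M : ModuleCat.{u} R} : ∀ (n : ℕ) (W K : ModuleCat.{u} R), IsSyzygy R n W K →
    (∀ j, 1 ≤ j → Van K M j) → ∀ j, 1 ≤ j → Van W M j
  | 0, W, K, h, hK, j, hj => by
    obtain ⟨e⟩ := h
    exact van_equiv e (hK j hj)
  | n + 1, W, K, h, hK, j, hj => by
    obtain ⟨W', F, f, g, hF, _, hs, hW⟩ := h
    exact van_syz n W W' hW (fun j hj => van₁ (mkS_exact hs) (van_proj hj) (hK (j+1) (by omega))) j hj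

lemma van_syz' {M : ModuleCat.{u} R} (n : ℕ) (hn : 1 ≤ n) (W K : ModuleCat.{u} R)
    (h : IsSyzygy R n W K) (hK : ∀ j, 2 ≤ j → Van K M j) : ∀ j, 1 ≤ j → Van W M j := by
  obtain ⟨n, rfl⟩ := Nat.exists_eq_add_of_le' hn
  obtain ⟨W', F, f, g, hF, _, hs, hW⟩ := h
  exact van_syz n W W' hW (fun j hj => van₁ (mkS_exact hs) (van_proj hj) (hK (j+1) (by omega)))

lemma reducing_step {M K L : ModuleCat.{u} R} {a b n : ℕ} (ha : 1 ≤ a) (hn : 1 ≤ n)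
    (h : ReducingStep R K L a b n) (hK : ∀ j, 2 ≤ j → Van K M j)
    (hr : ∃ (ι : M ⟶ K) (π : K ⟶ M), ι ≫ π = 𝟙 M) :
    (∀ j, 2 ≤ j → Van L M j) ∧ ∃ (ι : M ⟶ L) (π : L ⟶ M), ι ≫ π = 𝟙 M := by
  obtain ⟨W, f, g, hW, hs⟩ := h
  obtain ⟨ι, π, hιπ⟩ := hr
  have hW' := van_syz' n hn W K hW hK
  refine ⟨fun j hj => van₂ (mkS_exact hs) (van_pi (hK j hj)) (van_pi (hW' j (by omega))), ?_⟩
  let z : Fin a := ⟨0, ha⟩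
  obtain ⟨ψ, hψ⟩ := extend_of_van (mkS_exact hs) (van_pi (hW' 1 le_rfl))
    (ModuleCat.ofHom (LinearMap.proj z : (Fin a → K) →ₗ[R] K) ≫ π)
  refine ⟨ι ≫ ModuleCat.ofHom (LinearMap.single R (fun _ => K) z) ≫ (mkS hs).f, ψ, ?_⟩
  rw [Category.assoc, Category.assoc, hψ, ← hιπ]
  ext x
  simp

theorem main_aux {d : ℕ} (hd : ringKrullDim R = (d : WithBot (WithTop ℕ)))
    (M : ModuleCat.{u} R) [Module.Finite R M] [Nontrivial M]
    (hinj : ∃ n : ℕ, InjdimLE R n M)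
    (hr : rGdim R M ≠ ⊤)
    (hdepth : ((d - 1 : ℕ) : ℕ∞) ≤ depth R M) :
    IsGorensteinRing R := by
  obtain ⟨n, hn⟩ := hinj
  have hgt := van_gt_dim hd M hn
  have hkM : ∀ i, i < d - 1 → Van (ModuleCat.of R (R ⧸ maximalIdeal R)) M i := by
    intro i hi
    by_contra hcon
    have h1 : depth R M ≤ (i : ℕ∞) :=
      sInf_le ⟨i, rfl, fun h => hcon (van_of_extVanish h)⟩
    have h2 := hdepth.trans h1
    rw [Nat.cast_le] at h2
    omega
  have hMM : ∀ i, 2 ≤ i → Van M M i := fun i hi =>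
    van_of_depth M hgt (d-1) M hkM i (by omega)
  have hred : ∃ r, HasReducingSeq R (fun N => ∃ m : ℕ, GdimLE R m N) M r := by
    by_contra hcon
    apply hr
    refine sInf_eq_top.2 ?_
    rintro _ ⟨r, rfl, hh⟩
    exact absurd ⟨r, hh⟩ hcon
  obtain ⟨r, K, a, b, m, hK0, hKf, hstep, t, hG⟩ := hred
  have hall : ∀ i : Fin (r+1), (∀ j, 2 ≤ j → Van (K i) M j) ∧
      ∃ (ι : M ⟶ K i) (π : K i ⟶ M), ι ≫ π = 𝟙 M := by
    intro i
    induction i using Fin.induction with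
    | zero =>
      rw [hK0]
      exact ⟨hMM, 𝟙 M, 𝟙 M, by simp⟩
    | succ i ih =>
      obtain ⟨h1, h2, h3, h4⟩ := hstep i
      exact reducing_step h1 h3 h4 ih.1 ih.2
  obtain ⟨_, ι, π, hιπ⟩ := hall (Fin.last r)
  have horth : Orth M := fun X hX => TR.van_injdim M hn n X hX 1 le_rfl (by omega)
  have hbig : ∀ i, t < i → ∀ Y : ModuleCat.{u} R, Van M Y i := by
    intro i hi Y e
    have h0 := gdim_comp_zero t _ hG M horth π Y i hi e
    have : (Abelian.Ext.mk₀ (ι ≫ π)).comp e (zero_add i) = e := by rw [hιπ]; simp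
    rw [← this, ← Abelian.Ext.mk₀_comp_mk₀_assoc, h0]
    simp
  have hdesc : ∀ s i, 2 ≤ i → t < i + s → ∀ (Y : ModuleCat.{u} R) [Module.Finite R Y],
      Van M Y i := by
    intro s
    induction s with
    | zero => intro i _ hi Y _; exact hbig i hi Y
    | succ s ih =>
      intro i hi hi'
      exact descend M (hMM i hi) (ih (i+1) (by omega) (by omega))
  have hpd := hdesc t 2 le_rfl (by omega)
  refine ⟨d, injdim_of_van d _ fun I => ?_⟩
  exact gor_of_pd M hpd _ (hgt (d+1) (by omega) _)

end Local

end Aux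

theorem stmt4 (R : Type u) [CommRing R] [IsNoetherianRing R] [IsLocalRing R]
    (d : ℕ) (hd : ringKrullDim R = (d : WithBot (WithTop ℕ)))
    (M : Type u) [AddCommGroup M] [Module R M] [Module.Finite R M] [Nontrivial M]
    (hinj : ∃ n : ℕ, InjdimLE R n (ModuleCat.of R M))
    (hr : rGdim R (ModuleCat.of R M) ≠ ⊤)
    (hdepth : ((d - 1 : ℕ) : ℕ∞) ≤ depth R (ModuleCat.of R M)) :
    IsGorensteinRing R := by
  have : Module.Finite R (ModuleCat.of R M) := ‹_›
  have : Nontrivial (ModuleCat.of R M) := ‹_›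
  exact main_aux hd (ModuleCat.of R M) hinj hr hdepth
end

section
/- Let R be a one-dimensional commutative Noetherian local ring and let M be a nonzero finitely generated R-module with finite injective dimension. If M has finite reducing Gorenstein dimension, then R is Gorenstein. -/
open CategoryTheory Pointwise

universe u

variable (R : Type u) [CommRing R]

section ExtBasics

variable {R}

open Abelian IsLocalRing

/-- Vanishing of `Ext` (in the derived category sense). -/
def EV (X Y : Type u) [AddCommGroup X] [Module R X]
    [AddCommGroup Y] [Module R Y] (n : ℕ) : Prop :=
  ∀ e : Abelian.Ext (ModuleCat.of R X) (ModuleCat.of R Y) n, e = 0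

variable {A B C X Y : Type u} [AddCommGroup A] [Module R A] [AddCommGroup B] [Module R B]
  [AddCommGroup C] [Module R C] [AddCommGroup X] [Module R X] [AddCommGroup Y] [Module R Y]

lemma IsShortExact.zero {f : A →ₗ[R] B} {g : B →ₗ[R] C} (h : IsShortExact R f g) :
    ModuleCat.ofHom f ≫ ModuleCat.ofHom g = 0 := by
  ext x
  exact (h.2.2 (f x)).2 ⟨x, rfl⟩

lemma IsShortExact.se {f : A →ₗ[R] B} {g : B →ₗ[R] C} (h : IsShortExact R f g) :
    (ShortComplex.mk (ModuleCat.ofHom f) (ModuleCat.ofHom g) h.zero).ShortExact :=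
  ModuleCat.shortComplex_shortExact _ h.2.2 h.1 h.2.1

lemma ev_X3 {f : A →ₗ[R] B} {g : B →ₗ[R] C} (h : IsShortExact R f g) {n : ℕ}
    (hA : EV (R := R) A Y n) (hB : EV (R := R) B Y (n + 1)) : EV (R := R) C Y (n + 1) := by
  intro e
  obtain ⟨x, rfl⟩ := Ext.contravariant_sequence_exact₃ h.se _ e (hB _) (add_comm 1 n)
  rw [hA x, Ext.comp_zero]

lemma ev_X1 {f : A →ₗ[R] B} {g : B →ₗ[R] C} (h : IsShortExact R f g) {n : ℕ}
    (hB : EV (R := R) B Y n) (hC : EV (R := R) C Y (n + 1)) : EV (R := R) A Y n := by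
  intro e
  obtain ⟨x, rfl⟩ := Ext.contravariant_sequence_exact₁ h.se _ e (add_comm 1 n) (hC _)
  rw [hB x, Ext.comp_zero]

lemma ev_X2 {f : A →ₗ[R] B} {g : B →ₗ[R] C} (h : IsShortExact R f g) {n : ℕ}
    (hA : EV (R := R) A Y n) (hC : EV (R := R) C Y n) : EV (R := R) B Y n := by
  intro e
  obtain ⟨x, rfl⟩ := Ext.contravariant_sequence_exact₂ h.se _ e (hA _)
  rw [hC x, Ext.comp_zero]

lemma ev_proj [Module.Projective R X] (n : ℕ) : EV (R := R) X Y (n + 1) := by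
  intro e
  have : Projective (ModuleCat.of R X) := (IsProjective.iff_projective X).1 inferInstance
  exact Ext.eq_zero_of_projective e

lemma ev_subsingleton [Subsingleton X] (n : ℕ) : EV (R := R) X Y n := by
  intro e
  have hz : Limits.IsZero (ModuleCat.of R X) := ModuleCat.isZero_of_subsingleton _
  rw [← e.mk₀_id_comp, hz.eq_of_src (𝟙 _) 0, Ext.mk₀_zero, Ext.zero_comp]

lemma ses_equiv {X' : Type u} [AddCommGroup X'] [Module R X'] (e : X ≃ₗ[R] X') :
    IsShortExact R (e.toLinearMap) (0 : X' →ₗ[R] PUnit.{u+1}) :=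
  ⟨e.injective, fun _ => ⟨0, rfl⟩, fun x => ⟨fun _ => e.surjective x, fun _ => rfl⟩⟩

lemma ev_equiv {X' : Type u} [AddCommGroup X'] [Module R X'] (e : X ≃ₗ[R] X') {n : ℕ}
    (h : EV (R := R) X Y n) : EV (R := R) X' Y n :=
  ev_X2 (ses_equiv e) h (ev_subsingleton n)

lemma ev_extend {f : A →ₗ[R] B} {g : B →ₗ[R] C} (h : IsShortExact R f g)
    (hC : EV (R := R) C Y 1) (φ : A →ₗ[R] Y) : ∃ ψ : B →ₗ[R] Y, ψ ∘ₗ f = φ := by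
  obtain ⟨x, hx⟩ := Ext.contravariant_sequence_exact₁ h.se _
    (Ext.mk₀ (ModuleCat.ofHom φ)) (add_comm 1 0) (hC _)
  obtain ⟨y, rfl⟩ := Ext.addEquiv₀.symm.surjective x
  simp only [Ext.addEquiv₀_symm_apply, Ext.mk₀_comp_mk₀] at hx
  have h2 := Ext.addEquiv₀.symm.injective (a₁ := ModuleCat.ofHom f ≫ y)
    (a₂ := ModuleCat.ofHom φ) (by simpa using hx)
  refine ⟨y.hom, ?_⟩
  ext a
  exact congrArg (fun k => k.hom a) h2

lemma ev_one_of_extend {f : A →ₗ[R] B} {g : B →ₗ[R] C} (h : IsShortExact R f g)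
    (hB : EV (R := R) B Y 1) (hs : ∀ φ : A →ₗ[R] Y, ∃ ψ : B →ₗ[R] Y, ψ ∘ₗ f = φ) :
    EV (R := R) C Y 1 := by
  intro e
  obtain ⟨x, rfl⟩ := Ext.contravariant_sequence_exact₃ h.se _ e (hB _) (add_comm 1 0)
  obtain ⟨y, rfl⟩ := Ext.addEquiv₀.symm.surjective x
  obtain ⟨ψ, hψ⟩ := hs y.hom
  have : y = ModuleCat.ofHom f ≫ ModuleCat.ofHom ψ := by
    ext a
    exact (LinearMap.congr_fun hψ a).symm
  rw [Ext.addEquiv₀_symm_apply, this, ← Ext.mk₀_comp_mk₀, h.se.extClass_comp_assoc]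

lemma ext_nakayama {E : Type*} [AddCommGroup E] [Module R E] [IsLocalRing R]
    [Module.Finite R E] {x : R} (hx : x ∈ maximalIdeal R) (h : ∀ e : E, ∃ e', x • e' = e) (e : E) :
    e = 0 := by
  have hle : (⊤ : Submodule R E) ≤ maximalIdeal R • (⊤ : Submodule R E) := by
    intro e _
    obtain ⟨e', rfl⟩ := h e
    exact Submodule.smul_mem_smul hx trivial
  have := Submodule.eq_bot_of_le_smul_of_le_jacobson_bot (maximalIdeal R) ⊤
    Module.Finite.fg_top hle (IsLocalRing.maximalIdeal_le_jacobson _)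
  have h2 : e ∈ (⊤ : Submodule R E) := trivial
  rw [this] at h2
  simpa using h2

lemma ev_nakayama [IsNoetherianRing R] [IsLocalRing R] [Module.Finite R A] [Module.Finite R Y]
    {x : R} (hx : x ∈ maximalIdeal R) {g : A →ₗ[R] C}
    (h : IsShortExact R (x • LinearMap.id : A →ₗ[R] A) g) {n : ℕ}
    (hC : EV (R := R) C Y (n + 1)) : EV (R := R) A Y n := by
  intro e
  have : Module.Finite R (ModuleCat.of R A) := ‹_›
  have : Module.Finite R (ModuleCat.of R Y) := ‹_›
  refine ext_nakayama (E := Abelian.Ext (ModuleCat.of R A) (ModuleCat.of R Y) n) hx ?_ e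
  intro e
  obtain ⟨y, rfl⟩ := Ext.contravariant_sequence_exact₁ h.se _ e (add_comm 1 n) (hC _)
  refine ⟨y, ?_⟩
  have : ModuleCat.ofHom (x • LinearMap.id : A →ₗ[R] A) = x • 𝟙 (ModuleCat.of R A) := rfl
  dsimp only
  rw [this, Ext.mk₀_smul, Ext.smul_comp, Ext.mk₀_id_comp]

lemma ev_of_extVanish {n : ℕ} (h : ExtVanish R X Y (n + 1)) : EV (R := R) X Y (n + 1) := by
  intro e
  let P := projectiveResolution (ModuleCat.of R X)
  obtain ⟨f, hf, rfl⟩ := P.extMk_surjective e (n + 2) rfl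
  rw [P.extMk_eq_zero_iff f (n + 2) rfl hf n rfl]
  have hz : Limits.IsZero (((P.complex.linearYonedaObj R (ModuleCat.of R Y))).homology (n + 1)) := by
    refine Limits.IsZero.of_iso ?_ (P.isoExt (R := R) (n + 1) (ModuleCat.of R Y)).symm
    have : Subsingleton _ := h
    exact ModuleCat.isZero_of_subsingleton _
  rw [← HomologicalComplex.exactAt_iff_isZero_homology,
    HomologicalComplex.exactAt_iff' _ n (n + 1) (n + 2) (by simp) (by simp),
    ShortComplex.moduleCat_exact_iff] at hz
  obtain ⟨g, hg⟩ := hz f hf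
  exact ⟨g, hg⟩

end ExtBasics
section Inj

variable {R}

open Abelian IsLocalRing

variable {A B C X Y : Type u} [AddCommGroup A] [Module R A] [AddCommGroup B] [Module R B]
  [AddCommGroup C] [Module R C] [AddCommGroup X] [Module R X] [AddCommGroup Y] [Module R Y]

lemma ev_cov_X1 {f : A →ₗ[R] B} {g : B →ₗ[R] C} (h : IsShortExact R f g) {n : ℕ}
    (hC : EV (R := R) X C n) (hB : EV (R := R) X B (n + 1)) : EV (R := R) X A (n + 1) := by
  intro e
  obtain ⟨x, rfl⟩ := Ext.covariant_sequence_exact₁ _ h.se e (hB _) rfl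
  rw [hC x, Ext.zero_comp]

lemma ev_cov_X3 {f : A →ₗ[R] B} {g : B →ₗ[R] C} (h : IsShortExact R f g) {n : ℕ}
    (hB : EV (R := R) X B n) (hA : EV (R := R) X A (n + 1)) : EV (R := R) X C n := by
  intro e
  obtain ⟨x, rfl⟩ := Ext.covariant_sequence_exact₃ _ h.se e rfl (hA _)
  rw [hB x, Ext.zero_comp]

lemma ev_inj [Module.Injective R Y] (n : ℕ) : EV (R := R) X Y (n + 1) := by
  intro e
  have : Injective (ModuleCat.of R Y) := Module.injective_object_of_injective_module R Y
  exact Ext.eq_zero_of_injective e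

lemma ev_of_injdimLE (n : ℕ) (M : ModuleCat.{u} R) (h : InjdimLE R n M) (i : ℕ) (hi : n < i) :
    EV (R := R) X M i := by
  induction n generalizing M i with
  | zero =>
    obtain ⟨i, rfl⟩ := Nat.exists_eq_succ_of_ne_zero hi.ne'
    have : Module.Injective R M := h
    exact ev_inj i
  | succ n ih =>
    obtain ⟨I, C, f, g, hI, hfg, hC⟩ := h
    obtain ⟨i, rfl⟩ := Nat.exists_eq_succ_of_ne_zero (Nat.ne_zero_of_lt hi)
    exact ev_cov_X1 hfg (ih C hC i (by omega)) (ev_inj i)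

lemma ses_quot (f : A →ₗ[R] B) (hf : Function.Injective f) :
    IsShortExact R f (LinearMap.range f).mkQ :=
  ⟨hf, Submodule.mkQ_surjective _, f.exact_map_mkQ_range⟩

lemma ses_ker (f : A →ₗ[R] B) (hf : Function.Surjective f) :
    IsShortExact R (LinearMap.ker f).subtype f :=
  ⟨Subtype.val_injective, hf, f.exact_subtype_ker_map⟩

lemma injdimLE_one_of_ev (h : ∀ (N : Type u) [AddCommGroup N] [Module R N] [Module.Finite R N],
    EV (R := R) N R 2) : InjdimLE R 1 (ModuleCat.of R R) := by
  let ⟨I, hI, f, hf⟩ := EnoughInjectives.presentation (ModuleCat.of R R)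
  have injf : Function.Injective f.hom := (ModuleCat.mono_iff_injective f).mp ‹_›
  have hI' : Module.Injective R I := Module.injective_module_of_injective_object R I
  have hs := ses_quot f.hom injf
  refine ⟨I, ModuleCat.of R (I ⧸ LinearMap.range f.hom), f.hom, _, hI', hs, ?_⟩
  refine Module.Baer.injective ?_
  intro J g
  have h1 : EV (R := R) (R ⧸ LinearMap.range J.subtype) (I ⧸ LinearMap.range f.hom) 1 :=
    ev_cov_X3 hs (ev_inj 0) (h _)
  obtain ⟨ψ, hψ⟩ := ev_extend (ses_quot J.subtype Subtype.val_injective) h1 g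
  exact ⟨ψ, fun x hx => LinearMap.congr_fun hψ ⟨x, hx⟩⟩

lemma mul_inj_quot_prime (p : Ideal R) [p.IsPrime] {x : R} (hx : x ∉ p) :
    Function.Injective (x • LinearMap.id : (R ⧸ p) →ₗ[R] (R ⧸ p)) := by
  rw [injective_iff_map_eq_zero]
  intro a ha
  obtain ⟨a, rfl⟩ := Ideal.Quotient.mk_surjective a
  have : Ideal.Quotient.mk p (x * a) = 0 := ha
  rw [Ideal.Quotient.eq_zero_iff_mem] at this ⊢
  exact (Ideal.IsPrime.mem_or_mem ‹_› this).resolve_left hx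

lemma exists_mem_max_notMem [IsLocalRing R] (p : Ideal R) [p.IsPrime] (hp : p ≠ maximalIdeal R) :
    ∃ x ∈ maximalIdeal R, x ∉ p := by
  by_contra! h
  exact hp (le_antisymm (IsLocalRing.le_maximalIdeal (Ideal.IsPrime.ne_top ‹_›)) h)

lemma id_step [IsNoetherianRing R] [IsLocalRing R] (M : Type u) [AddCommGroup M] [Module R M]
    [Module.Finite R M] (s : ℕ)
    (hV : ∀ (N : Type u) [AddCommGroup N] [Module R N] [Module.Finite R N],
      EV (R := R) N M (s + 1))
    (Q : Type u) [AddCommGroup Q] [Module R Q] [Module.Finite R Q]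
    (f : (R ⧸ maximalIdeal R) →ₗ[R] Q) (hf : Function.Injective f) (hQ : EV (R := R) Q M s)
    (N : Type u) [AddCommGroup N] [Module R N] [hN : Module.Finite R N] : EV (R := R) N M s := by
  have hk : EV (R := R) (R ⧸ maximalIdeal R) M s := ev_X1 (ses_quot f hf) hQ (hV _)
  induction hN using IsNoetherianRing.induction_on_isQuotientEquivQuotientPrime R with
  | subsingleton N => exact ev_subsingleton s
  | quotient N p e =>
    refine ev_equiv e.symm ?_
    by_cases hp : p.1 = maximalIdeal R
    · rw [hp]; exact hk
    · have := p.2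
      obtain ⟨x, hx, hxp⟩ := exists_mem_max_notMem p.1 hp
      exact ev_nakayama hx (ses_quot _ (mul_inj_quot_prime p.1 hxp)) (hV _)
  | exact N₁ N₂ N₃ f g hf hg hfg h₁ h₃ => exact ev_X2 ⟨hf, hg, hfg⟩ h₁ h₃

lemma id_down [IsNoetherianRing R] [IsLocalRing R] (M : Type u) [AddCommGroup M] [Module R M]
    [Module.Finite R M] (hid : ∃ n : ℕ, InjdimLE R n (ModuleCat.of R M)) (t : ℕ)
    (Q : Type u) [AddCommGroup Q] [Module R Q] [Module.Finite R Q]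
    (f : (R ⧸ maximalIdeal R) →ₗ[R] Q) (hf : Function.Injective f)
    (hQ : ∀ i, t < i → EV (R := R) Q M i)
    (N : Type u) [AddCommGroup N] [Module R N] [Module.Finite R N] (i : ℕ) (hi : t < i) :
    EV (R := R) N M i := by
  obtain ⟨n, hn⟩ := hid
  have key : ∀ k : ℕ, ∀ i, t < i → n < i + k →
      ∀ (N : Type u) [AddCommGroup N] [Module R N] [Module.Finite R N], EV (R := R) N M i := by
    intro k
    induction k with
    | zero => intro i _ hi N _ _ _; exact ev_of_injdimLE n _ hn i (by omega)
    | succ k ih =>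
      intro i hti hi N _ _ _
      exact id_step M i (fun N _ _ _ => ih (i + 1) (by omega) (by omega) N) Q f hf (hQ i hti) N
  exact key (n + 1) i hi (by omega) N

/-- a f.g. nonzero `M` with `Ext^1(N, M) = 0` for all f.g. `N` forces `dim R = 0`. -/
lemma inj_contra [IsNoetherianRing R] [IsLocalRing R] (M : Type u) [AddCommGroup M] [Module R M]
    [Module.Finite R M] [Nontrivial M]
    (h : ∀ (N : Type u) [AddCommGroup N] [Module R N] [Module.Finite R N], EV (R := R) N M 1)
    (p : Ideal R) [p.IsPrime] : p = maximalIdeal R := by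
  have key : ∀ (p : Ideal R) [p.IsPrime], p ≠ maximalIdeal R → ∀ f : (R ⧸ p) →ₗ[R] M, f = 0 := by
    intro p _ hp f
    obtain ⟨x, hx, hxp⟩ := exists_mem_max_notMem p hp
    refine ext_nakayama (E := (R ⧸ p) →ₗ[R] M) hx ?_ f
    intro e
    obtain ⟨ψ, hψ⟩ := ev_extend (ses_quot _ (mul_inj_quot_prime p hxp)) (h _) e
    refine ⟨ψ, ?_⟩
    rw [← hψ]
    ext
    simp
  by_contra hp
  obtain ⟨q, hq⟩ := associatedPrimes.nonempty R M
  have hq' : q.IsPrime := hq.1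
  obtain ⟨f, hf⟩ := (isAssociatedPrime_iff_exists_injective_linearMap q M).1 hq |>.2
  have hf0 : f (Ideal.Quotient.mk q 1) ≠ 0 := by
    intro h0
    have := hf (h0.trans (map_zero f).symm)
    rw [Ideal.Quotient.eq_zero_iff_mem] at this
    exact hq'.ne_top ((Ideal.eq_top_iff_one _).2 this)
  by_cases hqm : q = maximalIdeal R
  · have hle : p ≤ q := hqm ▸ IsLocalRing.le_maximalIdeal (Ideal.IsPrime.ne_top ‹_›)
    have := key p hp (f ∘ₗ Submodule.mapQ p q LinearMap.id hle)
    exact hf0 (LinearMap.congr_fun this (Ideal.Quotient.mk p 1))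
  · exact hf0 (by rw [key q hqm f]; rfl)

end Inj
section Depth

variable {R}

open Abelian IsLocalRing

lemma id_dim_one [IsNoetherianRing R] [IsLocalRing R] (hd : ringKrullDim R = 1)
    (M : Type u) [AddCommGroup M] [Module R M] [Module.Finite R M] [Nontrivial M]
    (hid : ∃ n : ℕ, InjdimLE R n (ModuleCat.of R M)) :
    (∃ x s : R, x ∈ maximalIdeal R ∧ x ∈ nonZeroDivisors R ∧ s ∉ Ideal.span {x} ∧
      ∀ r ∈ maximalIdeal R, r * s ∈ Ideal.span {x}) ∧
    ∀ (N : Type u) [AddCommGroup N] [Module R N] [Module.Finite R N] (i : ℕ), 1 < i →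
      EV (R := R) N M i := by
  have hdle : Ring.KrullDimLE 1 R := Ring.krullDimLE_iff.2 hd.le
  have hm : maximalIdeal R ∉ associatedPrimes R R := by
    intro h
    obtain ⟨f, hf⟩ := ((isAssociatedPrime_iff_exists_injective_linearMap _ R).1 h).2
    have h1 := id_down M hid 0 R f hf (fun i hi => by
      obtain ⟨i, rfl⟩ := Nat.exists_eq_succ_of_ne_zero hi.ne'
      exact ev_proj i)
    have h0 : Ring.KrullDimLE 0 R := Ring.krullDimLE_zero_iff.2 (fun I hI => by
      rw [inj_contra M (fun N _ _ _ => h1 N 1 one_pos) I]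
      infer_instance)
    rw [Ring.krullDimLE_iff, hd] at h0
    exact absurd h0 (by decide)
  have hx : ∃ x ∈ maximalIdeal R, x ∈ nonZeroDivisors R := by
    by_contra! h
    have hdis : Disjoint (maximalIdeal R : Set R) (nonZeroDivisors R) :=
      Set.disjoint_left.2 h
    obtain ⟨P, hP, hle⟩ : ∃ P ∈ associatedPrimes R R, maximalIdeal R ≤ P :=
      ((maximalIdeal R).subset_union_prime_finite (associatedPrimes.finite ..) (f := id) 0 0
        fun _ h _ _ ↦ h.1).1 <|
      biUnion_associatedPrimes_eq_compl_nonZeroDivisors R ▸ hdis.subset_compl_right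
    have : maximalIdeal R = P :=
      le_antisymm hle (IsLocalRing.le_maximalIdeal hP.1.ne_top)
    exact hm (this ▸ hP)
  obtain ⟨x, hxm, hxr⟩ := hx
  have hnt : Nontrivial (R ⧸ Ideal.span {x}) := by
    refine Ideal.Quotient.nontrivial_iff.2 ?_
    intro h
    rw [Ideal.span_singleton_eq_top] at h
    exact (IsLocalRing.mem_maximalIdeal x).1 hxm h
  obtain ⟨q, hq⟩ := associatedPrimes.nonempty R (R ⧸ Ideal.span {x})
  have hqp : q.IsPrime := hq.1
  obtain ⟨f, hf⟩ := ((isAssociatedPrime_iff_exists_injective_linearMap _ _).1 hq).2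
  have hxq : x ∈ q := by
    rw [← Ideal.Quotient.eq_zero_iff_mem]
    apply hf
    have h1 : (Ideal.Quotient.mk q x) = x • (Ideal.Quotient.mk q 1) := by
      change _ = Ideal.Quotient.mk q (x * 1)
      rw [mul_one]
    rw [h1, map_smul, map_zero]
    obtain ⟨y, hy⟩ := Ideal.Quotient.mk_surjective (f (Ideal.Quotient.mk q 1))
    rw [← hy]
    change Ideal.Quotient.mk _ (x * y) = 0
    rw [Ideal.Quotient.eq_zero_iff_mem]
    exact Ideal.mul_mem_right _ _ (Ideal.mem_span_singleton_self x)
  have hqm : q = maximalIdeal R := by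
    rcases Ring.krullDimLE_one_iff.1 hdle q hqp with h | h
    · exact absurd hxr
        (Set.disjoint_left.1 (Ideal.disjoint_nonZeroDivisors_of_mem_minimalPrimes h) hxq)
    · exact IsLocalRing.eq_maximalIdeal h
  subst hqm
  constructor
  · obtain ⟨s, hs⟩ := Ideal.Quotient.mk_surjective (f (Ideal.Quotient.mk _ 1))
    refine ⟨x, s, hxm, hxr, ?_, ?_⟩
    · rw [← Ideal.Quotient.eq_zero_iff_mem, hs]
      intro h0
      have := hf (h0.trans (map_zero f).symm)
      rw [Ideal.Quotient.eq_zero_iff_mem] at this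
      exact hqp.ne_top ((Ideal.eq_top_iff_one _).2 this)
    · intro r hr
      rw [← Ideal.Quotient.eq_zero_iff_mem]
      change r • Ideal.Quotient.mk _ s = 0
      rw [hs, ← map_smul]
      have : r • (Ideal.Quotient.mk (maximalIdeal R) 1) = 0 := by
        change Ideal.Quotient.mk _ (r * 1) = 0
        rw [mul_one, Ideal.Quotient.eq_zero_iff_mem]
        exact hr
      rw [this, map_zero]
  · intro N _ _ _ i hi
    refine id_down M hid 1 (R ⧸ Ideal.span {x}) f hf ?_ N i hi
    intro i hi
    obtain ⟨i, rfl⟩ := Nat.exists_eq_add_of_le' hi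
    have hinj : Function.Injective (x • LinearMap.id : R →ₗ[R] R) := by
      rw [injective_iff_map_eq_zero]
      intro a ha
      have ha' : x * a = 0 := ha
      rw [mul_comm] at ha'
      exact (mul_right_mem_nonZeroDivisors_eq_zero_iff hxr).1 ha'
    have hrange : LinearMap.range (x • LinearMap.id : R →ₗ[R] R) = Ideal.span {x} := by
      ext a
      rw [Ideal.mem_span_singleton']
      simp [mul_comm]
    have := ev_X3 (ses_quot _ hinj) (ev_proj (Y := M) i) (ev_proj (i + 1))
    rw [hrange] at this
    exact this

end Depth
section Final

variable {R}

open Abelian IsLocalRing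

lemma min_cover [IsLocalRing R] (K : Type u) [AddCommGroup K] [Module R K] [Module.Finite R K] :
    ∃ (n : ℕ) (f : (Fin n → R) →ₗ[R] K), Function.Surjective f ∧
      ∀ v, f v = 0 → ∀ i, v i ∈ maximalIdeal R := by
  classical
  have hex : ∃ (n : ℕ), ∃ (f : (Fin n → R) →ₗ[R] K), Function.Surjective f :=
    Module.Finite.exists_fin' R K
  obtain ⟨f, hf⟩ := Nat.find_spec hex
  refine ⟨Nat.find hex, f, hf, ?_⟩
  have hmin : ∀ m < Nat.find hex, ¬ ∃ (f : (Fin m → R) →ₗ[R] K), Function.Surjective f :=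
    fun m hm => Nat.find_min hex hm
  generalize Nat.find hex = n at f hf hmin
  intro v hv i
  by_contra hvi
  rw [IsLocalRing.mem_maximalIdeal, mem_nonunits_iff, not_not] at hvi
  obtain ⟨c, hc⟩ := hvi.exists_left_inv
  cases n with
  | zero => exact i.elim0
  | succ k =>
    refine hmin k (Nat.lt_succ_self k)
      ⟨f ∘ₗ Function.ExtendByZero.linearMap R i.succAbove, ?_⟩
    intro y
    obtain ⟨w, rfl⟩ := hf y
    refine ⟨fun j => (w - (w i * c) • v) (i.succAbove j), ?_⟩
    have : Function.ExtendByZero.linearMap R i.succAbove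
        (fun j => (w - (w i * c) • v) (i.succAbove j)) = w - (w i * c) • v := by
      ext j
      rw [Function.ExtendByZero.linearMap_apply]
      rcases Fin.eq_self_or_eq_succAbove i j with rfl | ⟨j, rfl⟩
      · rw [Function.extend_apply']
        · simp [mul_assoc, hc]
        · rintro ⟨a, ha⟩
          exact Fin.succAbove_ne _ _ ha
      · rw [(Fin.succAbove_right_injective).extend_apply]
    rw [LinearMap.comp_apply, this, map_sub, map_smul, hv, smul_zero, sub_zero]

lemma kernel_pd {A B : Type u} [AddCommGroup A] [Module R A] [AddCommGroup B] [Module R B]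
    [Module.Projective R A] (f : A →ₗ[R] B) (hf : Function.Surjective f) (n : ℕ)
    (h : HasProjectiveDimensionLT (ModuleCat.of R B) (n + 2)) :
    HasProjectiveDimensionLT (ModuleCat.of R (LinearMap.ker f)) (n + 1) :=
  ((ses_ker f hf).se.hasProjectiveDimensionLT_X₃_iff n
    ((IsProjective.iff_projective A).1 inferInstance)).1 h

lemma proj_of_torsfree [IsNoetherianRing R] [IsLocalRing R] {x s : R}
    (hs : s ∉ Ideal.span {x}) (hms : ∀ r ∈ maximalIdeal R, r * s ∈ Ideal.span {x})
    (hxr : ∀ a : R, x * a = 0 → a = 0) (n : ℕ) :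
    ∀ (K : Type u) [AddCommGroup K] [Module R K] [Module.Finite R K]
    (_ : ∀ k : K, x • k = 0 → k = 0) (_ : HasProjectiveDimensionLT (ModuleCat.of R K) (n + 1)),
    Module.Projective R K := by
  induction n with
  | zero =>
    intro K _ _ _ _ h
    exact (IsProjective.iff_projective K).2 (projective_iff_hasProjectiveDimensionLT_one.2 h)
  | succ n ih =>
    intro K _ _ _ hK h
    obtain ⟨m, f, hf, hmin⟩ := min_cover (R := R) K
    have hp : Module.Projective R (LinearMap.ker f) := by
      refine ih _ ?_ (kernel_pd f hf n h)
      intro k hk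
      ext i
      exact hxr _ (congrFun (congrArg Subtype.val hk) i)
    have hfree : Module.Free R (LinearMap.ker f) := Module.free_of_flat_of_isLocalRing
    let b := Module.Free.chooseBasis R (LinearMap.ker f)
    have hempty : IsEmpty (Module.Free.ChooseBasisIndex R (LinearMap.ker f)) := by
      refine ⟨fun k => hs ?_⟩
      have h1 : ∀ i, ∃ g, x * g = s * (b k).1 i := by
        intro i
        have := hms _ (hmin (b k).1 (b k).2 i)
        rw [Ideal.mem_span_singleton'] at this
        obtain ⟨a, ha⟩ := this
        exact ⟨a, by rw [mul_comm, ha, mul_comm]⟩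
      choose g hg using h1
      have hg' : x • g = s • (b k).1 := funext hg
      have hg0 : f g = 0 := by
        apply hK
        rw [← map_smul, hg', map_smul, (b k).2, smul_zero]
      have h2 : x • (⟨g, hg0⟩ : LinearMap.ker f) = s • b k := Subtype.ext hg'
      have h3 := congrArg (fun z => b.repr z k) h2
      simp only [map_smul, Finsupp.smul_apply, Module.Basis.repr_self, Finsupp.single_eq_same,
        smul_eq_mul, mul_one] at h3
      rw [Ideal.mem_span_singleton, ← h3]
      exact dvd_mul_right _ _
    have hsub : Subsingleton (LinearMap.ker f) := b.repr.toEquiv.subsingleton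
    have hker : LinearMap.ker f = ⊥ := (Submodule.subsingleton_iff_eq_bot).1 hsub
    exact Module.Projective.of_equiv (LinearEquiv.ofBijective f ⟨LinearMap.ker_eq_bot.1 hker, hf⟩)

lemma ext_final [IsNoetherianRing R] [IsLocalRing R] {x s : R}
    (hs : s ∉ Ideal.span {x}) (hms : ∀ r ∈ maximalIdeal R, r * s ∈ Ideal.span {x})
    (hxr : ∀ a : R, x * a = 0 → a = 0)
    (M : Type u) [AddCommGroup M] [Module R M] [Module.Finite R M] [Nontrivial M]
    (n : ℕ) (hpd : HasProjectiveDimensionLT (ModuleCat.of R M) (n + 2))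
    (N : Type u) [AddCommGroup N] [Module R N] [Module.Finite R N]
    (hN : EV (R := R) N M 2) : EV (R := R) N R 2 := by
  classical
  obtain ⟨m, f, hf, hmin⟩ := min_cover (R := R) M
  have hp : Module.Projective R (LinearMap.ker f) := by
    refine proj_of_torsfree hs hms hxr n _ ?_ (kernel_pd f hf n hpd)
    intro k hk
    ext i
    exact hxr _ (congrFun (congrArg Subtype.val hk) i)
  have hfree : Module.Free R (LinearMap.ker f) := Module.free_of_flat_of_isLocalRing
  let b := Module.Free.chooseBasis R (LinearMap.ker f)
  let j := (LinearMap.ker f).subtype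
  have hj : j ∈ (maximalIdeal R) • (⊤ : Submodule R (LinearMap.ker f →ₗ[R] (Fin m → R))) := by
    have : j = ∑ k, ∑ i, (j (b k) i) • ((LinearMap.single R (fun _ : Fin m => R) i) ∘ₗ b.coord k) := by
      refine b.ext fun k => ?_
      ext i
      simp only [LinearMap.sum_apply, LinearMap.smul_apply, LinearMap.comp_apply,
        Module.Basis.coord_apply, Module.Basis.repr_self, LinearMap.single_apply,
        Finset.sum_apply, Pi.smul_apply, smul_eq_mul]
      rw [Finset.sum_eq_single k, Finset.sum_eq_single i]
      · simp
      · intro i' _ hi'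
        simp [Pi.single_apply, hi'.symm]
      · simp
      · intro k' _ hk'
        simp [Finsupp.single_apply, hk'.symm]
      · simp
    rw [this]
    refine Submodule.sum_mem _ fun k _ => Submodule.sum_mem _ fun i _ => ?_
    exact Submodule.smul_mem_smul (hmin _ (b k).2 i) trivial
  have hsm : ∀ e : Abelian.Ext (ModuleCat.of R N) (ModuleCat.of R (LinearMap.ker f)) 2,
      e.comp (Ext.mk₀ (ModuleCat.ofHom j)) (add_zero 2) ∈
        maximalIdeal R • (⊤ : Submodule R
          (Abelian.Ext (ModuleCat.of R N) (ModuleCat.of R (Fin m → R)) 2)) := by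
    intro e
    refine Submodule.smul_induction_on hj ?_ ?_
    · intro r hr φ _
      have : ModuleCat.ofHom (r • φ) = r • ModuleCat.ofHom φ := rfl
      rw [this, Ext.mk₀_smul, Ext.comp_smul]
      exact Submodule.smul_mem_smul hr trivial
    · intro a c ha hc
      have : ModuleCat.ofHom (a + c) = ModuleCat.ofHom a + ModuleCat.ofHom c := rfl
      rw [this, Ext.mk₀_add, Ext.comp_add]
      exact Submodule.add_mem _ ha hc
  have hfin : Module.Finite R (Abelian.Ext (ModuleCat.of R N) (ModuleCat.of R (Fin m → R)) 2) := by
    have : Module.Finite R (ModuleCat.of R N) := ‹_›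
    have : Module.Finite R (ModuleCat.of R (Fin m → R)) := inferInstanceAs (Module.Finite R (Fin m → R))
    infer_instance
  have hle : (⊤ : Submodule R (Abelian.Ext (ModuleCat.of R N) (ModuleCat.of R (Fin m → R)) 2)) ≤
      maximalIdeal R • ⊤ := by
    intro e _
    obtain ⟨e', rfl⟩ := Ext.covariant_sequence_exact₂ _ (ses_ker f hf).se e (hN _)
    exact hsm e'
  have hbot := Submodule.eq_bot_of_le_smul_of_le_jacobson_bot (maximalIdeal R) ⊤
    Module.Finite.fg_top hle (IsLocalRing.maximalIdeal_le_jacobson _)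
  have hm : Nonempty (Fin m) := by
    by_contra hm
    rw [not_nonempty_iff] at hm
    have : Subsingleton M := hf.subsingleton
    exact not_subsingleton M this
  obtain ⟨i⟩ := hm
  intro e
  have hcomp : ModuleCat.ofHom (LinearMap.single R (fun _ : Fin m => R) i) ≫
      ModuleCat.ofHom (LinearMap.proj i) = 𝟙 (ModuleCat.of R R) := by
    ext
    simp
  have h0 : e.comp (Ext.mk₀ (ModuleCat.ofHom (LinearMap.single R (fun _ : Fin m => R) i)))
      (add_zero 2) = 0 := by
    have : e.comp (Ext.mk₀ (ModuleCat.ofHom (LinearMap.single R (fun _ : Fin m => R) i)))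
      (add_zero 2) ∈ (⊤ : Submodule R
        (Abelian.Ext (ModuleCat.of R N) (ModuleCat.of R (Fin m → R)) 2)) := trivial
    rw [hbot] at this
    exact this
  rw [← e.comp_mk₀_id, ← hcomp, ← Ext.mk₀_comp_mk₀, ← Ext.comp_assoc_of_third_deg_zero, h0,
    Ext.zero_comp]

end Final
section Retract

variable {R}

open Abelian IsLocalRing

/-- `W` embeds in a finite free module. -/
def Emb (W : Type u) [AddCommGroup W] [Module R W] : Prop :=
  ∃ (F : ModuleCat.{u} R) (f : W →ₗ[R] F), Module.Free R F ∧ Module.Finite R F ∧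
    Function.Injective f

lemma Emb.ev {M W : Type u} [AddCommGroup M] [Module R M] [AddCommGroup W] [Module R W]
    (hM : ∀ (N : Type u) [AddCommGroup N] [Module R N] [Module.Finite R N], EV (R := R) N M 2)
    (hW : Emb (R := R) W) : EV (R := R) W M 1 := by
  obtain ⟨F, f, hF, hF', hf⟩ := hW
  exact ev_X1 (ses_quot f hf) (ev_proj 0) (hM _)

lemma Emb.pi {W : Type u} [AddCommGroup W] [Module R W] (hW : Emb (R := R) W) (b : ℕ) :
    Emb (R := R) (Fin b → W) := by
  obtain ⟨F, f, hF, hF', hf⟩ := hW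
  refine ⟨ModuleCat.of R (Fin b → F), f.compLeft (Fin b), inferInstanceAs (Module.Free R (Fin b → F)),
    inferInstanceAs (Module.Finite R (Fin b → F)), ?_⟩
  intro x y h
  funext i
  exact hf (congrFun h i)

lemma emb_of_syzygy (n : ℕ) : ∀ (W K : ModuleCat.{u} R), IsSyzygy R (n + 1) W K →
    Emb (R := R) W := by
  induction n with
  | zero =>
    rintro W K ⟨W', F, f, g, hF, hF', h, ⟨e⟩⟩
    exact ⟨F, f ∘ₗ e.toLinearMap, hF, hF', h.1.comp e.injective⟩
  | succ n ih =>
    rintro W K ⟨W', F, f, g, hF, hF', h, hs⟩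
    exact ih W W' hs

/-- `M` is a retract of `L`. -/
def Retr (M L : Type u) [AddCommGroup M] [Module R M] [AddCommGroup L] [Module R L] : Prop :=
  ∃ (ι : M →ₗ[R] L) (π : L →ₗ[R] M), π ∘ₗ ι = LinearMap.id

lemma Retr.extend {M A B C : Type u} [AddCommGroup M] [Module R M] [AddCommGroup A] [Module R A]
    [AddCommGroup B] [Module R B] [AddCommGroup C] [Module R C]
    (h : Retr (R := R) M A) {f : A →ₗ[R] B} {g : B →ₗ[R] C} (hs : IsShortExact R f g)
    (hC : EV (R := R) C M 1) : Retr (R := R) M B := by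
  obtain ⟨ι, π, h⟩ := h
  obtain ⟨ψ, hψ⟩ := ev_extend hs hC π
  refine ⟨f ∘ₗ ι, ψ, ?_⟩
  rw [← LinearMap.comp_assoc, hψ, h]

lemma Retr.pi {M A : Type u} [AddCommGroup M] [Module R M] [AddCommGroup A] [Module R A]
    (h : Retr (R := R) M A) (a : ℕ) (ha : 1 ≤ a) : Retr (R := R) M (Fin a → A) := by
  obtain ⟨ι, π, h⟩ := h
  let i : Fin a := ⟨0, ha⟩
  refine ⟨LinearMap.single R (fun _ => A) i ∘ₗ ι, π ∘ₗ LinearMap.proj i, ?_⟩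
  ext m
  have := LinearMap.congr_fun h m
  simpa using this

lemma retr_of_seq {M : Type u} [AddCommGroup M] [Module R M]
    (hM : ∀ (N : Type u) [AddCommGroup N] [Module R N] [Module.Finite R N], EV (R := R) N M 2)
    {P : ModuleCat.{u} R → Prop} {r : ℕ} (h : HasReducingSeq R P (ModuleCat.of R M) r) :
    ∃ L : ModuleCat.{u} R, P L ∧ Retr (R := R) M L := by
  obtain ⟨K, a, b, n, h0, -, hstep, hP⟩ := h
  refine ⟨_, hP, ?_⟩
  suffices ∀ i, Retr (R := R) M (K i) from this _
  intro i
  induction i using Fin.induction with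
  | zero =>
    rw [h0]
    exact ⟨LinearMap.id, LinearMap.id, rfl⟩
  | succ i ih =>
    obtain ⟨ha, -, hn, W, f, g, hW, hs⟩ := hstep i
    obtain ⟨k, hk⟩ := Nat.exists_eq_add_of_le' hn
    rw [hk] at hW
    exact (ih.pi _ ha).extend hs ((emb_of_syzygy k _ _ hW).pi _ |>.ev hM)

lemma Retr.pd {M L : Type u} [AddCommGroup M] [Module R M] [AddCommGroup L] [Module R L]
    (h : Retr (R := R) M L) (n : ℕ) (hL : HasProjectiveDimensionLT (ModuleCat.of R L) n) :
    HasProjectiveDimensionLT (ModuleCat.of R M) n := by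
  obtain ⟨ι, π, h⟩ := h
  have r : CategoryTheory.Retract (ModuleCat.of R M) (ModuleCat.of R L) :=
    { i := ModuleCat.ofHom ι
      r := ModuleCat.ofHom π
      retract := by
        ext m
        exact LinearMap.congr_fun h m }
  exact r.hasProjectiveDimensionLT n

end Retract

section Approx

variable {R}

open Abelian IsLocalRing

lemma lift_surj {F A Q : Type u} [AddCommGroup F] [Module R F] [AddCommGroup A] [Module R A]
    [AddCommGroup Q] [Module R Q] (g : F →ₗ[R] A) (hg : Function.Surjective g) (h : F →ₗ[R] Q)
    (hk : ∀ x, g x = 0 → h x = 0) : ∃ h' : A →ₗ[R] Q, ∀ x, h' (g x) = h x := by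
  let e := g.quotKerEquivOfSurjective hg
  refine ⟨(LinearMap.ker g).liftQ h (fun x hx => hk x hx) ∘ₗ e.symm.toLinearMap, fun x => ?_⟩
  have : e.symm (g x) = Submodule.Quotient.mk x := by
    rw [LinearEquiv.symm_apply_eq]; rfl
  rw [LinearMap.comp_apply, LinearEquiv.coe_coe, this]
  rfl

/-- Iterated coresolution by free modules. -/
def GG : ℕ → ModuleCat.{u} R → Prop
  | 0, _ => True
  | n + 1, X => EV (R := R) X R 1 ∧ ∃ (X₁ F : ModuleCat.{u} R) (f : X →ₗ[R] F) (g : F →ₗ[R] X₁),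
      Module.Free R F ∧ Module.Finite R F ∧ IsShortExact R f g ∧ GG n X₁

lemma GG.equiv {X X' : Type u} [AddCommGroup X] [Module R X] [AddCommGroup X'] [Module R X']
    (e : X ≃ₗ[R] X') : ∀ (n : ℕ), GG n (ModuleCat.of R X) → GG n (ModuleCat.of R X')
  | 0, _ => trivial
  | n + 1, ⟨h1, X₁, F, f, g, hF, hF', hs, h⟩ => by
    refine ⟨ev_equiv e h1, X₁, F, f ∘ₗ e.symm.toLinearMap, g, hF, hF',
      ⟨hs.1.comp e.symm.injective, hs.2.1, fun x => ?_⟩, h⟩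
    rw [hs.2.2 x]
    constructor
    · rintro ⟨y, rfl⟩; exact ⟨e y, by simp⟩
    · rintro ⟨y, rfl⟩; exact ⟨e.symm y, rfl⟩

lemma extend_free {A B C F : Type u} [AddCommGroup A] [Module R A]
    [AddCommGroup B] [Module R B] [AddCommGroup C] [Module R C] [AddCommGroup F] [Module R F]
    [Module.Free R F] {f : A →ₗ[R] B} {g : B →ₗ[R] C} [Module.Finite R F]
    (hs : IsShortExact R f g) (hC : EV (R := R) C R 1) (φ : A →ₗ[R] F) :
    ∃ ψ : B →ₗ[R] F, ∀ a, ψ (f a) = φ a := by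
  classical
  let bs := Module.Free.chooseBasis R F
  choose ψ hψ using fun i => ev_extend hs hC (bs.coord i ∘ₗ φ)
  refine ⟨bs.equivFun.symm.toLinearMap ∘ₗ LinearMap.pi ψ, fun a => ?_⟩
  simp only [LinearMap.comp_apply, LinearEquiv.coe_coe]
  rw [LinearEquiv.symm_apply_eq]
  funext i
  exact LinearMap.congr_fun (hψ i) a

lemma GG.ext (n : ℕ) : ∀ {A B C : Type u} [AddCommGroup A] [Module R A]
    [AddCommGroup B] [Module R B] [AddCommGroup C] [Module R C] {f : A →ₗ[R] B} {g : B →ₗ[R] C},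
    IsShortExact R f g → GG n (ModuleCat.of R A) → GG n (ModuleCat.of R C) →
    GG n (ModuleCat.of R B) := by
  induction n with
  | zero => intros; trivial
  | succ n ih =>
    rintro A B C _ _ _ _ _ _ f g hs ⟨hA, A₁, FA, iA, gA, _, _, hsA, hA1⟩
      ⟨hC, C₁, FC, iC, gC, _, _, hsC, hC1⟩
    obtain ⟨ψ, hψ⟩ := extend_free hs hC iA
    let j : B →ₗ[R] FA × FC := ψ.prod (iC ∘ₗ g)
    have hgf : ∀ a, g (f a) = 0 := fun a => (hs.2.2 _).2 ⟨a, rfl⟩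
    have hgA : ∀ a, gA (iA a) = 0 := fun a => (hsA.2.2 _).2 ⟨a, rfl⟩
    have hgC : ∀ a, gC (iC a) = 0 := fun a => (hsC.2.2 _).2 ⟨a, rfl⟩
    have key : ∀ b u, ψ b = u → iC (g b) = 0 → ∃ a, b = f a ∧ u = iA a := by
      intro b u h1 h2
      have h3 : g b = 0 := hsC.1 (h2.trans (map_zero iC).symm)
      obtain ⟨a, rfl⟩ := (hs.2.2 b).1 h3
      exact ⟨a, rfl, by rw [← h1, hψ]⟩
    have hj : Function.Injective j := by
      rw [injective_iff_map_eq_zero]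
      intro b hb
      obtain ⟨a, rfl, h⟩ := key b 0 (congrArg Prod.fst hb) (congrArg Prod.snd hb)
      have : a = 0 := hsA.1 (h.symm.trans (map_zero iA).symm)
      rw [this, map_zero]
    have hsq := ses_quot j hj
    set q := (LinearMap.range j).mkQ with hq
    have hqj : ∀ b, q (j b) = 0 := fun a => (hsq.2.2 _).2 ⟨a, rfl⟩
    obtain ⟨α, hα⟩ := lift_surj gA hsA.2.1 (q ∘ₗ LinearMap.inl R FA FC) (by
      intro x hx
      obtain ⟨a, rfl⟩ := (hsA.2.2 x).1 hx
      have : (iA a, (0 : FC)) = j (f a) := by simp [j, hψ, hgf]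
      simp only [LinearMap.comp_apply, LinearMap.inl_apply]
      rw [this, hqj])
    obtain ⟨β, hβ⟩ := lift_surj q hsq.2.1 (gC ∘ₗ LinearMap.snd R FA FC) (by
      intro x hx
      obtain ⟨b, rfl⟩ := (hsq.2.2 x).1 hx
      exact hgC _)
    have hs1 : IsShortExact R α β := by
      refine ⟨?_, ?_, ?_⟩
      · rw [injective_iff_map_eq_zero]
        intro y hy
        obtain ⟨u, rfl⟩ := hsA.2.1 y
        rw [hα] at hy
        obtain ⟨b, hb⟩ := (hsq.2.2 _).1 hy
        obtain ⟨a, rfl, h⟩ := key b u (congrArg Prod.fst hb) (congrArg Prod.snd hb)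
        rw [h, hgA]
      · intro c
        obtain ⟨v, rfl⟩ := hsC.2.1 c
        exact ⟨q (0, v), hβ _⟩
      · intro y
        constructor
        · intro hy
          obtain ⟨⟨u, v⟩, rfl⟩ := hsq.2.1 y
          rw [hβ] at hy
          obtain ⟨c, rfl⟩ := (hsC.2.2 v).1 hy
          obtain ⟨b, rfl⟩ := hs.2.1 c
          refine ⟨gA (u - ψ b), ?_⟩
          rw [hα]
          have : (u, iC (g b)) = LinearMap.inl R FA FC (u - ψ b) + j b := by
            simp [j]
          rw [this, map_add, hqj, add_zero]; rfl
        · rintro ⟨y, rfl⟩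
          obtain ⟨u, rfl⟩ := hsA.2.1 y
          rw [hα]
          simp [hβ]
    refine ⟨ev_X2 hs hA hC, ModuleCat.of R _, ModuleCat.of R (FA × FC), j, q,
      inferInstanceAs (Module.Free R (FA × FC)), inferInstanceAs (Module.Finite R (FA × FC)), hsq, ?_⟩
    exact ih hs1 hA1 hC1

lemma GG_dual [IsNoetherianRing R] (n : ℕ) : ∀ (Y : Type u) [AddCommGroup Y] [Module R Y]
    [Module.Finite R Y], Function.Bijective (Module.Dual.eval R Y) →
    (∀ i, EV (R := R) Y R (i + 1)) → (∀ i, EV (R := R) (Module.Dual R Y) R (i + 1)) →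
    GG n (ModuleCat.of R (Module.Dual R Y)) := by
  induction n with
  | zero => intros; trivial
  | succ n ih =>
    intro Y _ _ _ hb h1 h2
    obtain ⟨m, p, hp⟩ := Module.Finite.exists_fin' R Y
    have hs := ses_ker p hp
    let i := (LinearMap.ker p).subtype
    have hsd : IsShortExact R p.dualMap i.dualMap := by
      refine ⟨LinearMap.dualMap_injective_of_surjective hp, ?_, ?_⟩
      · intro φ
        obtain ⟨ψ, hψ⟩ := ev_extend hs (h1 0) φ
        exact ⟨ψ, hψ⟩
      · intro φ
        constructor
        · intro h
          obtain ⟨ψ, hψ⟩ := lift_surj p hp φ (fun x hx => LinearMap.congr_fun h ⟨x, hx⟩)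
          exact ⟨ψ, LinearMap.ext hψ⟩
        · rintro ⟨ψ, rfl⟩
          ext x
          have : p x.1 = 0 := x.2
          simp [i, this]
    have hfb := Module.bijective_dual_eval R (Fin m → R)
    refine ⟨h2 0, ModuleCat.of R (Module.Dual R (LinearMap.ker p)),
      ModuleCat.of R (Module.Dual R (Fin m → R)), p.dualMap, i.dualMap,
      inferInstanceAs (Module.Free R (Module.Dual R (Fin m → R))),
      inferInstanceAs (Module.Finite R (Module.Dual R (Fin m → R))), hsd, ?_⟩
    refine ih (LinearMap.ker p) ⟨?_, ?_⟩ ?_ ?_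
    · rw [injective_iff_map_eq_zero]
      intro k hk
      apply Subtype.ext
      apply hfb.1
      ext φ : 1
      have := LinearMap.congr_fun hk (i.dualMap φ)
      exact this.trans (map_zero φ).symm
    · intro θ
      obtain ⟨x, hx⟩ := hfb.2 (θ ∘ₗ i.dualMap)
      have hpx : p x = 0 := by
        apply hb.1
        ext φ
        have h3 := LinearMap.congr_fun hx (p.dualMap φ)
        have h4 : i.dualMap (p.dualMap φ) = 0 := (hsd.2.2 _).2 ⟨φ, rfl⟩
        simp only [LinearMap.comp_apply, h4, map_zero] at h3
        simpa using h3
      refine ⟨⟨x, hpx⟩, ?_⟩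
      ext κ
      obtain ⟨φ, rfl⟩ := hsd.2.1 κ
      exact LinearMap.congr_fun hx φ
    · intro j
      exact ev_X1 hs (ev_proj j) (h1 (j + 1))
    · intro j
      cases j with
      | zero =>
        refine ev_one_of_extend hsd (ev_proj 0) (fun φ => ?_)
        obtain ⟨y, rfl⟩ := hb.2 φ
        obtain ⟨x, rfl⟩ := hp y
        exact ⟨Module.Dual.eval R _ x, rfl⟩
      | succ j => exact ev_X3 hsd (h2 j) (ev_proj (j + 1))

lemma GG_of_totRefl [IsNoetherianRing R] (n : ℕ) (X : Type u) [AddCommGroup X] [Module R X]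
    (h : IsTotallyReflexive R X) : GG n (ModuleCat.of R X) := by
  obtain ⟨hf, hb, h1, h2⟩ := h
  have : Module.IsReflexive R X := ⟨hb⟩
  have hfd : Module.Finite R (Module.Dual R X) := by
    obtain ⟨m, p, hp⟩ := Module.Finite.exists_fin' R X
    exact Module.Finite.of_injective p.dualMap (LinearMap.dualMap_injective_of_surjective hp)
  refine GG.equiv (Module.evalEquiv R X).symm n (GG_dual n (Module.Dual R X)
    (Module.bijective_dual_eval R _) (fun i => ev_of_extVanish (h2 _ (by omega))) (fun i => ?_))
  exact ev_equiv (Module.evalEquiv R X) (ev_of_extVanish (h1 _ (by omega)))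

lemma push_ses {K H X L P : Type u} [AddCommGroup K] [Module R K] [AddCommGroup H] [Module R H]
    [AddCommGroup X] [Module R X] [AddCommGroup L] [Module R L] [AddCommGroup P] [Module R P]
    {i : K →ₗ[R] H} {f : K →ₗ[R] X} {g : X →ₗ[R] L} (hs : IsShortExact R f g)
    (jH : H →ₗ[R] P) (jX : X →ₗ[R] P) (hsur : ∀ p, ∃ h x, jH h + jX x = p)
    (hk : ∀ h x, jH h + jX x = 0 ↔ ∃ k, h = i k ∧ x = - f k) :
    ∃ g' : P →ₗ[R] L, IsShortExact R jH g' := by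
  have hgf : ∀ a, g (f a) = 0 := fun a => (hs.2.2 _).2 ⟨a, rfl⟩
  obtain ⟨g', hg'⟩ := lift_surj (jH.coprod jX) (by
      intro p
      obtain ⟨h, x, e⟩ := hsur p
      exact ⟨(h, x), e⟩) (g ∘ₗ LinearMap.snd R H X) (by
      rintro ⟨h, x⟩ hx
      obtain ⟨k, rfl, rfl⟩ := (hk h x).1 hx
      simp [hgf])
  have hg2 : ∀ h x, g' (jH h + jX x) = g x := fun h x => hg' (h, x)
  refine ⟨g', ?_, ?_, ?_⟩
  · rw [injective_iff_map_eq_zero]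
    intro h hh
    obtain ⟨k, rfl, hk⟩ := (hk h 0).1 (by simp [hh])
    have : k = 0 := hs.1 (by rw [map_zero]; exact neg_eq_zero.1 hk.symm)
    simp [this]
  · intro l
    obtain ⟨x, rfl⟩ := hs.2.1 l
    exact ⟨_, hg2 0 x⟩
  · intro p
    constructor
    · intro hp
      obtain ⟨h, x, rfl⟩ := hsur p
      rw [hg2] at hp
      obtain ⟨k, rfl⟩ := (hs.2.2 x).1 hp
      refine ⟨h + i k, ?_⟩
      have := (hk (i k) (-(f k))).2 ⟨k, rfl, rfl⟩
      rw [map_neg, add_neg_eq_zero] at this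
      rw [map_add, this]
    · rintro ⟨h, rfl⟩
      simpa using hg2 h 0

lemma pushout {K H X L Y : Type u} [AddCommGroup K] [Module R K] [AddCommGroup H] [Module R H]
    [AddCommGroup X] [Module R X] [AddCommGroup L] [Module R L] [AddCommGroup Y] [Module R Y]
    {f : K →ₗ[R] X} {g : X →ₗ[R] L} (hs : IsShortExact R f g)
    {i : K →ₗ[R] H} {p : H →ₗ[R] Y} (hs' : IsShortExact R i p) :
    ∃ (P : ModuleCat.{u} R) (jH : H →ₗ[R] P) (jX : X →ₗ[R] P) (g' : P →ₗ[R] L) (p' : P →ₗ[R] Y),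
      IsShortExact R jH g' ∧ IsShortExact R jX p' := by
  let r : K →ₗ[R] H × X := i.prod (-f)
  let q := (LinearMap.range r).mkQ
  let jH := q ∘ₗ LinearMap.inl R H X
  let jX := q ∘ₗ LinearMap.inr R H X
  have hj : ∀ h x, jH h + jX x = q (h, x) := by
    intro h x
    simp only [jH, jX, LinearMap.comp_apply, ← map_add]
    simp
  have hsur : ∀ p, ∃ h x, jH h + jX x = p := by
    intro p
    obtain ⟨⟨h, x⟩, rfl⟩ := Submodule.mkQ_surjective _ p
    exact ⟨h, x, hj h x⟩
  have hk : ∀ h x, jH h + jX x = 0 ↔ ∃ k, h = i k ∧ x = - f k := by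
    intro h x
    rw [hj]
    have : q (h, x) = 0 ↔ (h, x) ∈ LinearMap.range r := Submodule.Quotient.mk_eq_zero _
    rw [this]
    constructor
    · rintro ⟨k, hk⟩
      exact ⟨k, (congrArg Prod.fst hk).symm, (congrArg Prod.snd hk).symm⟩
    · rintro ⟨k, rfl, rfl⟩
      exact ⟨k, rfl⟩
  obtain ⟨g', hg'⟩ := push_ses hs jH jX hsur hk
  obtain ⟨p', hp'⟩ := push_ses (i := f) hs' jX jH (by
    intro p
    obtain ⟨h, x, e⟩ := hsur p
    exact ⟨x, h, by rw [add_comm, e]⟩) (by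
    intro x h
    rw [add_comm, hk]
    constructor
    · rintro ⟨k, rfl, rfl⟩
      exact ⟨-k, by simp⟩
    · rintro ⟨k, rfl, rfl⟩
      exact ⟨-k, by simp⟩)
  exact ⟨ModuleCat.of R _, jH, jX, g', p', hg', hp'⟩

lemma third_iso {H P L F Z : Type u} [AddCommGroup H] [Module R H] [AddCommGroup P] [Module R P]
    [AddCommGroup L] [Module R L] [AddCommGroup F] [Module R F] [AddCommGroup Z] [Module R Z]
    {j : H →ₗ[R] P} {g : P →ₗ[R] L} (hs : IsShortExact R j g)
    {e : P →ₗ[R] F} {d : F →ₗ[R] Z} (hs' : IsShortExact R e d) :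
    ∃ (H' : ModuleCat.{u} R) (q : F →ₗ[R] H') (l : L →ₗ[R] H') (z : H' →ₗ[R] Z),
      IsShortExact R (e ∘ₗ j) q ∧ IsShortExact R l z := by
  have hq := ses_quot (e ∘ₗ j) (hs'.1.comp hs.1)
  set q := (LinearMap.range (e ∘ₗ j)).mkQ
  have hqz : ∀ h, q (e (j h)) = 0 := fun h => (hq.2.2 _).2 ⟨h, rfl⟩
  have hdz : ∀ h, d (e h) = 0 := fun h => (hs'.2.2 _).2 ⟨h, rfl⟩
  have hgz : ∀ h, g (j h) = 0 := fun h => (hs.2.2 _).2 ⟨h, rfl⟩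
  obtain ⟨l, hl⟩ := lift_surj g hs.2.1 (q ∘ₗ e) (by
    intro x hx
    obtain ⟨h, rfl⟩ := (hs.2.2 x).1 hx
    exact hqz h)
  obtain ⟨z, hz⟩ := lift_surj q hq.2.1 d (by
    intro x hx
    obtain ⟨h, rfl⟩ := (hq.2.2 x).1 hx
    exact hdz _)
  refine ⟨ModuleCat.of R _, q, l, z, hq, ?_, ?_, ?_⟩
  · rw [injective_iff_map_eq_zero]
    intro y hy
    obtain ⟨x, rfl⟩ := hs.2.1 y
    rw [hl] at hy
    obtain ⟨h, hh⟩ := (hq.2.2 _).1 hy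
    have : j h = x := hs'.1 hh
    rw [← this, hgz]
  · intro y
    obtain ⟨x, rfl⟩ := hs'.2.1 y
    exact ⟨q x, hz x⟩
  · intro y
    constructor
    · intro hy
      obtain ⟨x, rfl⟩ := hq.2.1 y
      rw [hz] at hy
      obtain ⟨w, rfl⟩ := (hs'.2.2 x).1 hy
      exact ⟨g w, hl w⟩
    · rintro ⟨w, rfl⟩
      obtain ⟨x, rfl⟩ := hs.2.1 w
      rw [hl]
      exact (hz _).trans (hdz _)

lemma approx [IsNoetherianRing R] (m : ℕ) : ∀ (L : ModuleCat.{u} R) (_ : GdimLE R m L) (n : ℕ),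
    ∃ (H X : ModuleCat.{u} R) (f : L →ₗ[R] H) (g : H →ₗ[R] X), IsShortExact R f g ∧
      HasProjectiveDimensionLT (ModuleCat.of R H) (m + 1) ∧ GG n X := by
  induction m with
  | zero =>
    intro L hL n
    obtain ⟨-, X, F, f, g, hF, hF', hs, h⟩ := GG_of_totRefl (n + 1) L hL
    refine ⟨F, X, f, g, hs, ?_, h⟩
    have : Projective (ModuleCat.of R F) := (IsProjective.iff_projective F).1 (have := hF; Module.Projective.of_free (R := R) (P := F))
    rw [← projective_iff_hasProjectiveDimensionLT_one]
    exact this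
  | succ m ih =>
    rintro L ⟨X, K, f, g, hX, hs, hK⟩ n
    obtain ⟨H, Y, i, p, hs', hpd, hY⟩ := ih K hK (n + 1)
    obtain ⟨P, jH, jX, g', p', h1, h2⟩ := pushout hs hs'
    obtain ⟨-, Z, F, e, d, hF, hF', h3, hZ⟩ := GG.ext (n + 1) h2 (GG_of_totRefl (n + 1) X hX) hY
    obtain ⟨H', q, l, z, h4, h5⟩ := third_iso h1 h3
    refine ⟨H', Z, l, z, h5, ?_, hZ⟩
    exact (h4.se.hasProjectiveDimensionLT_X₃_iff m
      ((IsProjective.iff_projective F).1 (have := hF; Module.Projective.of_free (R := R) (P := F)))).2 hpd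

end Approx

theorem stmt5 (R : Type u) [CommRing R] [IsNoetherianRing R] [IsLocalRing R]
    (hd : ringKrullDim R = 1)
    (M : Type u) [AddCommGroup M] [Module R M] [Module.Finite R M] [Nontrivial M]
    (hinj : ∃ n : ℕ, InjdimLE R n (ModuleCat.of R M))
    (hr : rGdim R (ModuleCat.of R M) ≠ ⊤) :
    IsGorensteinRing R := by
  obtain ⟨⟨x, s, hx, hxr, hs, hms⟩, hM⟩ := id_dim_one hd M hinj
  have hM2 : ∀ (N : Type u) [AddCommGroup N] [Module R N] [Module.Finite R N],
      EV (R := R) N M 2 := fun N _ _ _ => hM N 2 (by omega)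
  have hex : ∃ r, HasReducingSeq R (fun N => ∃ m : ℕ, GdimLE R m N) (ModuleCat.of R M) r := by
    by_contra hne
    apply hr
    have : {n : ℕ∞ | ∃ r : ℕ, n = (r : ℕ∞) ∧
        HasReducingSeq R (fun N => ∃ m : ℕ, GdimLE R m N) (ModuleCat.of R M) r} = ∅ := by
      ext n
      simp only [Set.mem_setOf_eq, Set.mem_empty_iff_false, iff_false]
      rintro ⟨r, -, h⟩
      exact hne ⟨r, h⟩
    unfold rGdim ReducingDim
    rw [this, sInf_empty]
  obtain ⟨r, hseq⟩ := hex
  obtain ⟨L, ⟨m, hL⟩, hret⟩ := retr_of_seq hM2 hseq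
  obtain ⟨H, X, f, g, hsH, hpd, -, X₁, F, i, p, hF, hF', hsX, -⟩ := approx m L hL 1
  have hemb : Emb (R := R) X := ⟨F, i, hF, hF', hsX.1⟩
  have hMH := hret.extend hsH (hemb.ev hM2)
  have hpdM := hMH.pd _ hpd
  have hpdM2 : HasProjectiveDimensionLT (ModuleCat.of R M) (m + 2) :=
    hasProjectiveDimensionLT_of_ge _ (m + 1) (m + 2) (by omega)
  refine ⟨1, injdimLE_one_of_ev (fun N _ _ _ => ?_)⟩
  refine ext_final hs hms (fun a ha => ?_) M m hpdM2 N (hM2 N)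
  exact (mul_left_mem_nonZeroDivisors_eq_zero_iff hxr).1 ha
end
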